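/- arXiv:0811.0946 — 7 statements merged into one kernel-verified Lean document; each statement's English description precedes it below -/
import Mathlib

section
/- Let ω > 0 and q > p > 1 be real numbers, and let f(u) = -ω·u + u^p - u^q, F(u) = -ω·u²/2 + u^{p+1}/(p+1) - u^{q+1}/(q+1). Then there exists u > 0 with F(u) > 0 if and only if F̃(u) := (f(u) + u·f'(u))·F(u) - u·f(u)² < 0 for all u > 0. -/
/-- The double power nonlinearity `f(u) = -ω·u + u^p - u^q` (real powers). -/
noncomputable def f (ω p q u : ℝ) : ℝ := -ω * u + u ^ p - u ^ q

/-- Its derivative for `u > 0`: `f'(u) = -ω + p·u^(p-1) - q·u^(q-1)`. -/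
noncomputable def f' (ω p q u : ℝ) : ℝ := -ω + p * u ^ (p - 1) - q * u ^ (q - 1)

/-- The primitive `F(u) = ∫₀ᵘ f = -ω·u²/2 + u^(p+1)/(p+1) - u^(q+1)/(q+1)`. -/
noncomputable def F (ω p q u : ℝ) : ℝ :=
  -ω * u ^ 2 / 2 + u ^ (p + 1) / (p + 1) - u ^ (q + 1) / (q + 1)

lemma bern_aux (a b r : ℝ) (ha : 0 < a) (hab : a < b) (hr : 0 < r) :
    a - b ≤ a * r ^ b - b * r ^ a := by
  have hA : 0 < r ^ a := Real.rpow_pos_of_pos hr a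
  have h1 : 1 ≤ b / a := by rw [le_div_iff₀ ha]; linarith
  have h := one_add_mul_self_le_rpow_one_add (s := r ^ a - 1) (by linarith) h1
  have e : (1 + (r ^ a - 1)) ^ (b / a) = r ^ b := by
    rw [add_sub_cancel, ← Real.rpow_mul hr.le]
    congr 1
    field_simp
  rw [e] at h
  have h2 := mul_le_mul_of_nonneg_left h ha.le
  have e2 : a * (1 + b / a * (r ^ a - 1)) = a + b * (r ^ a - 1) := by field_simp
  rw [e2] at h2
  linarith

lemma F_fac (ω p q u : ℝ) (hu : 0 < u) :
    F ω p q u = u ^ 2 * (-ω / 2 + u ^ (p - 1) / (p + 1) - u ^ (q - 1) / (q + 1)) := by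
  have h : ∀ s : ℝ, u ^ (s + 1) = u ^ 2 * u ^ (s - 1) := by
    intro s
    rw [← Real.rpow_natCast u 2, ← Real.rpow_add hu]
    congr 1
    push_cast
    ring
  unfold F
  rw [h p, h q]
  ring

lemma Ft_fac (ω p q u : ℝ) (hp : 0 < p + 1) (hq : 0 < q + 1) (hu : 0 < u) :
    (f ω p q u + u * f' ω p q u) * F ω p q u - u * (f ω p q u) ^ 2
      = u ^ 3 / (2 * (p + 1) * (q + 1)) *
        (-(p - 1) ^ 2 * ω * (q + 1) * u ^ (p - 1) + (q - 1) ^ 2 * ω * (p + 1) * u ^ (q - 1)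
          - 2 * (q - p) ^ 2 * u ^ (p - 1) * u ^ (q - 1)) := by
  have h : ∀ s : ℝ, u ^ s = u * u ^ (s - 1) := by
    intro s
    nth_rewrite 2 [← Real.rpow_one u]
    rw [← Real.rpow_add hu]
    congr 1
    ring
  rw [F_fac ω p q u hu]
  unfold f f'
  rw [h p, h q]
  generalize u ^ (p - 1) = x
  generalize u ^ (q - 1) = y
  field_simp
  ring

theorem F_pos_iff_Ftilde_neg (ω p q : ℝ) (hω : 0 < ω) (hp : 1 < p) (hpq : p < q) :
    (∃ u : ℝ, 0 < u ∧ 0 < F ω p q u) ↔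
      ∀ u : ℝ, 0 < u →
        (f ω p q u + u * f' ω p q u) * F ω p q u - u * (f ω p q u) ^ 2 < 0 := by
  have hP : 0 < p + 1 := by linarith
  have hQ : 0 < q + 1 := by linarith
  have ha : 0 < p - 1 := by linarith
  have hb : 0 < q - 1 := by linarith
  have hd : 0 < q - p := by linarith
  obtain ⟨c, hc, hcY⟩ : ∃ c : ℝ, 0 < c ∧
      (q - 1) * (p + 1) * c ^ (q - 1) = (p - 1) * (q + 1) * c ^ (p - 1) := by
    have hk : 0 < (p - 1) * (q + 1) / ((q - 1) * (p + 1)) := by positivity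
    refine ⟨((p - 1) * (q + 1) / ((q - 1) * (p + 1))) ^ (1 / (q - p)),
      Real.rpow_pos_of_pos hk _, ?_⟩
    set k := (p - 1) * (q + 1) / ((q - 1) * (p + 1)) with hkd
    have e1 : (k ^ (1 / (q - p))) ^ (q - 1) = k * (k ^ (1 / (q - p))) ^ (p - 1) := by
      nth_rewrite 2 [← Real.rpow_one k]
      rw [← Real.rpow_mul hk.le, ← Real.rpow_mul hk.le, ← Real.rpow_add hk]
      congr 1
      field_simp
      ring
    rw [e1, hkd]
    field_simp
  have hX : 0 < c ^ (p - 1) := Real.rpow_pos_of_pos hc _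
  have hY : 0 < c ^ (q - 1) := Real.rpow_pos_of_pos hc _
  constructor
  · rintro ⟨u, hu, hF⟩ v hv
    -- the condition at the critical point
    have hC : ω * (q - 1) * (p + 1) < 2 * (q - p) * c ^ (p - 1) := by
      rw [F_fac ω p q u hu] at hF
      have hF2 := pos_of_mul_pos_right hF (by positivity)
      have hr : 0 < u / c := by positivity
      have B := bern_aux (p - 1) (q - 1) (u / c) ha (by linarith) hr
      have eu : u = c * (u / c) := by field_simp
      rw [eu, Real.mul_rpow hc.le hr.le, Real.mul_rpow hc.le hr.le] at hF2
      generalize (u / c) ^ (p - 1) = A at *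
      generalize (u / c) ^ (q - 1) = D at *
      generalize c ^ (p - 1) = X at *
      have eY : c ^ (q - 1) = (p - 1) * (q + 1) * X / ((q - 1) * (p + 1)) := by
        rw [eq_div_iff (by positivity)]; linarith
      rw [eY] at hF2
      have h3 : 0 < 2 * (p + 1) * (q - 1) * (-ω / 2 + X * A / (p + 1) -
          (p - 1) * (q + 1) * X / ((q - 1) * (p + 1)) * D / (q + 1)) := by positivity
      have e3 : 2 * (p + 1) * (q - 1) * (-ω / 2 + X * A / (p + 1) -
          (p - 1) * (q + 1) * X / ((q - 1) * (p + 1)) * D / (q + 1))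
          = -ω * (q - 1) * (p + 1) + 2 * X * ((q - 1) * A - (p - 1) * D) := by
        field_simp
        ring
      rw [e3] at h3
      nlinarith [mul_le_mul_of_nonneg_left B hX.le]
    rw [Ft_fac ω p q v hP hQ hv]
    apply mul_neg_of_pos_of_neg (by positivity)
    have hr : 0 < v / c := by positivity
    have B := bern_aux (p - 1) (q - 1) (v / c)⁻¹ ha (by linarith) (by positivity)
    rw [Real.inv_rpow hr.le, Real.inv_rpow hr.le] at B
    have ev : v = c * (v / c) := by field_simp
    rw [ev, Real.mul_rpow hc.le hr.le, Real.mul_rpow hc.le hr.le]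
    have hA : 0 < (v / c) ^ (p - 1) := Real.rpow_pos_of_pos hr _
    have hD : 0 < (v / c) ^ (q - 1) := Real.rpow_pos_of_pos hr _
    generalize (v / c) ^ (p - 1) = A at *
    generalize (v / c) ^ (q - 1) = D at *
    generalize c ^ (p - 1) = X at *
    generalize c ^ (q - 1) = Y at *
    have B2 : (q - 1) * D - (p - 1) * A ≤ (q - p) * (A * D) := by
      have := mul_le_mul_of_nonneg_right B (mul_pos hA hD).le
      have e : ((p - 1) * D⁻¹ - (q - 1) * A⁻¹) * (A * D) = (p - 1) * A - (q - 1) * D := by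
        field_simp
      rw [e] at this
      linarith
    have hC2 : (p - 1) * ω * (q + 1) < 2 * (q - p) * Y := by
      have : X * ((p - 1) * ω * (q + 1)) < X * (2 * (q - p) * Y) := by
        calc X * ((p - 1) * ω * (q + 1)) = ω * ((p - 1) * (q + 1) * X) := by ring
          _ = Y * (ω * (q - 1) * (p + 1)) := by rw [← hcY]; ring
          _ < Y * (2 * (q - p) * X) := mul_lt_mul_of_pos_left hC hY
          _ = _ := by ring
      exact lt_of_mul_lt_mul_left this hX.le
    calc _ = (p - 1) * ω * (q + 1) * X * ((q - 1) * D - (p - 1) * A)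
            - 2 * (q - p) ^ 2 * (X * A) * (Y * D) := by
          linear_combination (q - 1) * ω * D * hcY
      _ ≤ (p - 1) * ω * (q + 1) * X * ((q - p) * (A * D))
            - 2 * (q - p) ^ 2 * (X * A) * (Y * D) := by
          gcongr
      _ = (q - p) * X * A * D * ((p - 1) * ω * (q + 1) - 2 * (q - p) * Y) := by ring
      _ < 0 := mul_neg_of_pos_of_neg (by positivity) (by linarith)
  · intro h
    refine ⟨c, hc, ?_⟩
    have h1 := h c hc
    rw [Ft_fac ω p q c hP hQ hc] at h1
    have h2 := neg_of_mul_neg_right h1 (by positivity)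
    rw [F_fac ω p q c hc]
    apply mul_pos (by positivity)
    generalize c ^ (p - 1) = X at *
    have eY : c ^ (q - 1) = (p - 1) * (q + 1) * X / ((q - 1) * (p + 1)) := by
      rw [eq_div_iff (by positivity)]; linarith
    rw [eY] at h2 ⊢
    have e1 : -(p - 1) ^ 2 * ω * (q + 1) * X
        + (q - 1) ^ 2 * ω * (p + 1) * ((p - 1) * (q + 1) * X / ((q - 1) * (p + 1)))
        - 2 * (q - p) ^ 2 * X * ((p - 1) * (q + 1) * X / ((q - 1) * (p + 1)))
        = ((p - 1) * (q + 1) * X * (q - p) * 2 / ((q - 1) * (p + 1))) *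
          (ω / 2 * (q - 1) * (p + 1) - (q - p) * X) := by
      field_simp
      ring
    rw [e1] at h2
    have h3 := neg_of_mul_neg_right h2 (by positivity)
    have e2 : -ω / 2 + X / (p + 1) - (p - 1) * (q + 1) * X / ((q - 1) * (p + 1)) / (q + 1)
        = ((q - p) * X - ω / 2 * (q - 1) * (p + 1)) / ((q - 1) * (p + 1)) := by
      field_simp
      ring
    rw [e2]
    apply div_pos (by linarith) (by positivity)
end

section
/- Let ω > 0 and q > p > 1 be real numbers, and let F(u) = -ω·u²/2 + u^{p+1}/(p+1) - u^{q+1}/(q+1). Then there exists u > 0 with F(u) > 0 if and only if ω < ω_{p,q}, where ω_{p,q} = (2(q-p)/((p+1)(q-1)))·((p-1)(q+1)/((p+1)(q-1)))^{(p-1)/(q-p)}. -/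
/-- The critical constant `ω_{p,q}`. -/
noncomputable def omegaPQ (p q : ℝ) : ℝ :=
  2 * (q - p) / ((p + 1) * (q - 1)) *
    ((p - 1) * (q + 1) / ((p + 1) * (q - 1))) ^ ((p - 1) / (q - p))


lemma F_factor (ω p q u : ℝ) (hu : 0 < u) :
    F ω p q u = u ^ 2 / 2 *
      (2 * u ^ (p - 1) / (p + 1) - 2 * u ^ (q - 1) / (q + 1) - ω) := by
  have h1 : u ^ (p + 1) = u ^ 2 * u ^ (p - 1) := by
    rw [← Real.rpow_natCast u 2, ← Real.rpow_add hu]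
    congr 1; push_cast; ring
  have h2 : u ^ (q + 1) = u ^ 2 * u ^ (q - 1) := by
    rw [← Real.rpow_natCast u 2, ← Real.rpow_add hu]
    congr 1; push_cast; ring
  unfold F
  rw [h1, h2]; ring

theorem F_pos_iff_omega_lt (ω p q : ℝ) (hω : 0 < ω) (hp : 1 < p) (hpq : p < q) :
    (∃ u : ℝ, 0 < u ∧ 0 < F ω p q u) ↔ ω < omegaPQ p q := by
  have hp1 : 0 < p - 1 := by linarith
  have hq1 : 0 < q - 1 := by linarith
  have hp2 : 0 < p + 1 := by linarith
  have hq2 : 0 < q + 1 := by linarith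
  have hd : 0 < q - p := by linarith
  unfold omegaPQ
  obtain ⟨A, hAdef⟩ : ∃ A, A = (p - 1) * (q + 1) / ((p + 1) * (q - 1)) := ⟨_, rfl⟩
  rw [← hAdef]
  have hA : 0 < A := by rw [hAdef]; positivity
  constructor
  · rintro ⟨u, hu, hF⟩
    rw [F_factor ω p q u hu] at hF
    have hG := (mul_pos_iff_of_pos_left (by positivity : 0 < u ^ 2 / 2)).1 hF
    obtain ⟨X, hXdef⟩ : ∃ X, X = A ^ ((p - 1) / (q - p)) := ⟨_, rfl⟩
    rw [← hXdef]
    have hX : 0 < X := by rw [hXdef]; positivity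
    obtain ⟨x, hxdef⟩ : ∃ x, x = u ^ (p - 1) := ⟨_, rfl⟩
    have hx : 0 < x := by rw [hxdef]; positivity
    have hxr : u ^ (q - 1) = x ^ ((q - 1) / (p - 1)) := by
      rw [hxdef, ← Real.rpow_mul hu.le]; congr 1; field_simp
    have hXr : X ^ ((q - 1) / (p - 1)) = X * A := by
      rw [hXdef, ← Real.rpow_mul hA.le, ← Real.rpow_add_one hA.ne']
      congr 1; field_simp; ring
    have hB := one_add_mul_self_le_rpow_one_add (s := x / X - 1)
      (by have := div_pos hx hX; linarith)
      (p := (q - 1) / (p - 1)) (by rw [le_div_iff₀ hp1]; linarith)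
    rw [add_sub_cancel, Real.div_rpow hx.le hX.le, hXr, ← hxr,
      le_div_iff₀ (by positivity)] at hB
    rw [← hxdef] at hG
    have e : 2 * x / (p + 1) - 2 * ((1 + (q - 1) / (p - 1) * (x / X - 1)) * (X * A)) / (q + 1)
        = 2 * (q - p) / ((p + 1) * (q - 1)) * X := by
      rw [hAdef]; field_simp; ring
    have : 2 * ((1 + (q - 1) / (p - 1) * (x / X - 1)) * (X * A)) / (q + 1)
        ≤ 2 * u ^ (q - 1) / (q + 1) := by gcongr
    linarith
  · intro h
    have hu : 0 < A ^ (1 / (q - p)) := by positivity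
    refine ⟨A ^ (1 / (q - p)), hu, ?_⟩
    rw [F_factor _ _ _ _ hu]
    refine mul_pos (by positivity) ?_
    have h1 : (A ^ (1 / (q - p))) ^ (p - 1) = A ^ ((p - 1) / (q - p)) := by
      rw [← Real.rpow_mul hA.le]; congr 1; field_simp
    have h2 : (A ^ (1 / (q - p))) ^ (q - 1) = A ^ ((p - 1) / (q - p)) * A := by
      rw [← Real.rpow_mul hA.le, ← Real.rpow_add_one hA.ne']
      congr 1; field_simp; ring
    rw [h1, h2]
    generalize A ^ ((p - 1) / (q - p)) = X at *
    have e : 2 * X / (p + 1) - 2 * (X * A) / (q + 1)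
        = 2 * (q - p) / ((p + 1) * (q - 1)) * X := by
      rw [hAdef]; field_simp; ring
    linarith
end

section
/- Let ω > 0 and q > p > 1 be real numbers, and let f(u) = -ω·u + u^p - u^q, F(u) = -ω·u²/2 + u^{p+1}/(p+1) - u^{q+1}/(q+1). Then F̃(u) := (f(u) + u·f'(u))·F(u) - u·f(u)² < 0 for all u > 0 if and only if ω < ω_{p,q}, where ω_{p,q} = (2(q-p)/((p+1)(q-1)))·((p-1)(q+1)/((p+1)(q-1)))^{(p-1)/(q-p)}. -/
lemma young_aux (a b v : ℝ) (ha : 0 < a) (hab : a < b) (hv : 0 < v) :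
    b * v ^ b - a * v ^ a ≤ (b - a) * (v ^ a * v ^ b) := by
  have hb : 0 < b := ha.trans hab
  have hx : 0 < v ^ a := Real.rpow_pos_of_pos hv a
  have hy : 0 < v ^ b := Real.rpow_pos_of_pos hv b
  have h1 : 0 < (v ^ b)⁻¹ := inv_pos.mpr hy
  have h := rpow_one_add_le_one_add_mul_self (s := (v ^ b)⁻¹ - 1) (p := a / b)
    (by linarith) (by positivity) ((div_le_one hb).mpr hab.le)
  have e : (1 + ((v ^ b)⁻¹ - 1)) ^ (a / b) = (v ^ a)⁻¹ := by
    rw [add_sub_cancel, Real.inv_rpow hy.le, ← Real.rpow_mul hv.le, mul_div_cancel₀ _ hb.ne']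
  rw [e] at h
  have h2 := mul_le_mul_of_nonneg_left h (by positivity : 0 ≤ b * (v ^ a * v ^ b))
  have e1 : b * (v ^ a * v ^ b) * (v ^ a)⁻¹ = b * v ^ b := by field_simp
  have e2 : b * (v ^ a * v ^ b) * (1 + a / b * ((v ^ b)⁻¹ - 1))
      = (b - a) * (v ^ a * v ^ b) + a * v ^ a := by field_simp; ring
  rw [e1, e2] at h2
  linarith

lemma key_identity (ω p q v : ℝ) (hp : 1 < p) (hpq : p < q) (hv : 0 < v) (r u₀ : ℝ)
    (hr : r = (p - 1) * (q + 1) / ((p + 1) * (q - 1))) (hu₀ : u₀ = r ^ (1 / (q - p))) :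
    0 < u₀ ∧
    (f ω p q (v * u₀) + (v * u₀) * f' ω p q (v * u₀)) * F ω p q (v * u₀)
        - (v * u₀) * (f ω p q (v * u₀)) ^ 2
      = ((v * u₀) ^ 3 * u₀ ^ (p - 1) * ((p - 1) / (2 * (p + 1)))) *
        (ω * ((q - 1) * v ^ (q - 1) - (p - 1) * v ^ (p - 1))
          - (q - p) * omegaPQ p q * (v ^ (p - 1) * v ^ (q - 1))) := by
  have h1 : 0 < p - 1 := by linarith
  have h2 : 0 < q - 1 := by linarith
  have h3 : 0 < q - p := by linarith
  have h4 : 0 < p + 1 := by linarith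
  have h5 : 0 < q + 1 := by linarith
  have hrp : 0 < r := by rw [hr]; positivity
  have hu : 0 < u₀ := by rw [hu₀]; positivity
  refine ⟨hu, ?_⟩
  have hD : omegaPQ p q = 2 * (q - p) / ((p + 1) * (q - 1)) * u₀ ^ (p - 1) := by
    rw [omegaPQ, ← hr, hu₀, ← Real.rpow_mul hrp.le]
    congr 2; ring
  have hY : u₀ ^ (q - 1) = r * u₀ ^ (p - 1) := by
    have : u₀ ^ (q - p) = r := by
      rw [hu₀, ← Real.rpow_mul hrp.le, one_div, inv_mul_cancel₀ h3.ne', Real.rpow_one]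
    rw [show r * u₀ ^ (p - 1) = u₀ ^ (q - p) * u₀ ^ (p - 1) by rw [this], ← Real.rpow_add hu]; congr 1; ring
  have hw : 0 < v * u₀ := by positivity
  have pw : ∀ s : ℝ, (v * u₀) ^ s = (v * u₀) * (v * u₀) ^ (s - 1) := by
    intro s
    nth_rewrite 2 [← Real.rpow_one (v * u₀)]
    rw [← Real.rpow_add hw]; congr 1; ring
  have pw2 : ∀ s : ℝ, (v * u₀) ^ (s + 1) = (v * u₀) ^ 2 * (v * u₀) ^ (s - 1) := by
    intro s
    rw [pw (s + 1), add_sub_cancel_right, pw s]; ring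
  rw [f, f', F, pw2 p, pw2 q, pw p, pw q, Real.mul_rpow hv.le hu.le, Real.mul_rpow hv.le hu.le,
    hY, hD, hr]
  generalize v ^ (p - 1) = x
  generalize v ^ (q - 1) = y
  generalize u₀ ^ (p - 1) = X
  field_simp
  ring

theorem Ftilde_neg_iff_omega_lt (ω p q : ℝ) (hω : 0 < ω) (hp : 1 < p) (hpq : p < q) :
    (∀ u : ℝ, 0 < u →
        (f ω p q u + u * f' ω p q u) * F ω p q u - u * (f ω p q u) ^ 2 < 0) ↔
      ω < omegaPQ p q := by
  have h1 : 0 < p - 1 := by linarith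
  have h3 : 0 < q - p := by linarith
  have h4 : 0 < p + 1 := by linarith
  have key := fun v hv => key_identity ω p q v hp hpq hv _ _ rfl rfl
  generalize ((p - 1) * (q + 1) / ((p + 1) * (q - 1))) ^ (1 / (q - p)) = u₀ at key
  have hu : 0 < u₀ := (key 1 one_pos).1
  constructor
  · intro h
    have h0 := h (1 * u₀) (by positivity)
    rw [(key 1 one_pos).2] at h0
    have hc : 0 < (1 * u₀) ^ 3 * u₀ ^ (p - 1) * ((p - 1) / (2 * (p + 1))) := by positivity
    have h6 := neg_of_mul_neg_right h0 hc.le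
    simp only [Real.one_rpow] at h6
    nlinarith
  · intro h u hu'
    have hv : 0 < u / u₀ := by positivity
    have e := (key (u / u₀) hv).2
    rw [div_mul_cancel₀ _ hu.ne'] at e
    rw [e]
    apply mul_neg_of_pos_of_neg (by positivity)
    have hy := young_aux (p - 1) (q - 1) (u / u₀) h1 (by linarith) hv
    have hxy : 0 < (u / u₀) ^ (p - 1) * (u / u₀) ^ (q - 1) := by positivity
    have h7 := mul_le_mul_of_nonneg_left hy hω.le
    have h8 := mul_lt_mul_of_pos_right h (mul_pos h3 hxy)
    have e3 : q - 1 - (p - 1) = q - p := by ring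
    rw [e3] at h7
    linarith
end

section
/- Let ω > 0 and q > p > 1 be real numbers, and let f(u) = -ω·u + u^p - u^q. Then f̃(u) := (f'(u) + u·f''(u))·f(u) - u·f'(u)² < 0 for all u > 0 if and only if ω < η_{p,q}, where η_{p,q} = ((q-p)/(q-1))·((p-1)/(q-1))^{(p-1)/(q-p)}. -/
/-- Its second derivative for `u > 0`:
`f''(u) = p(p-1)·u^(p-2) - q(q-1)·u^(q-2)`. -/
noncomputable def f'' (p q u : ℝ) : ℝ :=
  p * (p - 1) * u ^ (p - 2) - q * (q - 1) * u ^ (q - 2)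

/-- The critical constant `η_{p,q}`. -/
noncomputable def etaPQ (p q : ℝ) : ℝ :=
  (q - p) / (q - 1) * ((p - 1) / (q - 1)) ^ ((p - 1) / (q - p))

theorem ftilde_aux (ω p q u : ℝ) (hpq : p < q) (hu : 0 < u) :
    (f' ω p q u + u * f'' p q u) * f ω p q u - u * (f' ω p q u) ^ 2 =
      u ^ p * (ω * ((q - 1) ^ 2 * u ^ (q - p) - (p - 1) ^ 2)
        - (q - p) ^ 2 * (u ^ (q - p)) ^ ((q - 1) / (q - p))) := by
  have h0 : (u ^ (q - p)) ^ ((q - 1) / (q - p)) = u ^ (p - 1) * u ^ (q - p) := by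
    rw [← Real.rpow_mul hu.le, ← Real.rpow_add hu]
    congr 1
    have : q - p ≠ 0 := by linarith
    field_simp
    ring
  have h1 : u ^ (q - 1) = u ^ (p - 1) * u ^ (q - p) := by
    rw [← Real.rpow_add hu]; congr 1; ring
  have h2 : u ^ q = u ^ (p - 1) * u ^ (q - p) * u := by
    rw [← h1, ← Real.rpow_add_one hu.ne']; congr 1; ring
  have h3 : u ^ p = u ^ (p - 1) * u := by
    rw [← Real.rpow_add_one hu.ne']; congr 1; ring
  have h4 : u ^ (p - 2) = u ^ (p - 1) / u := by
    rw [← Real.rpow_sub_one hu.ne']; congr 1; ring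
  have h5 : u ^ (q - 2) = u ^ (p - 1) * u ^ (q - p) / u := by
    rw [← h1, ← Real.rpow_sub_one hu.ne']; congr 1; ring
  rw [h0]
  unfold f f' f''
  rw [h1, h2, h3, h4, h5]
  generalize u ^ (p - 1) = U
  generalize u ^ (q - p) = t
  have := hu.ne'
  field_simp
  ring

theorem eta_aux (p q : ℝ) (hp : 1 < p) (hpq : p < q) :
    (q - p) ^ 2 * ((p - 1) / (q - 1)) ^ ((q - 1) / (q - p)) =
      etaPQ p q * ((p - 1) * (q - p)) := by
  have h1 : 0 < p - 1 := by linarith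
  have h2 : 0 < q - 1 := by linarith
  have h3 : 0 < q - p := by linarith
  have ht : 0 < (p - 1) / (q - 1) := by positivity
  have e : (q - 1) / (q - p) = (p - 1) / (q - p) + 1 := by field_simp; ring
  rw [e, Real.rpow_add_one ht.ne']
  unfold etaPQ
  generalize ((p - 1) / (q - 1)) ^ ((p - 1) / (q - p)) = X
  field_simp

theorem ftilde_neg_iff_omega_lt_eta (ω p q : ℝ) (hω : 0 < ω) (hp : 1 < p)
    (hpq : p < q) :
    (∀ u : ℝ, 0 < u →
        (f' ω p q u + u * f'' p q u) * f ω p q u - u * (f' ω p q u) ^ 2 < 0) ↔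
      ω < etaPQ p q := by
  have h1 : 0 < p - 1 := by linarith
  have h2 : 0 < q - 1 := by linarith
  have h3 : 0 < q - p := by linarith
  have ht : 0 < (p - 1) / (q - 1) := by positivity
  have he := eta_aux p q hp hpq
  constructor
  · intro h
    have hu : 0 < ((p - 1) / (q - 1)) ^ (1 / (q - p)) := Real.rpow_pos_of_pos ht _
    have := h _ hu
    rw [ftilde_aux ω p q _ hpq hu] at this
    have hu' : (((p - 1) / (q - 1)) ^ (1 / (q - p))) ^ (q - p) = (p - 1) / (q - 1) := by
      rw [← Real.rpow_mul ht.le, one_div, inv_mul_cancel₀ h3.ne', Real.rpow_one]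
    rw [hu', he] at this
    have h4 := (pos_iff_neg_of_mul_neg this).1 (Real.rpow_pos_of_pos hu p)
    have e : (q - 1) ^ 2 * ((p - 1) / (q - 1)) - (p - 1) ^ 2 = (p - 1) * (q - p) := by
      field_simp; ring
    rw [e, ← sub_mul] at h4
    have h5 := (neg_iff_pos_of_mul_neg h4).2 (by positivity)
    linarith
  · intro h u hu
    rw [ftilde_aux ω p q u hpq hu]
    apply mul_neg_of_pos_of_neg (Real.rpow_pos_of_pos hu p)
    have htp : 0 < u ^ (q - p) := Real.rpow_pos_of_pos hu _
    generalize u ^ (q - p) = t at htp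
    have hC : 0 < (q - p) ^ 2 * t ^ ((q - 1) / (q - p)) := by
      have := Real.rpow_pos_of_pos htp ((q - 1) / (q - p))
      positivity
    rcases le_or_gt ((q - 1) ^ 2 * t - (p - 1) ^ 2) 0 with hn | hn
    · nlinarith [mul_nonneg hω.le (neg_nonneg.2 hn)]
    · have hr : 1 ≤ (q - 1) / (q - p) := by rw [le_div_iff₀ h3]; linarith
      have hs : 0 < t / ((p - 1) / (q - 1)) := by positivity
      have hb := one_add_mul_self_le_rpow_one_add
        (s := t / ((p - 1) / (q - 1)) - 1) (by linarith) hr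
      rw [add_sub_cancel, Real.div_rpow htp.le ht.le,
        le_div_iff₀ (Real.rpow_pos_of_pos ht _)] at hb
      have hb2 := mul_le_mul_of_nonneg_left hb (sq_nonneg (q - p))
      have e : (q - p) ^ 2 * ((1 + (q - 1) / (q - p) * (t / ((p - 1) / (q - 1)) - 1)) *
          ((p - 1) / (q - 1)) ^ ((q - 1) / (q - p))) =
          etaPQ p q * ((q - 1) ^ 2 * t - (p - 1) ^ 2) := by
        rw [mul_left_comm, he]
        field_simp
        ring
      rw [e] at hb2
      have := mul_lt_mul_of_pos_right h hn
      linarith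
end

section
/- Let ω > 0 and q > p > 1 be real numbers, and let f(u) = -ω·u + u^p - u^q, F(u) = -ω·u²/2 + u^{p+1}/(p+1) - u^{q+1}/(q+1). If there exists u > 0 with F(u) > 0, then f̃(u) := (f'(u) + u·f''(u))·f(u) - u·f'(u)² < 0 for all u > 0. -/
lemma young_aux_s8 (x s t : ℝ) (hx : 0 < x) (hs : 0 < s) (hst : s < t) :
    t * x ^ s ≤ (t - s) + s * x ^ t := by
  have ht : 0 < t := hs.trans hst
  have h := rpow_one_add_le_one_add_mul_self (s := x ^ t - 1) (p := s / t)
    (by have := Real.rpow_pos_of_pos hx t; linarith) (by positivity)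
    (by rw [div_le_one ht]; exact hst.le)
  rw [add_sub_cancel, ← Real.rpow_mul hx.le, mul_div_cancel₀ _ ht.ne'] at h
  calc t * x ^ s ≤ t * (1 + s / t * (x ^ t - 1)) := by gcongr
    _ = _ := by field_simp; ring

lemma sup_aux (x s t : ℝ) (hx : 0 < x) (hs : 0 < s) (hst : s < t) :
    2 * t * x ^ s / (s + 2) ≤ (t - s) + 2 * s * x ^ t / (t + 2) := by
  have ht : 0 < t := hs.trans hst
  obtain ⟨k, hk, hkt⟩ : ∃ k : ℝ, 0 < k ∧ k ^ t = 2 / (t + 2) :=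
    ⟨(2 / (t + 2)) ^ (1 / t), by positivity, by
      rw [← Real.rpow_mul (by positivity), one_div_mul_cancel ht.ne', Real.rpow_one]⟩
  have h1 := young_aux_s8 (k * x) s t (by positivity) hs hst
  have h2 := young_aux_s8 k⁻¹ s t (by positivity) hs hst
  rw [Real.mul_rpow hk.le hx.le, Real.mul_rpow hk.le hx.le, hkt] at h1
  rw [Real.inv_rpow hk.le, Real.inv_rpow hk.le, hkt] at h2
  have hks : 0 < k ^ s := Real.rpow_pos_of_pos hk s
  have h3 : (k ^ s)⁻¹ ≤ (s + 2) / 2 := by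
    have : t * (k ^ s)⁻¹ ≤ t * ((s + 2) / 2) := h2.trans (le_of_eq (by field_simp; ring))
    exact le_of_mul_le_mul_left this ht
  have h4 : 2 / (s + 2) ≤ k ^ s := by
    rw [inv_le_comm₀ hks (by positivity), inv_div] at h3
    exact h3
  have hxs : 0 < x ^ s := Real.rpow_pos_of_pos hx s
  calc 2 * t * x ^ s / (s + 2) = t * (2 / (s + 2) * x ^ s) := by ring
    _ ≤ t * (k ^ s * x ^ s) := by gcongr
    _ ≤ _ := h1
    _ = _ := by ring

lemma key_aux (ω s t : ℝ) (hs : 0 < s) (hst : s < t) (hω : 0 < ω)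
    (v : ℝ) (hv : 0 < v) (hF : ω / 2 < v ^ s / (s + 2) - v ^ t / (t + 2))
    (u : ℝ) (hu : 0 < u) :
    ω * t ^ 2 * u ^ (t - s) < ω * s ^ 2 + (t - s) ^ 2 * u ^ t := by
  have ht : 0 < t := hs.trans hst
  have hr : 0 < t - s := sub_pos.2 hst
  obtain ⟨w, hw, hwr⟩ : ∃ w : ℝ, 0 < w ∧ w ^ (t - s) = s / t :=
    ⟨(s / t) ^ (1 / (t - s)), by positivity, by
      rw [← Real.rpow_mul (by positivity), one_div_mul_cancel hr.ne', Real.rpow_one]⟩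
  have hwt : w ^ t = w ^ s * (s / t) := by
    rw [← hwr, ← Real.rpow_add hw]; congr 1; ring
  have hws : 0 < w ^ s := Real.rpow_pos_of_pos hw s
  -- bound on ω
  have hωb : ω < (t - s) / t * w ^ s := by
    have hx : 0 < v / w := by positivity
    have h := sup_aux (v / w) s t hx hs hst
    have hv' : v = w * (v / w) := by field_simp
    rw [hv', Real.mul_rpow hw.le hx.le, Real.mul_rpow hw.le hx.le, hwt] at hF
    have h5 := mul_le_mul_of_nonneg_left h (by positivity : 0 ≤ w ^ s / t)
    have e1 : w ^ s / t * (2 * t * (v / w) ^ s / (s + 2))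
      = 2 * (w ^ s * (v / w) ^ s / (s + 2)) := by field_simp
    have e2 : w ^ s / t * ((t - s) + 2 * s * (v / w) ^ t / (t + 2))
      = (t - s) / t * w ^ s + 2 * (w ^ s * (s / t) * (v / w) ^ t / (t + 2)) := by
      field_simp
    rw [e1, e2] at h5
    linarith
  have hx : 0 < u / w := by positivity
  have hy := young_aux_s8 (u / w) (t - s) t hx hr (by linarith)
  have hu' : u = w * (u / w) := by field_simp
  rw [hu', Real.mul_rpow hw.le hx.le, Real.mul_rpow hw.le hx.le, hwt, hwr]
  set X := (u / w) ^ (t - s)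
  set Y := (u / w) ^ t
  have hY : 0 < Y := Real.rpow_pos_of_pos hx t
  have e : ω * t ^ 2 * (s / t * X) = ω * s ^ 2 + ω * s * (t * X - s) := by
    field_simp; ring
  rw [e]
  have hpos : 0 < (t - s) ^ 2 * (w ^ s * (s / t) * Y) := by positivity
  rcases le_or_gt (t * X - s) 0 with h0 | h0
  · have : ω * s * (t * X - s) ≤ 0 := mul_nonpos_of_nonneg_of_nonpos (by positivity) h0
    linarith
  · have h6 : ω * s * (t * X - s) < (t - s) / t * w ^ s * s * (t * X - s) := by gcongr
    have h7 : (t - s) / t * w ^ s * s * (t * X - s)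
        ≤ (t - s) / t * w ^ s * s * ((t - s) * Y) := by
      apply mul_le_mul_of_nonneg_left _ (by positivity)
      linarith
    have h8 : (t - s) / t * w ^ s * s * ((t - s) * Y)
      = (t - s) ^ 2 * (w ^ s * (s / t) * Y) := by ring
    linarith

theorem existence_implies_uniqueness_condition (ω p q : ℝ) (hω : 0 < ω)
    (hp : 1 < p) (hpq : p < q) (hF : ∃ u : ℝ, 0 < u ∧ 0 < F ω p q u) :
    ∀ u : ℝ, 0 < u →
      (f' ω p q u + u * f'' p q u) * f ω p q u - u * (f' ω p q u) ^ 2 < 0 := by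
  obtain ⟨v, hv, hFv⟩ := hF
  intro u hu
  have hF' : ω / 2 < v ^ (p - 1) / ((p - 1) + 2) - v ^ (q - 1) / ((q - 1) + 2) := by
    have e : ∀ r : ℝ, v ^ (r + 1) = v ^ 2 * v ^ (r - 1) := by
      intro r
      rw [← Real.rpow_natCast v 2, ← Real.rpow_add hv]; congr 1; push_cast; ring
    have e2 : F ω p q v = v ^ 2 *
        (v ^ (p - 1) / ((p - 1) + 2) - v ^ (q - 1) / ((q - 1) + 2) - ω / 2) := by
      unfold F
      rw [e p, e q, show p - 1 + 2 = p + 1 by ring, show q - 1 + 2 = q + 1 by ring]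
      ring
    rw [e2] at hFv
    have := (pos_iff_pos_of_mul_pos hFv).1 (by positivity)
    linarith
  have hk := key_aux ω (p - 1) (q - 1) (by linarith) (by linarith) hω v hv hF' u hu
  have e0 : ∀ r : ℝ, u ^ r = u * u ^ (r - 1) := by
    intro r
    rw [Real.rpow_sub_one hu.ne']; field_simp
  have e1 : ∀ r : ℝ, u * u ^ (r - 2) = u ^ (r - 1) := by
    intro r
    rw [e0 (r - 1)]; congr 2; ring
  have e2 : u ^ (q - 1) = u ^ (p - 1) * u ^ (q - 1 - (p - 1)) := by
    rw [← Real.rpow_add hu]; congr 1; ring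
  have e3 : u * f'' p q u = p * (p - 1) * u ^ (p - 1) - q * (q - 1) * u ^ (q - 1) := by
    unfold f''
    rw [← e1 p, ← e1 q]; ring
  have ha : 0 < u ^ (p - 1) := Real.rpow_pos_of_pos hu _
  rw [e3]
  unfold f f'
  rw [e0 p, e0 q]
  set a := u ^ (p - 1)
  set b := u ^ (q - 1)
  set c := u ^ (q - 1 - (p - 1))
  have h9 : 0 < u * a * ((ω * (p - 1) ^ 2 + (q - 1 - (p - 1)) ^ 2 * b)
      - ω * (q - 1) ^ 2 * c) := mul_pos (by positivity) (by linarith)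
  have h10 : u * a * ((ω * (p - 1) ^ 2 + (q - 1 - (p - 1)) ^ 2 * b) - ω * (q - 1) ^ 2 * c)
    = u * (ω * (p - 1) ^ 2 * a + (q - p) ^ 2 * a * b - ω * (q - 1) ^ 2 * b) := by
    linear_combination (u * ω * (q - 1) ^ 2) * e2
  rw [h10] at h9
  linarith
end

section
/- Let q > p > 1 be real numbers. Then ω_{p,q} < η_{p,q}, where ω_{p,q} = (2(q-p)/((p+1)(q-1)))·((p-1)(q+1)/((p+1)(q-1)))^{(p-1)/(q-p)} and η_{p,q} = ((q-p)/(q-1))·((p-1)/(q-1))^{(p-1)/(q-p)}. -/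
theorem omegaPQ_lt_etaPQ (p q : ℝ) (hp : 1 < p) (hpq : p < q) :
    omegaPQ p q < etaPQ p q := by
  have h1 : 0 < p - 1 := by linarith
  have h2 : 0 < q - p := by linarith
  have h3 : 0 < q - 1 := by linarith
  have h4 : 0 < p + 1 := by linarith
  have h5 : 0 < q + 1 := by linarith
  -- strict concavity of the logarithm at `2 < p + 1 < q + 1`
  have hs := strictConcaveOn_log_Ioi.slope_anti_adjacent (x := (2 : ℝ)) (y := p + 1) (z := q + 1)
    (by simp) (by simpa using h5) (by linarith) (by linarith)
  rw [div_lt_div_iff₀ (by linarith) (by linarith)] at hs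
  have key : 2 / (p + 1) * ((q + 1) / (p + 1)) ^ ((p - 1) / (q - p)) < 1 := by
    have hx : 0 < (q + 1) / (p + 1) := by positivity
    have hpos : 0 < 2 / (p + 1) * ((q + 1) / (p + 1)) ^ ((p - 1) / (q - p)) := by positivity
    rw [← Real.log_neg_iff hpos, Real.log_mul (by positivity) (by positivity), Real.log_rpow hx,
      Real.log_div (by norm_num) h4.ne', Real.log_div h5.ne' h4.ne']
    have h6 : (p - 1) / (q - p) * (Real.log (q + 1) - Real.log (p + 1))
        < Real.log (p + 1) - Real.log 2 := by
      rw [div_mul_eq_mul_div, div_lt_iff₀ h2]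
      linarith
    linarith
  have he : 0 < etaPQ p q := by
    unfold etaPQ
    positivity
  have hfac : omegaPQ p q
      = etaPQ p q * (2 / (p + 1) * ((q + 1) / (p + 1)) ^ ((p - 1) / (q - p))) := by
    unfold omegaPQ etaPQ
    have hb : (p - 1) * (q + 1) / ((p + 1) * (q - 1))
        = (p - 1) / (q - 1) * ((q + 1) / (p + 1)) := by
      field_simp
    rw [hb, Real.mul_rpow (by positivity) (by positivity)]
    field_simp
  rw [hfac]
  exact mul_lt_of_lt_one_right he key
end

section
/- Let ω > 0 and q > p > 1 be real numbers, let n ≥ 1 be a natural number, and let f(u) = -ω·u + u^p - u^q, F(u) = -ω·u²/2 + u^{p+1}/(p+1) - u^{q+1}/(q+1). If there exists u > 0 with F(u) > 0, then the boundary value problem u''(r) + ((n-1)/r)·u'(r) + f(u(r)) = 0 for r > 0, u'(0) = 0, lim_{r→∞} u(r) = 0 has exactly one positive solution. -/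
open Filter

/-- `u` is a positive solution of the radial boundary value problem
`u'' + ((n-1)/r) u' + f(u) = 0` on `(0,∞)`, `u'(0) = 0`, `u(r) → 0` as `r → ∞`. -/
def IsPositiveSolution (n : ℕ) (f : ℝ → ℝ) (u : ℝ → ℝ) : Prop :=
  ContDiffOn ℝ 2 u (Set.Ici 0) ∧
  (∀ r : ℝ, 0 ≤ r → 0 < u r) ∧
  (∀ r : ℝ, 0 < r →
    iteratedDerivWithin 2 u (Set.Ici 0) r
      + ((n : ℝ) - 1) / r * derivWithin u (Set.Ici 0) r + f (u r) = 0) ∧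
  derivWithin u (Set.Ici 0) 0 = 0 ∧
  Tendsto u atTop (nhds 0)

open Filter Set Topology

/-! ### Elementary real-variable lemmas -/

lemma mono_of {f f' : ℝ → ℝ} {a b : ℝ} (hab : a ≤ b) (hc : ContinuousOn f (Icc a b))
    (hd : ∀ t ∈ Ioo a b, HasDerivAt f (f' t) t) (h : ∀ t ∈ Ioo a b, 0 ≤ f' t) : f a ≤ f b := by
  have := monotoneOn_of_deriv_nonneg (convex_Icc a b) hc
    (by rw [interior_Icc]; exact fun t ht => (hd t ht).differentiableAt.differentiableWithinAt)
    (by rw [interior_Icc]; intro t ht; rw [(hd t ht).deriv]; exact h t ht)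
  exact this (left_mem_Icc.2 hab) (right_mem_Icc.2 hab) hab

lemma smono_of {f f' : ℝ → ℝ} {a b : ℝ} (hab : a < b) (hc : ContinuousOn f (Icc a b))
    (hd : ∀ t ∈ Ioo a b, HasDerivAt f (f' t) t) (h : ∀ t ∈ Ioo a b, 0 < f' t) : f a < f b := by
  have := strictMonoOn_of_deriv_pos (convex_Icc a b) hc
    (by rw [interior_Icc]; intro t ht; rw [(hd t ht).deriv]; exact h t ht)
  exact this (left_mem_Icc.2 hab.le) (right_mem_Icc.2 hab.le) hab

lemma anti_of {f f' : ℝ → ℝ} {a b : ℝ} (hab : a ≤ b) (hc : ContinuousOn f (Icc a b))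
    (hd : ∀ t ∈ Ioo a b, HasDerivAt f (f' t) t) (h : ∀ t ∈ Ioo a b, f' t ≤ 0) : f b ≤ f a := by
  have := mono_of (f := fun t => -f t) (f' := fun t => -f' t) hab hc.neg
    (fun t ht => (hd t ht).neg) (fun t ht => by have := h t ht; linarith)
  simpa using this

lemma santi_of {f f' : ℝ → ℝ} {a b : ℝ} (hab : a < b) (hc : ContinuousOn f (Icc a b))
    (hd : ∀ t ∈ Ioo a b, HasDerivAt f (f' t) t) (h : ∀ t ∈ Ioo a b, f' t < 0) : f b < f a := by
  have := smono_of (f := fun t => -f t) (f' := fun t => -f' t) hab hc.neg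
    (fun t ht => (hd t ht).neg) (fun t ht => by have := h t ht; linarith)
  simpa using this

lemma first_zero {y : ℝ → ℝ} {a b : ℝ} (hab : a ≤ b) (hc : ContinuousOn y (Icc a b))
    (ha : y a < 0) (hb : 0 ≤ y b) :
    ∃ c ∈ Ioc a b, y c = 0 ∧ ∀ t ∈ Ico a c, y t < 0 := by
  set S := Icc a b ∩ y ⁻¹' (Ici 0) with hS
  have hcl : IsClosed S := hc.preimage_isClosed_of_isClosed isClosed_Icc isClosed_Ici
  have hne : S.Nonempty := ⟨b, right_mem_Icc.2 hab, hb⟩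
  have hbd : BddBelow S := ⟨a, fun t ht => ht.1.1⟩
  have hm := hcl.csInf_mem hne hbd
  set c := sInf S
  have hlt : ∀ t ∈ Ico a c, y t < 0 := by
    intro t ht
    by_contra hcon
    exact absurd (csInf_le hbd ⟨⟨ht.1, ht.2.le.trans hm.1.2⟩, not_lt.1 hcon⟩) (not_le.2 ht.2)
  have hac : a < c := by
    rcases hm.1.1.lt_or_eq with h | h
    · exact h
    · exfalso; have := hm.2; simp only [mem_preimage, mem_Ici, ← h] at this; linarith
  refine ⟨c, ⟨hac, hm.1.2⟩, ?_, hlt⟩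
  apply le_antisymm _ hm.2
  by_contra hcon
  push Not at hcon
  have hc' : ContinuousOn y (Icc a c) := hc.mono (Icc_subset_Icc_right hm.1.2)
  obtain ⟨d, hd, hd0⟩ := intermediate_value_Ioo hac.le hc' (show (0:ℝ) ∈ Ioo (y a) (y c) from ⟨ha, hcon⟩)
  have := hlt d ⟨hd.1.le, hd.2⟩
  linarith

/-- If a function has a limit and so does its derivative, then the derivative tends to `0`. -/
lemma deriv_lim_zero {h h' : ℝ → ℝ} {l d : ℝ} (hd : ∀ r, 0 < r → HasDerivAt h (h' r) r)
    (hl : Tendsto h atTop (𝓝 l)) (hl' : Tendsto h' atTop (𝓝 d)) : d = 0 := by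
  have h1 : Tendsto (fun r => h (r + 1) - h r) atTop (𝓝 (l - l)) :=
    (hl.comp (tendsto_atTop_add_const_right _ 1 tendsto_id)).sub hl
  rw [sub_self] at h1
  have hex : ∀ r : ℝ, ∃ s, r ≤ s ∧ (0 < r → h' s = h (r + 1) - h r) := by
    intro r
    by_cases hr : 0 < r
    · obtain ⟨s, hs, he⟩ := exists_hasDerivAt_eq_slope h h' (show r < r + 1 by linarith)
        (fun t ht => (hd t (hr.trans_le ht.1)).continuousAt.continuousWithinAt)
        (fun t ht => hd t (hr.trans ht.1))
      refine ⟨s, hs.1.le, fun _ => ?_⟩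
      rw [he]; simp
    · exact ⟨r, le_rfl, fun h => absurd h hr⟩
  choose s hs hs' using hex
  have h2 : Tendsto (fun r => h' (s r)) atTop (𝓝 d) :=
    hl'.comp (tendsto_atTop_mono hs tendsto_id)
  refine tendsto_nhds_unique h2 (h1.congr' ?_)
  filter_upwards [eventually_gt_atTop 0] with r hr
  exact (hs' r hr).symm

lemma hasDerivAt_pow_div (k : ℕ) {r : ℝ} (hr : 0 < r) :
    HasDerivAt (fun r : ℝ => r ^ k) (k / r * r ^ k) r := by
  have := hasDerivAt_pow k r
  refine this.congr_deriv ?_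
  rcases k with _ | k
  · simp
  · field_simp; simp [pow_succ]

/-! ### Radial ODEs -/

/-- `x'' + (k/r) x' + g = 0`, `x'(0) = 0`, with `y = x'`. -/
structure Rad (k : ℕ) (g x y : ℝ → ℝ) : Prop where
  cx : ContinuousOn x (Ici 0)
  cy : ContinuousOn y (Ici 0)
  y0 : y 0 = 0
  dx : ∀ r, 0 < r → HasDerivAt x (y r) r
  dy : ∀ r, 0 < r → HasDerivAt y (-(k / r) * y r - g r) r

namespace Rad
variable {k : ℕ} {g x y g₁ x₁ y₁ g₂ x₂ y₂ : ℝ → ℝ}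

lemma sub (h₁ : Rad k g₁ x₁ y₁) (h₂ : Rad k g₂ x₂ y₂) :
    Rad k (fun r => g₁ r - g₂ r) (fun r => x₁ r - x₂ r) (fun r => y₁ r - y₂ r) where
  cx := h₁.cx.sub h₂.cx
  cy := h₁.cy.sub h₂.cy
  y0 := by simp [h₁.y0, h₂.y0]
  dx r hr := (h₁.dx r hr).sub (h₂.dx r hr)
  dy r hr := by
    have := (h₁.dy r hr).sub (h₂.dy r hr)
    exact this.congr_deriv (by ring)

lemma smul (h : Rad k g x y) (a : ℝ) :
    Rad k (fun r => a * g r) (fun r => a * x r) (fun r => a * y r) where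
  cx := continuousOn_const.mul h.cx
  cy := continuousOn_const.mul h.cy
  y0 := by simp [h.y0]
  dx r hr := (h.dx r hr).const_mul a
  dy r hr := by
    have := (h.dy r hr).const_mul a
    exact this.congr_deriv (by ring)

lemma cx' (h : Rad k g x y) {a b : ℝ} (ha : 0 ≤ a) : ContinuousOn x (Icc a b) :=
  h.cx.mono fun _ ht => ha.trans ht.1

lemma cy' (h : Rad k g x y) {a b : ℝ} (ha : 0 ≤ a) : ContinuousOn y (Icc a b) :=
  h.cy.mono fun _ ht => ha.trans ht.1

lemma flux (h : Rad k g x y) {r : ℝ} (hr : 0 < r) :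
    HasDerivAt (fun r => r ^ k * y r) (-(r ^ k * g r)) r := by
  have := (hasDerivAt_pow_div k hr).mul (h.dy r hr)
  exact this.congr_deriv (by ring)

lemma cflux (h : Rad k g x y) {a b : ℝ} (ha : 0 ≤ a) :
    ContinuousOn (fun r => r ^ k * y r) (Icc a b) :=
  (continuous_pow k).continuousOn.mul (h.cy' ha)

lemma flux0 (h : Rad k g x y) : (0:ℝ) ^ k * y 0 = 0 := by simp [h.y0]

/-- Forward stability (Gronwall). -/
lemma stab (h : Rad k g x y) {L η R : ℝ} (hL : 0 ≤ L)
    (hg : ∀ r ∈ Icc 0 R, |g r| ≤ L * |x r| + η) {r : ℝ} (hr : r ∈ Icc 0 R) :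
    x r ^ 2 + y r ^ 2 ≤ Real.exp ((L + 2) * r) * (x 0 ^ 2 + η ^ 2) := by
  have key := anti_of (f := fun t => Real.exp (-((L + 2) * t)) * (x t ^ 2 + y t ^ 2 + η ^ 2))
    (f' := fun t => Real.exp (-((L + 2) * t)) * (-(L + 2)) * (x t ^ 2 + y t ^ 2 + η ^ 2)
      + Real.exp (-((L + 2) * t)) * (2 * x t * y t + 2 * y t * (-(k / t) * y t - g t)))
    hr.1 ?_ ?_ ?_
  · simp only [h.y0, mul_zero, neg_zero, Real.exp_zero, one_mul, Real.exp_neg] at key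
    have he := Real.exp_pos ((L + 2) * r)
    rw [inv_mul_le_iff₀ he] at key
    nlinarith [sq_nonneg η]
  · have hcx := h.cx' (b := r) le_rfl
    have hcy := h.cy' (b := r) le_rfl
    fun_prop
  · intro t ht
    have h1 : HasDerivAt (fun t => Real.exp (-((L + 2) * t)))
        (Real.exp (-((L + 2) * t)) * (-(L + 2))) t := by
      have := (((hasDerivAt_id t).const_mul (L + 2)).neg).exp
      simpa using this
    have h2 := (((h.dx t ht.1).pow 2).add ((h.dy t ht.1).pow 2)).add_const (η ^ 2)
    refine (h1.mul h2).congr_deriv ?_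
    simp
  · intro t ht
    have hgt := hg t ⟨ht.1.le, ht.2.le.trans hr.2⟩
    have hfr : 0 ≤ (k / t) * y t ^ 2 := by have := ht.1; positivity
    have e := Real.exp_pos (-((L + 2) * t))
    have hη : 2 * |y t| * η ≤ y t ^ 2 + η ^ 2 := by
      rw [← sq_abs (y t)]; nlinarith [sq_nonneg (|y t| - η)]
    have h3 : 2 * x t * y t ≤ x t ^ 2 + y t ^ 2 := by nlinarith [sq_nonneg (x t - y t)]
    have h4 : 2 * |y t| * |x t| ≤ x t ^ 2 + y t ^ 2 := by
      rw [← sq_abs (y t), ← sq_abs (x t)]; nlinarith [sq_nonneg (|x t| - |y t|)]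
    have h5 : -(2 * y t * g t) ≤ 2 * |y t| * (L * |x t| + η) := by
      calc -(2 * y t * g t) ≤ |2 * y t * g t| := neg_le_abs _
        _ = 2 * |y t| * |g t| := by rw [abs_mul, abs_mul]; simp
        _ ≤ _ := by gcongr
    have h6 : 2 * |y t| * (L * |x t|) ≤ L * (x t ^ 2 + y t ^ 2) := by nlinarith
    have : (-(L + 2)) * (x t ^ 2 + y t ^ 2 + η ^ 2)
      + (2 * x t * y t + 2 * y t * (-(k / t) * y t - g t)) ≤ 0 := by
      nlinarith [sq_nonneg η, mul_nonneg hL (sq_nonneg η), sq_nonneg (x t), sq_nonneg (y t)]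
    nlinarith

/-- Backward uniqueness at `0`. -/
lemma backward (h : Rad k g x y) {L R : ℝ} (hL : 0 ≤ L) (hR : 0 < R)
    (hg : ∀ r ∈ Icc 0 R, |g r| ≤ L * |x r|) (hx : x R = 0) (hy : y R = 0) : x 0 = 0 := by
  have key : ∀ r ∈ Ioo 0 R, x r = 0 := by
    intro r hr
    have key := mono_of (f := fun t => Real.exp ((L + 2) * t) * ((t ^ k) ^ 2 * (x t ^ 2 + y t ^ 2)))
      (f' := fun t => Real.exp ((L + 2) * t) * (L + 2) * ((t ^ k) ^ 2 * (x t ^ 2 + y t ^ 2))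
        + Real.exp ((L + 2) * t) * (2 * t ^ k * (k / t * t ^ k) * (x t ^ 2 + y t ^ 2) +
          (t ^ k) ^ 2 * (2 * x t * y t + 2 * y t * (-(k / t) * y t - g t))))
      hr.2.le ?_ ?_ ?_
    · simp only [hx, hy] at key
      have h1 : 0 < Real.exp ((L + 2) * r) := Real.exp_pos _
      have h2 : 0 < (r ^ k) ^ 2 := by have := hr.1; positivity
      have h3 : Real.exp ((L + 2) * r) * ((r ^ k) ^ 2 * (x r ^ 2 + y r ^ 2)) ≤ 0 := by
        simpa using key
      have h4 : x r ^ 2 + y r ^ 2 ≤ 0 := by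
        by_contra hc; push Not at hc
        have := mul_pos h1 (mul_pos h2 hc); linarith
      have : x r ^ 2 = 0 := by nlinarith [sq_nonneg (x r), sq_nonneg (y r)]
      simpa using this
    · have hcx := h.cx' (b := R) hr.1.le
      have hcy := h.cy' (b := R) hr.1.le
      fun_prop
    · intro t ht
      have ht0 : 0 < t := hr.1.trans ht.1
      have h1 : HasDerivAt (fun t => Real.exp ((L + 2) * t))
          (Real.exp ((L + 2) * t) * (L + 2)) t := by
        have := (((hasDerivAt_id t).const_mul (L + 2))).exp
        simpa using this
      have h2 := ((h.dx t ht0).pow 2).add ((h.dy t ht0).pow 2)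
      refine (h1.mul (((hasDerivAt_pow_div k ht0).pow 2).mul h2)).congr_deriv ?_
      simp
    · intro t ht
      have ht0 : 0 < t := hr.1.trans ht.1
      have hgt := hg t ⟨ht0.le, ht.2.le⟩
      have e := Real.exp_pos ((L + 2) * t)
      have e2 : 0 < (t ^ k) ^ 2 := by positivity
      have hfr : 0 ≤ (k / t) * x t ^ 2 := by positivity
      have h3 : -(2 * x t * y t) ≤ x t ^ 2 + y t ^ 2 := by nlinarith [sq_nonneg (x t + y t)]
      have h4 : 2 * |y t| * |x t| ≤ x t ^ 2 + y t ^ 2 := by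
        rw [← sq_abs (y t), ← sq_abs (x t)]; nlinarith [sq_nonneg (|x t| - |y t|)]
      have h5 : (2 * y t * g t) ≤ 2 * |y t| * (L * |x t|) := by
        calc (2 * y t * g t) ≤ |2 * y t * g t| := le_abs_self _
          _ = 2 * |y t| * |g t| := by rw [abs_mul, abs_mul]; simp
          _ ≤ _ := by gcongr
      have h6 : 2 * |y t| * (L * |x t|) ≤ L * (x t ^ 2 + y t ^ 2) := by nlinarith
      have h7 : 0 ≤ (L + 2) * (x t ^ 2 + y t ^ 2) + (2 * (k / t) * (x t ^ 2 + y t ^ 2)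
        + (2 * x t * y t + 2 * y t * (-(k / t) * y t - g t))) := by
        nlinarith [sq_nonneg (x t), sq_nonneg (y t)]
      have := mul_nonneg (mul_pos e e2).le h7
      calc (0:ℝ) ≤ _ := this
        _ = _ := by ring
  have hcl : Tendsto x (𝓝[>] 0) (𝓝 (x 0)) :=
    (h.cx 0 (by simp)).mono_left (nhdsWithin_mono _ Ioi_subset_Ici_self)
  refine tendsto_nhds_unique hcl ?_
  refine tendsto_const_nhds.congr' ?_
  filter_upwards [Ioo_mem_nhdsGT hR] with r hr
  exact (key r hr).symm

/-- The limit of `y r / r` at `0`. -/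
lemma lim0 (h : Rad k g x y) (hg : ContinuousWithinAt g (Ici 0) 0) :
    Tendsto (fun r => y r / r) (𝓝[>] 0) (𝓝 (-g 0 / (k + 1))) := by
  have hg' : Tendsto g (𝓝[>] 0) (𝓝 (g 0)) :=
    hg.mono_left (nhdsWithin_mono _ Ioi_subset_Ici_self)
  have hy' : Tendsto y (𝓝[>] 0) (𝓝 0) := by
    have := (h.cy 0 (by simp)).mono_left (nhdsWithin_mono 0 (Ioi_subset_Ici_self (a := (0:ℝ))))
    rwa [h.y0] at this
  have key := HasDerivAt.lhopital_zero_right_on_Ioo (a := 0) (b := 1)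
    (f := fun r => r ^ k * y r) (f' := fun r => -(r ^ k * g r))
    (g := fun r => r ^ (k + 1)) (g' := fun r => (k + 1) * r ^ k) (l := 𝓝 (-g 0 / (k + 1)))
    one_pos (fun r hr => h.flux hr.1)
    (fun r hr => by have := hasDerivAt_pow (k + 1) r; simpa using this)
    (fun r hr => by have := hr.1; positivity) ?_ ?_ ?_
  · refine key.congr' ?_
    filter_upwards [self_mem_nhdsWithin] with r hr
    have : (0:ℝ) < r := hr
    field_simp
    rw [pow_succ]; ring
  · have h1 : Tendsto (fun r : ℝ => r ^ k) (𝓝[>] 0) (𝓝 (0 ^ k)) :=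
      ((continuous_pow k).tendsto 0).mono_left nhdsWithin_le_nhds
    simpa using h1.mul hy'
  · have h1 : Tendsto (fun r : ℝ => r ^ (k + 1)) (𝓝[>] 0) (𝓝 (0 ^ (k + 1))) :=
      ((continuous_pow (k + 1)).tendsto 0).mono_left nhdsWithin_le_nhds
    simpa using h1
  · refine (hg'.neg.div_const (k + 1 : ℝ)).congr' ?_
    filter_upwards [self_mem_nhdsWithin] with r hr
    have : (0:ℝ) < r := hr
    field_simp

end Rad

open Filter Set Topology

/-! ### Existence for radial initial value problems -/

namespace Rad
variable {k : ℕ} {g x y : ℝ → ℝ}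

lemma congr_g (h : Rad k g x y) {g' : ℝ → ℝ} (hg : ∀ r, 0 < r → g r = g' r) : Rad k g' x y where
  cx := h.cx
  cy := h.cy
  y0 := h.y0
  dx := h.dx
  dy r hr := by rw [← hg r hr]; exact h.dy r hr

lemma expbound_y (h : Rad k g x y) {a M : ℝ} (ha : 0 ≤ a) (hM : 0 < M)
    (hg : ∀ r, 0 ≤ r → -g r ≤ a * Real.exp (M * r)) {r : ℝ} (hr : 0 ≤ r) :
    y r ≤ a / M * Real.exp (M * r) := by
  rcases hr.eq_or_lt with rfl | hr
  · rw [h.y0]; positivity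
  have key := anti_of (f := fun t => t ^ k * y t - a / M * (t ^ k * Real.exp (M * t)))
    (f' := fun t => -(t ^ k * g t) - a / M * (k / t * t ^ k * Real.exp (M * t)
      + t ^ k * (Real.exp (M * t) * M))) hr.le ?_ ?_ ?_
  · simp only [h.flux0] at key
    have h1 : 0 ≤ a / M * (0 ^ k * Real.exp (M * 0)) := by positivity
    have h2 : 0 < r ^ k := by positivity
    have h3 : r ^ k * (y r - a / M * Real.exp (M * r)) ≤ 0 := by nlinarith
    by_contra hc; push Not at hc
    have := mul_pos h2 (sub_pos.2 hc); linarith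
  · have := h.cflux (b := r) le_rfl
    exact this.sub (by fun_prop)
  · intro t ht
    have h1 : HasDerivAt (fun t => Real.exp (M * t)) (Real.exp (M * t) * M) t := by
      have := ((hasDerivAt_id t).const_mul M).exp
      simpa using this
    exact (h.flux ht.1).sub (((hasDerivAt_pow_div k ht.1).mul h1).const_mul (a / M))
  · intro t ht
    have h1 := hg t ht.1.le
    have h2 : 0 < t ^ k := by have := ht.1; positivity
    have h3 : 0 ≤ a / M * (k / t * t ^ k * Real.exp (M * t)) := by have := ht.1; positivity
    have h4 : a / M * (t ^ k * (Real.exp (M * t) * M)) = t ^ k * (a * Real.exp (M * t)) := by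
      field_simp
    rw [mul_add, h4]
    nlinarith

lemma expbound_x (h : Rad k g x y) {a M : ℝ} (ha : 0 ≤ a) (hM : 0 < M)
    (hg : ∀ r, 0 ≤ r → -g r ≤ a * Real.exp (M * r)) {r : ℝ} (hr : 0 ≤ r) :
    x r - x 0 ≤ a / M ^ 2 * Real.exp (M * r) := by
  have key := anti_of (f := fun t => x t - a / M ^ 2 * Real.exp (M * t))
    (f' := fun t => y t - a / M ^ 2 * (Real.exp (M * t) * M)) hr ?_ ?_ ?_
  · have : 0 ≤ a / M ^ 2 * Real.exp (M * 0) := by positivity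
    linarith
  · have := h.cx' (b := r) le_rfl
    fun_prop
  · intro t ht
    have h1 : HasDerivAt (fun t => Real.exp (M * t)) (Real.exp (M * t) * M) t := by
      have := ((hasDerivAt_id t).const_mul M).exp
      simpa using this
    exact (h.dx t ht.1).sub (h1.const_mul _)
  · intro t ht
    have h1 := h.expbound_y ha hM hg ht.1.le
    have h2 : a / M ^ 2 * (Real.exp (M * t) * M) = a / M * Real.exp (M * t) := by
      field_simp
    rw [h2]; linarith

lemma expbound (h : Rad k g x y) {a M : ℝ} (ha : 0 ≤ a) (hM : 0 < M)
    (hg : ∀ r, 0 ≤ r → |g r| ≤ a * Real.exp (M * r)) {r : ℝ} (hr : 0 ≤ r) :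
    |x r - x 0| ≤ a / M ^ 2 * Real.exp (M * r) := by
  rw [abs_le]
  constructor
  · have := (h.smul (-1)).expbound_x ha hM
      (fun r hr => by have := le_abs_self (g r); have := hg r hr; linarith) hr
    linarith
  · exact h.expbound_x ha hM
      (fun r hr => by have := neg_le_abs (g r); have := hg r hr; linarith) hr

end Rad

noncomputable def avg (k : ℕ) (G : ℝ → ℝ) (t : ℝ) : ℝ := ∫ s in (0:ℝ)..1, s ^ k * G (t * s)

lemma avg_cont (k : ℕ) {G : ℝ → ℝ} (hG : Continuous G) : Continuous (avg k G) := by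
  unfold avg
  apply intervalIntegral.continuous_parametric_intervalIntegral_of_continuous'
  fun_prop

lemma avg_eq (k : ℕ) {G : ℝ → ℝ} {t : ℝ} (ht : 0 < t) :
    t * avg k G t = (t ^ k)⁻¹ * ∫ s in (0:ℝ)..t, s ^ k * G s := by
  have h := intervalIntegral.integral_comp_mul_left (a := 0) (b := 1) (fun s => s ^ k * G s) ht.ne'
  simp only [mul_zero, mul_one, smul_eq_mul, mul_pow, mul_assoc,
    intervalIntegral.integral_const_mul] at h
  unfold avg
  have : 0 < t ^ k := by positivity
  field_simp at h ⊢
  linarith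

lemma rad_of_avg (k : ℕ) {G : ℝ → ℝ} (hG : Continuous G) (α : ℝ) :
    Rad k G (fun r => α - ∫ t in (0:ℝ)..r, t * avg k G t) (fun r => -(r * avg k G r)) := by
  have hA : Continuous (fun t => t * avg k G t) := continuous_id.mul (avg_cont k hG)
  have hd : ∀ r, HasDerivAt (fun r => α - ∫ t in (0:ℝ)..r, t * avg k G t) (-(r * avg k G r)) r :=
    fun r => (hA.integral_hasStrictDerivAt 0 r).hasDerivAt.const_sub α
  refine ⟨fun r _ => (hd r).continuousAt.continuousWithinAt, hA.neg.continuousOn, by simp,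
    fun r _ => hd r, fun r hr => ?_⟩
  have hG2 : Continuous (fun s => s ^ k * G s) := by fun_prop
  have h1 := (hG2.integral_hasStrictDerivAt 0 r).hasDerivAt
  have h2 := ((((hasDerivAt_pow_div k hr).inv (by positivity)).mul h1).neg)
  have h3 : HasDerivAt (fun r => -(r * avg k G r)) _ r := h2.congr_of_eventuallyEq (by
    filter_upwards [lt_mem_nhds hr] with t ht
    rw [avg_eq k ht]; rfl)
  refine h3.congr_deriv ?_
  rw [avg_eq k hr]
  have : 0 < r ^ k := by positivity
  simp only [Pi.inv_apply]
  field_simp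
  ring

theorem rad_exists (k : ℕ) (N : ℝ → ℝ → ℝ) (hN : Continuous (Function.uncurry N)) {L C : ℝ}
    (hL : 0 ≤ L) (hC : 0 ≤ C) (hlip : ∀ t x y, |N t x - N t y| ≤ L * |x - y|)
    (hbd : ∀ t, |N t 0| ≤ C) (α : ℝ) :
    ∃ x y : ℝ → ℝ, Rad k (fun t => N t (x t)) x y ∧ x 0 = α := by
  set M := L + 1 with hMdef
  have hM : 0 < M := by positivity
  let G : BoundedContinuousFunction ℝ ℝ → ℝ → ℝ := fun u t => N t (Real.exp (M * |t|) * u t)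
  have hG : ∀ u, Continuous (G u) := by
    intro u
    have : Continuous (fun t : ℝ => (t, Real.exp (M * |t|) * u t)) := by fun_prop
    exact hN.comp this
  let X : BoundedContinuousFunction ℝ ℝ → ℝ → ℝ := fun u r => α - ∫ t in (0:ℝ)..r, t * avg k (G u) t
  let Y : BoundedContinuousFunction ℝ ℝ → ℝ → ℝ := fun u r => -(r * avg k (G u) r)
  have hX : ∀ u, Rad k (G u) (X u) (Y u) := fun u => rad_of_avg k (hG u) α
  have hX0 : ∀ u, X u 0 = α := fun u => by simp [X]
  have hXc : ∀ u, Continuous (X u) := fun u => by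
    have hA : Continuous (fun t => t * avg k (G u) t) := continuous_id.mul (avg_cont k (hG u))
    exact continuous_const.sub (intervalIntegral.continuous_primitive
      (fun a b => hA.intervalIntegrable a b) 0)
  have hone : ∀ t : ℝ, 0 ≤ t → 1 ≤ Real.exp (M * t) := fun t ht => Real.one_le_exp (by positivity)
  have hGb : ∀ u, ∀ t, 0 ≤ t → |G u t| ≤ (C + L * ‖u‖) * Real.exp (M * t) := by
    intro u t ht
    have h1 := hlip t (Real.exp (M * |t|) * u t) 0
    have h2 := hbd t
    have h3 : |u t| ≤ ‖u‖ := u.norm_coe_le_norm t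
    rw [sub_zero, abs_mul, abs_of_pos (Real.exp_pos _), abs_of_nonneg ht] at h1
    have h4 : |G u t| ≤ |N t (Real.exp (M * |t|) * u t) - N t 0| + |N t 0| := by
      have := abs_add_le (N t (Real.exp (M * |t|) * u t) - N t 0) (N t 0)
      simpa [G] using this
    rw [abs_of_nonneg ht] at h4
    have h5 : L * (Real.exp (M * t) * |u t|) ≤ L * (Real.exp (M * t) * ‖u‖) := by gcongr
    nlinarith [hone t ht]
  have hXb : ∀ u r, |Real.exp (-(M * |r|)) * X u (|r|)| ≤ |α| + (C + L * ‖u‖) / M ^ 2 := by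
    intro u r
    have h1 := (hX u).expbound (a := C + L * ‖u‖) (M := M) (by positivity) hM (hGb u) (abs_nonneg r)
    rw [hX0] at h1
    have h2 : |X u (|r|)| ≤ |α| + (C + L * ‖u‖) / M ^ 2 * Real.exp (M * |r|) := by
      have := abs_add_le (X u (|r|) - α) α
      simp only [sub_add_cancel] at this
      linarith
    rw [abs_mul, abs_of_pos (Real.exp_pos _), Real.exp_neg, inv_mul_le_iff₀ (Real.exp_pos _)]
    nlinarith [hone (|r|) (abs_nonneg r), abs_nonneg α]
  let T : BoundedContinuousFunction ℝ ℝ → BoundedContinuousFunction ℝ ℝ := fun u =>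
    BoundedContinuousFunction.ofNormedAddCommGroup (fun r => Real.exp (-(M * |r|)) * X u (|r|))
      (by have := hXc u; fun_prop) (|α| + (C + L * ‖u‖) / M ^ 2) (hXb u)
  have hT : ContractingWith (1/2) T := by
    refine ⟨by rw [← NNReal.coe_lt_coe]; norm_num, LipschitzWith.of_dist_le_mul fun u v => ?_⟩
    rw [BoundedContinuousFunction.dist_le (by positivity)]
    intro r
    have h0 := (hX u).sub (hX v)
    have h1 := h0.expbound (a := L * dist u v) (M := M) (by positivity) hM ?_ (abs_nonneg r)
    · simp only [hX0, sub_self, sub_zero] at h1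
      have hTr : ∀ u, T u r = Real.exp (-(M * |r|)) * X u (|r|) := fun u => rfl
      rw [Real.dist_eq, hTr, hTr, ← mul_sub, abs_mul, abs_of_pos (Real.exp_pos _), Real.exp_neg,
        inv_mul_le_iff₀ (Real.exp_pos _)]
      refine h1.trans ?_
      have h2 : L / M ^ 2 ≤ 1 / 2 := by
        rw [div_le_iff₀ (by positivity), hMdef]; nlinarith [sq_nonneg (L - 1)]
      have h3 : (0:ℝ) ≤ dist u v * Real.exp (M * |r|) := by positivity
      have h4 : L * dist u v / M ^ 2 * Real.exp (M * |r|) = L / M ^ 2 * (dist u v * Real.exp (M * |r|)) := by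
        ring
      rw [h4]
      push_cast
      nlinarith
    · intro t ht
      refine (hlip t _ _).trans ?_
      rw [← mul_sub, abs_mul, abs_of_pos (Real.exp_pos _), abs_of_nonneg ht]
      have : |u t - v t| ≤ dist u v := by
        rw [← Real.dist_eq]; exact BoundedContinuousFunction.dist_coe_le_dist t
      calc L * (Real.exp (M * t) * |u t - v t|) ≤ L * (Real.exp (M * t) * dist u v) := by gcongr
        _ = _ := by ring
  set u := hT.fixedPoint
  have hu : T u = u := hT.fixedPoint_isFixedPt
  refine ⟨X u, Y u, (hX u).congr_g fun r hr => ?_, hX0 u⟩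
  have h1 : T u r = Real.exp (-(M * |r|)) * X u (|r|) := rfl
  rw [hu, abs_of_pos hr] at h1
  have : Real.exp (M * r) * u r = X u r := by
    rw [h1, ← mul_assoc, ← Real.exp_add]; simp
  simp only [G]
  rw [abs_of_pos hr, this]

open Filter Set Topology

/-! ### The abstract nonlinearity -/

/-- The properties of the (truncated) nonlinearity `g`, its derivative `dg` on `(0,c)` and its
primitive `G` used below. -/
structure Nice (g dg G : ℝ → ℝ) (L b c δ m : ℝ) : Prop where
  hL : 0 ≤ L
  hb : 0 < b
  hbc : b < c
  lip : ∀ x y, |g x - g y| ≤ L * |x - y|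
  derG : ∀ x, HasDerivAt G (g x) x
  g_nonpos : ∀ x, x ≤ 0 → g x = 0
  G_nonpos : ∀ x, x ≤ 0 → G x = 0
  g_b : g b = 0
  g_c : g c = 0
  g_neg : ∀ x ∈ Ioo 0 b, g x < 0
  g_pos : ∀ x ∈ Ioo b c, 0 < g x
  G_c : 0 < G c
  derg : ∀ x ∈ Ioo 0 c, HasDerivAt g (dg x) x
  dgc : ContinuousOn dg (Ioo 0 c)
  hδ : 0 < δ
  hδb : δ < b
  hm : 0 < m
  dg_neg : ∀ x ∈ Ioc 0 δ, dg x < 0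
  G_small : ∀ x ∈ Ioc 0 δ, 2 * G x ≤ -(m ^ 2 * x ^ 2)
  crossh : ∀ l s t, 0 < l → 0 < s → s < t → t < c →
    l * (s * dg s - g s) - 2 * g s ≤ 0 → l * (t * dg t - g t) - 2 * g t < 0
  crossQ : ∀ (k : ℕ) s t, 0 < s → s < t → t < c →
    0 ≤ (k + 1) * G s - (k - 1) / 2 * (s * g s) → 0 < (k + 1) * G t - (k - 1) / 2 * (t * g t)
  dich : ∀ u ∈ Ioo 0 c, 2 * G u < u * g u ∨
    (∀ t ∈ Ico u c, t * dg t - g t < 0 ∧ 0 < g t)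

namespace Nice
variable {g dg G : ℝ → ℝ} {L b c δ m : ℝ}

lemma hc (H : Nice g dg G L b c δ m) : 0 < c := H.hb.trans H.hbc

lemma gcont (H : Nice g dg G L b c δ m) : Continuous g := by
  have : LipschitzWith ⟨L, H.hL⟩ g := LipschitzWith.of_dist_le_mul fun x y => by
    rw [Real.dist_eq, Real.dist_eq]; exact H.lip x y
  exact this.continuous

lemma Gcont (H : Nice g dg G L b c δ m) : Continuous G :=
  continuous_iff_continuousAt.2 fun x => (H.derG x).continuousAt

lemma g0 (H : Nice g dg G L b c δ m) : g 0 = 0 := H.g_nonpos 0 le_rfl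

lemma G0 (H : Nice g dg G L b c δ m) : G 0 = 0 := H.G_nonpos 0 le_rfl

lemma g_abs (H : Nice g dg G L b c δ m) (x : ℝ) : |g x| ≤ L * |x| := by
  have := H.lip x 0
  simpa [H.g0] using this

lemma G_neg (H : Nice g dg G L b c δ m) {x : ℝ} (hx : x ∈ Ioc 0 b) : G x < 0 := by
  have := santi_of (f := G) (f' := g) hx.1 H.Gcont.continuousOn (fun t _ => H.derG t)
    (fun t ht => H.g_neg t ⟨ht.1, ht.2.trans_le hx.2⟩)
  rwa [H.G0] at this

lemma G_le_zero (H : Nice g dg G L b c δ m) {x : ℝ} (hx : x ≤ b) : G x ≤ 0 := by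
  rcases le_or_gt x 0 with h | h
  · exact (H.G_nonpos x h).le
  · exact (H.G_neg ⟨h, hx⟩).le

lemma G_strict (H : Nice g dg G L b c δ m) {x y : ℝ} (hx : b ≤ x) (hxy : x < y) (hy : y ≤ c) :
    G x < G y :=
  smono_of (f := G) (f' := g) hxy H.Gcont.continuousOn (fun t _ => H.derG t)
    (fun t ht => H.g_pos t ⟨hx.trans_lt ht.1, ht.2.trans_le hy⟩)

lemma G_lt (H : Nice g dg G L b c δ m) {x : ℝ} (hx : x < c) : G x < G c := by
  rcases le_or_gt x b with h | h
  · exact (H.G_le_zero h).trans_lt H.G_c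
  · exact H.G_strict h.le hx le_rfl

/-- A lower bound for `G` below `c`. -/
lemma G_lower (H : Nice g dg G L b c δ m) {x : ℝ} (hx : x ≤ c) : G b ≤ G x := by
  have hGb : G b ≤ 0 := H.G_le_zero le_rfl
  rcases le_or_gt x 0 with h | h
  · rw [H.G_nonpos x h]; exact hGb
  rcases le_or_gt x b with h' | h'
  · exact anti_of (f := G) (f' := g) h' H.Gcont.continuousOn (fun t _ => H.derG t)
      (fun t ht => (H.g_neg t ⟨h.trans ht.1, ht.2⟩).le)
  · exact (H.G_strict le_rfl h' hx).le

lemma zero_of (H : Nice g dg G L b c δ m) {x : ℝ} (h0 : 0 ≤ x) (hx : x < c) (hg : g x = 0) :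
    x = 0 ∨ x = b := by
  rcases h0.eq_or_lt with h | h
  · exact Or.inl h.symm
  rcases lt_trichotomy x b with h' | h' | h'
  · exact absurd hg (H.g_neg x ⟨h, h'⟩).ne
  · exact Or.inr h'
  · exact absurd hg (H.g_pos x ⟨h', hx⟩).ne'

lemma g_anti (H : Nice g dg G L b c δ m) {x y : ℝ} (hx : 0 ≤ x) (hxy : x < y) (hy : y ≤ δ) :
    g y < g x := by
  have hδc : δ < c := H.hδb.trans H.hbc
  exact santi_of (f := g) (f' := dg) hxy H.gcont.continuousOn
    (fun t ht => H.derg t ⟨hx.trans_lt ht.1, (ht.2.trans_le hy).trans hδc⟩)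
    (fun t ht => H.dg_neg t ⟨hx.trans_lt ht.1, (ht.2.trans_le hy).le⟩)

lemma dg_abs (H : Nice g dg G L b c δ m) {x : ℝ} (hx : x ∈ Ioo 0 c) : |dg x| ≤ L := by
  have : LipschitzWith ⟨L, H.hL⟩ g := LipschitzWith.of_dist_le_mul fun x y => by
    rw [Real.dist_eq, Real.dist_eq]; exact H.lip x y
  have h2 := (H.derg x hx).le_of_lipschitz this
  rw [Real.norm_eq_abs] at h2
  exact h2

end Nice

/-! ### Solutions of the initial value problem -/

/-- `x` solves the radial problem with nonlinearity `g`. -/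
abbrev Sol (k : ℕ) (g x y : ℝ → ℝ) : Prop := Rad k (fun r => g (x r)) x y

/-- The energy. -/
noncomputable def En (G x y : ℝ → ℝ) (r : ℝ) : ℝ := y r ^ 2 / 2 + G (x r)

section
variable {g dg G : ℝ → ℝ} {L b c δ m : ℝ} {k : ℕ} {x y x₁ y₁ x₂ y₂ : ℝ → ℝ}

lemma sol_close (H : Nice g dg G L b c δ m) (h₁ : Sol k g x₁ y₁) (h₂ : Sol k g x₂ y₂)
    {r : ℝ} (hr : 0 ≤ r) :
    (x₁ r - x₂ r) ^ 2 + (y₁ r - y₂ r) ^ 2 ≤ Real.exp ((L + 2) * r) * (x₁ 0 - x₂ 0) ^ 2 := by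
  have := (h₁.sub h₂).stab (L := L) (η := 0) (R := r) H.hL
    (fun t _ => by simpa using H.lip _ _) ⟨hr, le_rfl⟩
  simpa using this

lemma sol_unique (H : Nice g dg G L b c δ m) (h₁ : Sol k g x₁ y₁) (h₂ : Sol k g x₂ y₂)
    (h0 : x₁ 0 = x₂ 0) {r : ℝ} (hr : 0 ≤ r) : x₁ r = x₂ r ∧ y₁ r = y₂ r := by
  have := sol_close H h₁ h₂ hr
  simp only [h0, sub_self] at this
  have h1 : (x₁ r - x₂ r) ^ 2 = 0 := by nlinarith [sq_nonneg (x₁ r - x₂ r), sq_nonneg (y₁ r - y₂ r)]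
  have h2 : (y₁ r - y₂ r) ^ 2 = 0 := by nlinarith [sq_nonneg (x₁ r - x₂ r), sq_nonneg (y₁ r - y₂ r)]
  constructor
  · have := pow_eq_zero_iff (two_ne_zero) |>.1 h1; linarith
  · have := pow_eq_zero_iff (two_ne_zero) |>.1 h2; linarith

lemma En_deriv (H : Nice g dg G L b c δ m) (h : Sol k g x y) {r : ℝ} (hr : 0 < r) :
    HasDerivAt (En G x y) (-(k / r) * y r ^ 2) r := by
  have h1 := ((h.dy r hr).pow 2).div_const 2
  have h2 := (H.derG (x r)).comp r (h.dx r hr)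
  have := h1.add h2
  refine this.congr_deriv ?_
  simp; ring

lemma En_cont (H : Nice g dg G L b c δ m) (h : Sol k g x y) : ContinuousOn (En G x y) (Ici 0) :=
  ((h.cy.pow 2).div_const 2).add (H.Gcont.comp_continuousOn h.cx)

lemma En_anti (H : Nice g dg G L b c δ m) (h : Sol k g x y) {r s : ℝ} (hr : 0 ≤ r) (hrs : r ≤ s) :
    En G x y s ≤ En G x y r :=
  anti_of (f := En G x y) (f' := fun r => -(k / r) * y r ^ 2) hrs
    ((En_cont H h).mono fun _ ht => hr.trans ht.1)
    (fun t ht => En_deriv H h (hr.trans_lt ht.1))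
    (fun t ht => by
      have := hr.trans_lt ht.1
      have : 0 ≤ (k / t) * y t ^ 2 := by positivity
      linarith)

lemma En_zero (h : Sol k g x y) : En G x y 0 = G (x 0) := by simp [En, h.y0]

lemma sol_lt_c (H : Nice g dg G L b c δ m) (h : Sol k g x y) (h0 : x 0 < c) {r : ℝ} (hr : 0 ≤ r) :
    x r < c := by
  by_contra hc
  push Not at hc
  obtain ⟨s, hs, hs'⟩ := intermediate_value_Icc hr (h.cx' le_rfl) (show c ∈ Icc (x 0) (x r) from
    ⟨h0.le, hc⟩)
  have h1 := En_anti H h le_rfl hs.1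
  rw [En_zero h] at h1
  have h2 := H.G_lt h0
  have : G c ≤ En G x y s := by simp only [En, hs']; nlinarith [sq_nonneg (y s)]
  linarith

/-- As long as the solution is in `(b,c)` it decreases. -/
lemma sol_y_neg (h : Sol k g x y) {r : ℝ} (hr : 0 < r) (H : Nice g dg G L b c δ m)
    (hx : ∀ t ∈ Ioo 0 r, x t ∈ Ioo b c) : y r < 0 := by
  have := santi_of (f := fun r => r ^ k * y r) (f' := fun r => -(r ^ k * g (x r))) hr
    (h.cflux le_rfl) (fun t ht => h.flux ht.1) (fun t ht => by
      have h1 := H.g_pos _ (hx t ht)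
      have h2 : 0 < t ^ k := pow_pos ht.1 k
      have := mul_pos h2 h1
      linarith)
  simp only [h.flux0] at this
  have h2 : 0 < r ^ k := pow_pos hr k
  by_contra hc
  push Not at hc
  have := mul_nonneg h2.le hc
  linarith

lemma sol_anti (h : Sol k g x y) {r s : ℝ} (hr : 0 ≤ r) (hrs : r ≤ s)
    (hy : ∀ t ∈ Ioo r s, y t ≤ 0) : x s ≤ x r :=
  anti_of (f := x) (f' := y) hrs (h.cx' hr) (fun t ht => h.dx t (hr.trans_lt ht.1)) hy

lemma sol_santi (h : Sol k g x y) {r s : ℝ} (hr : 0 ≤ r) (hrs : r < s)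
    (hy : ∀ t ∈ Ioo r s, y t < 0) : x s < x r :=
  santi_of (f := x) (f' := y) hrs (h.cx' hr) (fun t ht => h.dx t (hr.trans_lt ht.1)) hy

/-- If `x 0 ∈ (b,c)` then `y < 0` near `0`. -/
lemma sol_start (H : Nice g dg G L b c δ m) (h : Sol k g x y) (hb : b < x 0) (hc : x 0 < c) :
    ∃ ε > 0, ∀ r ∈ Ioc 0 ε, y r < 0 := by
  have h1 : ∀ᶠ r in 𝓝[≥] 0, b < x r := (h.cx 0 (by simp)).eventually (lt_mem_nhds hb)
  obtain ⟨ε, hε, hε'⟩ := (mem_nhdsGE_iff_exists_Ico_subset).1 h1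
  refine ⟨ε, hε, fun r hr => sol_y_neg h hr.1 H fun t ht => ⟨?_, sol_lt_c H h hc ht.1.le⟩⟩
  exact hε' ⟨ht.1.le, ht.2.trans_le hr.2⟩

/-- Strict decrease criterion: if every critical point (after a decreasing phase) lies above `b`,
then the solution keeps decreasing. -/
lemma sol_dec (H : Nice g dg G L b c δ m) (h : Sol k g x y) (hb : b < x 0) (hc : x 0 < c) {R : ℝ}
    (hcrit : ∀ r ∈ Ioc 0 R, y r = 0 → (∀ t ∈ Ioo 0 r, y t < 0) → b < x r) {r : ℝ}
    (hr : r ∈ Ioc 0 R) : y r < 0 := by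
  obtain ⟨ε, hε, hy⟩ := sol_start H h hb hc
  by_contra hcon
  push Not at hcon
  have her : ε < r := by
    by_contra h'
    push Not at h'
    have := hy r ⟨hr.1, h'⟩
    linarith
  obtain ⟨s, hs, hs0, hs'⟩ := first_zero her.le (h.cy' hε.le) (hy ε ⟨hε, le_rfl⟩) hcon
  have hs1 : 0 < s := hε.trans hs.1
  have hneg : ∀ t ∈ Ioo 0 s, y t < 0 := by
    intro t ht
    rcases le_or_gt t ε with h' | h'
    · exact hy t ⟨ht.1, h'⟩
    · exact hs' t ⟨h'.le, ht.2⟩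
  have hxs := hcrit s ⟨hs1, hs.2.trans hr.2⟩ hs0 hneg
  have := sol_y_neg h hs1 H fun t ht => ⟨hxs.trans_le
    (sol_anti h ht.1.le ht.2.le fun u hu => (hneg u ⟨ht.1.trans hu.1, hu.2⟩).le),
    sol_lt_c H h hc ht.1.le⟩
  linarith

/-- A nonnegative solution is positive. -/
lemma sol_pos (H : Nice g dg G L b c δ m) (h : Sol k g x y) (h0 : 0 < x 0)
    (hx : ∀ r, 0 ≤ r → 0 ≤ x r) {r : ℝ} (hr : 0 ≤ r) : 0 < x r := by
  rcases (hx r hr).lt_or_eq with h1 | h1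
  · exact h1
  exfalso
  have hr0 : 0 < r := by
    rcases hr.lt_or_eq with h2 | h2
    · exact h2
    · rw [← h2] at h1; linarith
  have hmin : IsLocalMin x r := by
    filter_upwards [lt_mem_nhds hr0] with t ht
    rw [← h1]; exact hx t ht.le
  have hy := hmin.hasDerivAt_eq_zero (h.dx r hr0)
  have := h.backward H.hL hr0 (fun t _ => H.g_abs _) h1.symm hy
  linarith

/-- Global decreasing solutions converge to `0` or `b`. -/
lemma sol_limit (H : Nice g dg G L b c δ m) (h : Sol k g x y) (hc : x 0 < c)
    (hx : ∀ r, 0 ≤ r → 0 ≤ x r) (hy : ∀ r, 0 < r → y r < 0) :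
    ∃ l, (l = 0 ∨ l = b) ∧ Tendsto x atTop (𝓝 l) ∧ Tendsto y atTop (𝓝 0) := by
  have hanti : ∀ r s, 0 ≤ r → r ≤ s → x s ≤ x r := fun r s hr hrs =>
    sol_anti h hr hrs fun t ht => (hy t (hr.trans_lt ht.1)).le
  -- convergence of monotone functions
  have conv : ∀ (z : ℝ → ℝ) (B : ℝ), (∀ r s, 0 ≤ r → r ≤ s → z s ≤ z r) → (∀ r, 0 ≤ r → B ≤ z r) →
      ∃ l, Tendsto z atTop (𝓝 l) := by
    intro z B hz hB
    have h1 : Antitone (fun r => z (max r 0)) := fun r s hrs =>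
      hz _ _ (le_max_right _ _) (max_le_max_right 0 hrs)
    have h2 : BddBelow (range (fun r => z (max r 0))) := ⟨B, by
      rintro _ ⟨r, rfl⟩; exact hB _ (le_max_right _ _)⟩
    refine ⟨_, (tendsto_atTop_ciInf h1 h2).congr' ?_⟩
    filter_upwards [eventually_ge_atTop 0] with r hr
    rw [max_eq_left hr]
  obtain ⟨l, hl⟩ := conv x 0 hanti hx
  obtain ⟨e, he⟩ := conv (En G x y) (G b) (fun r s hr hrs => En_anti H h hr hrs) (fun r hr => by
    have := H.G_lower (sol_lt_c H h hc hr).le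
    simp only [En]; nlinarith [sq_nonneg (y r)])
  have hG : Tendsto (fun r => G (x r)) atTop (𝓝 (G l)) := (H.Gcont.tendsto l).comp hl
  have hy2 : Tendsto (fun r => y r ^ 2) atTop (𝓝 (2 * (e - G l))) := by
    refine ((he.sub hG).const_mul 2).congr fun r => ?_
    simp only [En]; ring
  have hyl : Tendsto y atTop (𝓝 (-√(2 * (e - G l)))) := by
    refine ((Real.continuous_sqrt.tendsto _).comp hy2).neg.congr' ?_
    filter_upwards [eventually_gt_atTop 0] with r hr
    simp only [Function.comp]
    rw [Real.sqrt_sq_eq_abs, abs_of_neg (hy r hr), neg_neg]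
  have hz := deriv_lim_zero h.dx hl hyl
  rw [hz] at hyl
  have hd : Tendsto (fun r => -(k / r) * y r - g (x r)) atTop (𝓝 (-0 * 0 - g l)) := by
    have h1 : Tendsto (fun r : ℝ => (k:ℝ) / r) atTop (𝓝 0) := tendsto_const_nhds.div_atTop tendsto_id
    exact (h1.neg.mul hyl).sub ((H.gcont.tendsto l).comp hl)
  have hz2 := deriv_lim_zero h.dy hyl hd
  have hl0 : 0 ≤ l := ge_of_tendsto hl (by
    filter_upwards [eventually_ge_atTop 0] with r hr using hx r hr)
  have hlc : l < c := lt_of_le_of_lt (le_of_tendsto hl (by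
    filter_upwards [eventually_ge_atTop 0] with r hr using hanti 0 r le_rfl hr)) hc
  exact ⟨l, H.zero_of hl0 hlc (by linarith), hl, hyl⟩

end

open Filter Set Topology

/-! ### Shooting: the sets `N` and `P`, ground states, existence -/

/-- Initial values whose solutions become negative. -/
def SN (U : ℝ → ℝ → ℝ) : Set ℝ := {α | ∃ r, 0 ≤ r ∧ U α r < 0}

/-- Initial values whose solutions reach negative energy while positive. -/
def SP (G : ℝ → ℝ) (U V : ℝ → ℝ → ℝ) : Set ℝ :=
  {α | ∃ r, 0 ≤ r ∧ En G (U α) (V α) r < 0 ∧ ∀ s ∈ Icc 0 r, 0 < U α s}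

/-- Ground states. -/
structure GS (c : ℝ) (x y : ℝ → ℝ) : Prop where
  lt_c : x 0 < c
  pos : ∀ r, 0 ≤ r → 0 < x r
  neg : ∀ r, 0 < r → y r < 0
  lx : Tendsto x atTop (𝓝 0)
  ly : Tendsto y atTop (𝓝 0)

section
variable {g dg G : ℝ → ℝ} {L b c δ m : ℝ} {k : ℕ} {x y : ℝ → ℝ} {U V : ℝ → ℝ → ℝ} {α : ℝ}

lemma N_P_disj (H : Nice g dg G L b c δ m) (hU : ∀ α, Sol k g (U α) (V α)) (hN : α ∈ SN U) :
    α ∉ SP G U V := by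
  rintro ⟨r, hr, hE, hpos⟩
  obtain ⟨s, hs, hneg⟩ := hN
  rcases le_or_gt s r with h | h
  · have := hpos s ⟨hs, h⟩; linarith
  · have h1 := En_anti H (hU α) hr h.le
    have h2 : 0 ≤ En G (U α) (V α) s := by
      simp only [En, H.G_nonpos _ hneg.le]; positivity
    linarith

lemma b_lt_of_not_P (H : Nice g dg G L b c δ m) (hU : ∀ α, Sol k g (U α) (V α))
    (hU0 : ∀ α, U α 0 = α) (h0 : 0 < α) (hP : α ∉ SP G U V) : b < α := by
  by_contra hb
  push Not at hb
  refine hP ⟨0, le_rfl, ?_, fun s hs => ?_⟩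
  · rw [En_zero (hU α), hU0]; exact H.G_neg ⟨h0, hb⟩
  · have : s = 0 := le_antisymm hs.2 hs.1
    rw [this, hU0]; exact h0

lemma V_neg_of_not_P (H : Nice g dg G L b c δ m) (hU : ∀ α, Sol k g (U α) (V α))
    (hU0 : ∀ α, U α 0 = α) (h0 : 0 < α) (hc : α < c) (hP : α ∉ SP G U V) {r : ℝ} (hr : 0 < r)
    (hpos : ∀ s ∈ Icc 0 r, 0 < U α s) : V α r < 0 := by
  have hb := b_lt_of_not_P H hU hU0 h0 hP
  refine sol_dec H (hU α) (by rwa [hU0]) (by rwa [hU0]) (R := r) ?_ ⟨hr, le_rfl⟩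
  intro s hs hs0 _
  by_contra hcon
  push Not at hcon
  refine hP ⟨s, hs.1.le, ?_, fun t ht => hpos t ⟨ht.1, ht.2.trans hs.2⟩⟩
  simp only [En, hs0]
  have := H.G_neg ⟨hpos s ⟨hs.1.le, hs.2⟩, hcon⟩
  simpa using this

lemma pos_of_not_N (H : Nice g dg G L b c δ m) (hU : ∀ α, Sol k g (U α) (V α))
    (hU0 : ∀ α, U α 0 = α) (h0 : 0 < α) (hN : α ∉ SN U) {r : ℝ} (hr : 0 ≤ r) : 0 < U α r := by
  refine sol_pos H (hU α) (by rwa [hU0]) (fun s hs => ?_) hr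
  by_contra hcon
  push Not at hcon
  exact hN ⟨s, hs, hcon⟩

lemma En_lim (H : Nice g dg G L b c δ m) {l : ℝ} (hl : Tendsto x atTop (𝓝 l))
    (hy : Tendsto y atTop (𝓝 0)) : Tendsto (En G x y) atTop (𝓝 (G l)) := by
  have := ((hy.pow 2).div_const 2).add ((H.Gcont.tendsto l).comp hl)
  simp [Function.comp_def] at this
  exact this

lemma GS_of (H : Nice g dg G L b c δ m) (hU : ∀ α, Sol k g (U α) (V α))
    (hU0 : ∀ α, U α 0 = α) (h0 : 0 < α) (hc : α < c) (hN : α ∉ SN U) (hP : α ∉ SP G U V) :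
    GS c (U α) (V α) := by
  have hpos : ∀ r, 0 ≤ r → 0 < U α r := fun r hr => pos_of_not_N H hU hU0 h0 hN hr
  have hneg : ∀ r, 0 < r → V α r < 0 := fun r hr =>
    V_neg_of_not_P H hU hU0 h0 hc hP hr fun s hs => hpos s hs.1
  obtain ⟨l, hl, hx, hy⟩ := sol_limit H (hU α) (by rwa [hU0]) (fun r hr => (hpos r hr).le) hneg
  have hE := En_lim H hx hy
  have hE0 : 0 ≤ G l := ge_of_tendsto hE (by
    filter_upwards [eventually_ge_atTop 0] with r hr
    by_contra hcon
    push Not at hcon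
    exact hP ⟨r, hr, hcon, fun s hs => hpos s hs.1⟩)
  rcases hl with rfl | rfl
  · exact ⟨by rwa [hU0], hpos, hneg, hx, hy⟩
  · have := H.G_neg ⟨H.hb, le_rfl⟩
    linarith

lemma U_cont (H : Nice g dg G L b c δ m) (hU : ∀ α, Sol k g (U α) (V α))
    (hU0 : ∀ α, U α 0 = α) {R : ℝ} {β : ℝ} {r : ℝ} (hr : r ∈ Icc 0 R) :
    |U β r - U α r| ≤ Real.exp ((L + 2) * R) * |β - α| ∧
      |V β r - V α r| ≤ Real.exp ((L + 2) * R) * |β - α| := by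
  have h1 := sol_close H (hU β) (hU α) hr.1
  rw [hU0, hU0] at h1
  have hL := H.hL
  have h2 : Real.exp ((L + 2) * r) ≤ Real.exp ((L + 2) * R) ^ 2 := by
    have h3 : Real.exp ((L + 2) * r) ≤ Real.exp ((L + 2) * R) := by
      gcongr; exact hr.2
    have h4 : 1 ≤ Real.exp ((L + 2) * R) :=
      Real.one_le_exp (mul_nonneg (by positivity) (hr.1.trans hr.2))
    nlinarith
  have h3 : (U β r - U α r) ^ 2 + (V β r - V α r) ^ 2 ≤ (Real.exp ((L + 2) * R) * |β - α|) ^ 2 := by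
    rw [mul_pow, sq_abs]
    nlinarith [sq_nonneg (β - α)]
  constructor
  · exact abs_le_of_sq_le_sq (by nlinarith [sq_nonneg (V β r - V α r)]) (by positivity)
  · exact abs_le_of_sq_le_sq (by nlinarith [sq_nonneg (U β r - U α r)]) (by positivity)

lemma U_tendsto (H : Nice g dg G L b c δ m) (hU : ∀ α, Sol k g (U α) (V α))
    (hU0 : ∀ α, U α 0 = α) {r : ℝ} (hr : 0 ≤ r) (α : ℝ) :
    Tendsto (fun β => U β r) (𝓝 α) (𝓝 (U α r)) ∧ Tendsto (fun β => V β r) (𝓝 α) (𝓝 (V α r)) := by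
  have h0 : Tendsto (fun β => Real.exp ((L + 2) * r) * |β - α|) (𝓝 α) (𝓝 0) := by
    have : Continuous (fun β => Real.exp ((L + 2) * r) * |β - α|) := by fun_prop
    simpa using this.tendsto α
  constructor
  · refine tendsto_iff_norm_sub_tendsto_zero.2 (squeeze_zero (fun _ => norm_nonneg _) (fun β => ?_) h0)
    exact (U_cont H hU hU0 ⟨hr, le_rfl⟩).1
  · refine tendsto_iff_norm_sub_tendsto_zero.2 (squeeze_zero (fun _ => norm_nonneg _) (fun β => ?_) h0)
    exact (U_cont H hU hU0 ⟨hr, le_rfl⟩).2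

lemma U_pos_nhds (H : Nice g dg G L b c δ m) (hU : ∀ α, Sol k g (U α) (V α))
    (hU0 : ∀ α, U α 0 = α) {r : ℝ} (hr : 0 ≤ r) {B : ℝ} (hB : ∀ s ∈ Icc 0 r, B < U α s) :
    ∀ᶠ β in 𝓝 α, ∀ s ∈ Icc 0 r, B < U β s := by
  obtain ⟨s₀, hs₀, hmin⟩ := isCompact_Icc.exists_isMinOn (nonempty_Icc.2 hr) ((hU α).cx' (b := r) le_rfl)
  have h0 : Tendsto (fun β => Real.exp ((L + 2) * r) * |β - α|) (𝓝 α) (𝓝 0) := by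
    have : Continuous (fun β => Real.exp ((L + 2) * r) * |β - α|) := by fun_prop
    simpa using this.tendsto α
  have h1 : 0 < U α s₀ - B := sub_pos.2 (hB s₀ hs₀)
  filter_upwards [h0.eventually (gt_mem_nhds h1)] with β hβ s hs
  have h2 := (abs_le.1 (U_cont H hU hU0 (β := β) (α := α) hs).1).1
  have h3 : U α s₀ ≤ U α s := hmin hs
  linarith

lemma N_open (H : Nice g dg G L b c δ m) (hU : ∀ α, Sol k g (U α) (V α))
    (hU0 : ∀ α, U α 0 = α) : IsOpen (SN U) := by
  rw [isOpen_iff_mem_nhds]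
  rintro α ⟨r, hr, hneg⟩
  filter_upwards [(U_tendsto H hU hU0 hr α).1.eventually (gt_mem_nhds hneg)] with β hβ
  exact ⟨r, hr, hβ⟩

lemma P_open (H : Nice g dg G L b c δ m) (hU : ∀ α, Sol k g (U α) (V α))
    (hU0 : ∀ α, U α 0 = α) : IsOpen (SP G U V) := by
  rw [isOpen_iff_mem_nhds]
  rintro α ⟨r, hr, hE, hpos⟩
  have h1 := U_tendsto H hU hU0 hr α
  have h2 : Tendsto (fun β => En G (U β) (V β) r) (𝓝 α) (𝓝 (En G (U α) (V α) r)) :=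
    ((h1.2.pow 2).div_const 2).add ((H.Gcont.tendsto _).comp h1.1)
  filter_upwards [h2.eventually (gt_mem_nhds hE), U_pos_nhds H hU hU0 hr hpos] with β hβ hβ2
  exact ⟨r, hr, hβ, hβ2⟩

lemma P_b (H : Nice g dg G L b c δ m) (hU : ∀ α, Sol k g (U α) (V α))
    (hU0 : ∀ α, U α 0 = α) : b ∈ SP G U V := by
  by_contra h
  exact lt_irrefl _ (b_lt_of_not_P H hU hU0 H.hb h)

lemma N_nonempty (H : Nice g dg G L b c δ m) (hU : ∀ α, Sol k g (U α) (V α))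
    (hU0 : ∀ α, U α 0 = α) : ∃ α, b < α ∧ α < c ∧ α ∈ SN U := by
  -- a level `γ` with positive energy
  obtain ⟨γ, hγb, hγc, hγ⟩ : ∃ γ, b < γ ∧ γ < c ∧ 0 < G γ := by
    have h1 : ∀ᶠ z in 𝓝[<] c, 0 < G z :=
      (H.Gcont.tendsto c).mono_left nhdsWithin_le_nhds |>.eventually (lt_mem_nhds H.G_c)
    have h2 : ∀ᶠ z in 𝓝[<] c, z ∈ Ioo b c := Ioo_mem_nhdsLT H.hbc
    obtain ⟨z, hz, hz'⟩ := (h1.and h2).exists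
    exact ⟨z, hz'.1, hz'.2, hz⟩
  set B := √(2 * (G c - G b)) with hB
  have hBnn : 0 ≤ B := Real.sqrt_nonneg _
  have hc0 := H.hc
  -- a large radius
  obtain ⟨R, hR0, hR⟩ : ∃ R : ℝ, 0 < R ∧ k * B * c / R < G γ := by
    refine ⟨k * B * c / G γ + 1, by positivity, ?_⟩
    rw [div_lt_iff₀ (by positivity), mul_add, mul_div_cancel₀ _ hγ.ne']
    linarith
  -- the constant solution
  have hconst : Sol k g (fun _ => c) (fun _ => 0) :=
    ⟨continuousOn_const, continuousOn_const, rfl, fun r _ => hasDerivAt_const r c,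
      fun r _ => (hasDerivAt_const r (0:ℝ)).congr_deriv (by simp [H.g_c])⟩
  have hUc : ∀ s, 0 ≤ s → U c s = c := fun s hs =>
    (sol_unique H (hU c) hconst (hU0 c) hs).1
  have hev := U_pos_nhds H hU hU0 hR0.le (α := c) (B := γ) (fun s hs => by rw [hUc s hs.1]; exact hγc)
  have hev2 : ∀ᶠ α in 𝓝[<] c, α ∈ Ioo b c := Ioo_mem_nhdsLT H.hbc
  obtain ⟨α, hα1, hα2⟩ := ((hev.filter_mono nhdsWithin_le_nhds).and hev2).exists
  refine ⟨α, hα2.1, hα2.2, ?_⟩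
  by_contra hN
  have hα0 : 0 < α := H.hb.trans hα2.1
  have h := hU α
  have hx0 : U α 0 = α := hU0 α
  have hxc : U α 0 < c := by rw [hx0]; exact hα2.2
  have hpos : ∀ r, 0 ≤ r → 0 < U α r := fun r hr => pos_of_not_N H hU hU0 hα0 hN hr
  have hyB : ∀ r, 0 ≤ r → |V α r| ≤ B := by
    intro r hr
    have h1 := En_anti H h le_rfl hr
    rw [En_zero h] at h1
    have h2 := H.G_lower (sol_lt_c H h hxc hr).le
    have h3 := H.G_lt hxc
    simp only [En] at h1
    rw [hB]
    apply Real.abs_le_sqrt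
    linarith
  have hyR : ∀ r ∈ Ioc 0 R, V α r < 0 := fun r hr => sol_y_neg h hr.1 H fun t ht =>
    ⟨hγb.trans (hα1 t ⟨ht.1.le, ht.2.le.trans hr.2⟩), sol_lt_c H h hxc ht.1.le⟩
  have hER : G γ < En G (U α) (V α) R := by
    have := H.G_strict hγb.le (hα1 R ⟨hR0.le, le_rfl⟩) (sol_lt_c H h hxc hR0.le).le
    simp only [En]; nlinarith [sq_nonneg (V α R)]
  set e := G γ - k * B * c / R with he
  have he0 : 0 < e := by linarith
  have hElow : ∀ r, R ≤ r → (∀ t ∈ Ioo 0 r, V α t < 0) → e ≤ En G (U α) (V α) r := by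
    intro r hr hneg
    have key := mono_of (f := fun t => En G (U α) (V α) t - k * B / R * U α t)
      (f' := fun t => -(k / t) * V α t ^ 2 - k * B / R * V α t) hr ?_ ?_ ?_
    · have h1 := sol_lt_c H h hxc hR0.le
      have h2 := hpos r (hR0.le.trans hr)
      have h3 : k * B / R * U α R ≤ k * B / R * c := by gcongr
      have h4 : 0 ≤ k * B / R * U α r := by positivity
      have h5 : k * B / R * c = k * B * c / R := by ring
      linarith
    · exact ((En_cont H h).mono fun _ ht => hR0.le.trans ht.1).sub
        (continuousOn_const.mul (h.cx' hR0.le))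
    · intro t ht
      have ht0 : 0 < t := hR0.trans ht.1
      exact (En_deriv H h ht0).sub ((h.dx t ht0).const_mul _)
    · intro t ht
      have ht0 : 0 < t := hR0.trans ht.1
      have h1 := hneg t ⟨ht0, ht.2⟩
      have h2 := hyB t ht0.le
      rw [abs_of_neg h1] at h2
      have h3 : (k:ℝ) / t ≤ k / R := by gcongr; exact ht.1.le
      have h4 : V α t ^ 2 ≤ B * (-V α t) := by nlinarith
      have h5 : k / t * V α t ^ 2 ≤ k / R * (B * (-V α t)) := by
        apply mul_le_mul h3 h4 (sq_nonneg _); positivity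
      have h6 : k * B / R * V α t = -(k / R * (B * (-V α t))) := by ring
      rw [h6]; linarith
  have hneg : ∀ r, 0 < r → V α r < 0 := by
    intro r hr
    refine sol_dec H h (by rw [hx0]; exact hα2.1) hxc (R := r) ?_ ⟨hr, le_rfl⟩
    intro s hs hs0 hsneg
    by_contra hcon
    push Not at hcon
    have hRs : R ≤ s := by
      by_contra h'
      push Not at h'
      have := hyR s ⟨hs.1, h'.le⟩
      linarith
    have h1 := hElow s hRs hsneg
    simp only [En, hs0] at h1
    have h2 := H.G_le_zero hcon
    norm_num at h1
    linarith
  obtain ⟨l, hl, hx, hy⟩ := sol_limit H h hxc (fun r hr => (hpos r hr).le) hneg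
  have hE := En_lim H hx hy
  have : e ≤ G l := ge_of_tendsto hE (by
    filter_upwards [eventually_ge_atTop R] with r hr
    exact hElow r hr fun t ht => hneg t ht.1)
  have h2 : G l ≤ 0 := H.G_le_zero (by rcases hl with rfl | rfl; exacts [H.hb.le, le_rfl])
  linarith

lemma GS_exists (H : Nice g dg G L b c δ m) (hU : ∀ α, Sol k g (U α) (V α))
    (hU0 : ∀ α, U α 0 = α) : ∃ α, 0 < α ∧ GS c (U α) (V α) := by
  obtain ⟨α, hα1, hα2, hαN⟩ := N_nonempty H hU hU0
  have hpre : IsPreconnected (Ioo 0 c) := isPreconnected_Ioo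
  by_contra hcon
  push Not at hcon
  have := hpre (SN U) (SP G U V) (N_open H hU hU0) (P_open H hU hU0) (fun β hβ => by
    by_contra h'
    simp only [mem_union, not_or] at h'
    exact hcon β hβ.1 (GS_of H hU hU0 hβ.1 hβ.2 h'.1 h'.2))
    ⟨α, ⟨H.hb.trans hα1, hα2⟩, hαN⟩ ⟨b, ⟨H.hb, H.hbc⟩, P_b H hU hU0⟩
  obtain ⟨β, _, hβ1, hβ2⟩ := this
  exact N_P_disj H hU hβ1 hβ2

lemma GS_not_N (h : GS c (U α) (V α)) : α ∉ SN U := by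
  rintro ⟨r, hr, hneg⟩
  have := h.pos r hr
  linarith

end

open Filter Set Topology

/-! ### Properties of ground states -/

lemma pow_mul_exp_lim (j : ℕ) {m : ℝ} (hm : 0 < m) :
    Tendsto (fun r : ℝ => r ^ j * Real.exp (-(m * r))) atTop (𝓝 0) := by
  have h1 : Tendsto (fun r : ℝ => m * r) atTop atTop := tendsto_id.const_mul_atTop hm
  have h2 := ((Real.tendsto_pow_mul_exp_neg_atTop_nhds_zero j).comp h1).const_mul ((m ^ j)⁻¹)
  rw [mul_zero] at h2
  refine h2.congr fun r => ?_
  simp only [Function.comp, mul_pow]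
  field_simp

section
variable {g dg G : ℝ → ℝ} {L b c δ m : ℝ} {k : ℕ} {x y : ℝ → ℝ}

lemma GS.mem (H : Nice g dg G L b c δ m) (h : Sol k g x y) (hg : GS c x y) {r : ℝ} (hr : 0 ≤ r) :
    x r ∈ Ioo 0 c := ⟨hg.pos r hr, sol_lt_c H h hg.lt_c hr⟩

lemma GS.anti (h : Sol k g x y) (hg : GS c x y) {r s : ℝ} (hr : 0 ≤ r) (hrs : r < s) : x s < x r :=
  sol_santi h hr hrs fun t ht => hg.neg t (hr.trans_lt ht.1)

lemma GS.En_nonneg (H : Nice g dg G L b c δ m) (h : Sol k g x y) (hg : GS c x y) {r : ℝ}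
    (hr : 0 ≤ r) : 0 ≤ En G x y r := by
  have h1 := En_lim H hg.lx hg.ly
  rw [H.G0] at h1
  refine le_of_tendsto h1 ?_
  filter_upwards [eventually_ge_atTop r] with s hs
  exact En_anti H h hr hs

lemma GS.b_lt (H : Nice g dg G L b c δ m) (h : Sol k g x y) (hg : GS c x y) : b < x 0 := by
  have h1 := GS.En_nonneg H h hg le_rfl
  rw [En_zero h] at h1
  by_contra hc
  push Not at hc
  have := H.G_neg ⟨hg.pos 0 le_rfl, hc⟩
  linarith

lemma GS.small (h : Sol k g x y) (hg : GS c x y) (hδ : 0 < δ) :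
    ∃ R, 0 < R ∧ ∀ r, R ≤ r → x r < δ := by
  have h1 : ∀ᶠ r in atTop, x r < δ := hg.lx.eventually (gt_mem_nhds hδ)
  obtain ⟨R, hR⟩ := (h1.and (eventually_gt_atTop 0)).exists
  refine ⟨R, hR.2, fun r hr => ?_⟩
  rcases hr.eq_or_lt with rfl | hr
  · exact hR.1
  · exact (GS.anti h hg hR.2.le hr).trans hR.1

/-- Exponential decay of ground states. -/
lemma GS.decay (H : Nice g dg G L b c δ m) (h : Sol k g x y) (hg : GS c x y) :
    ∃ C R, 0 < C ∧ 0 < R ∧ ∀ r, R ≤ r → |x r| ≤ C * Real.exp (-(m * r)) ∧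
      |y r| ≤ C * Real.exp (-(m * r)) := by
  obtain ⟨R, hR0, hR⟩ := GS.small h hg H.hδ
  have hm := H.hm
  have hy : ∀ r, R ≤ r → y r ≤ -(m * x r) := by
    intro r hr
    have hr0 : 0 < r := hR0.trans_le hr
    have h1 := GS.En_nonneg H h hg hr0.le
    have hx := hg.pos r hr0.le
    have h2 := H.G_small (x r) ⟨hx, (hR r hr).le⟩
    have h3 := hg.neg r hr0
    simp only [En] at h1
    have h4 : (m * x r) ^ 2 ≤ (-y r) ^ 2 := by nlinarith
    have := abs_le_of_sq_le_sq h4 (by linarith)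
    have := (abs_le.1 this)
    have := le_abs_self (m * x r)
    linarith
  have hx : ∀ r, R ≤ r → x r ≤ (x R * Real.exp (m * R)) * Real.exp (-(m * r)) := by
    intro r hr
    have key := anti_of (f := fun t => x t * Real.exp (m * t))
      (f' := fun t => y t * Real.exp (m * t) + x t * (Real.exp (m * t) * m)) hr ?_ ?_ ?_
    · rw [Real.exp_neg, ← div_eq_mul_inv, le_div_iff₀ (Real.exp_pos _)]; exact key
    · have := h.cx' (b := r) hR0.le
      fun_prop
    · intro t ht
      have h1 : HasDerivAt (fun t => Real.exp (m * t)) (Real.exp (m * t) * m) t := by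
        have := ((hasDerivAt_id t).const_mul m).exp
        simpa using this
      exact (h.dx t (hR0.trans ht.1)).mul h1
    · intro t ht
      have := hy t ht.1.le
      have he := Real.exp_pos (m * t)
      nlinarith
  have hxR := hg.pos R hR0.le
  set C := x R * Real.exp (m * R) with hC
  have hC0 : 0 < C := by positivity
  have hem : 1 ≤ Real.exp m := Real.one_le_exp hm.le
  refine ⟨C * Real.exp m, R + 1, by positivity, by linarith, fun r hr => ⟨?_, ?_⟩⟩
  · rw [abs_of_pos (hg.pos r (by linarith))]
    refine (hx r (by linarith)).trans ?_
    gcongr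
    exact le_mul_of_one_le_right hC0.le hem
  · obtain ⟨s, hs, he⟩ := exists_hasDerivAt_eq_slope x y (show r - 1 < r by linarith)
      (h.cx' (by linarith)) (fun t ht => h.dx t (by linarith [ht.1]))
    have hs0 : 0 < s := by linarith [hs.1]
    have h1 := hx (r - 1) (by linarith)
    have h2 := hg.pos r (by linarith)
    have h3 : -y s ≤ C * Real.exp (-(m * (r - 1))) := by
      rw [he]; simp only [sub_sub_cancel, div_one]; linarith
    have h4 := mono_of (f := fun t => t ^ k * y t) (f' := fun t => -(t ^ k * g (x t))) hs.2.le
      (h.cflux hs0.le) (fun t ht => h.flux (hs0.trans ht.1)) (fun t ht => by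
        have ht0 := hs0.trans ht.1
        have h1 := H.g_neg (x t) ⟨hg.pos t ht0.le,
          (hR t (by linarith [hs.1, ht.1])).trans H.hδb⟩
        have h2 : 0 < t ^ k := pow_pos ht0 k
        nlinarith)
    have hys := hg.neg s hs0
    have hyr := hg.neg r (by linarith)
    have h5 : s ^ k ≤ r ^ k := by gcongr; exact hs.2.le
    have h6 : 0 < s ^ k := pow_pos hs0 k
    have h7 : -y r ≤ -y s := by
      have : r ^ k * (-y r) ≤ r ^ k * (-y s) := by
        nlinarith
      exact le_of_mul_le_mul_left this (by linarith)
    rw [abs_of_neg hyr]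
    have h8 : C * Real.exp (-(m * (r - 1))) = C * Real.exp m * Real.exp (-(m * r)) := by
      have h9 : Real.exp (-(m * (r - 1))) = Real.exp m * Real.exp (-(m * r)) := by
        rw [← Real.exp_add]; congr 1; ring
      rw [h9]; ring
    linarith

lemma GS.lim_x (H : Nice g dg G L b c δ m) (h : Sol k g x y) (hg : GS c x y) (j : ℕ) :
    Tendsto (fun r => r ^ j * x r) atTop (𝓝 0) ∧ Tendsto (fun r => r ^ j * y r) atTop (𝓝 0) := by
  obtain ⟨C, R, hC, hR, hd⟩ := GS.decay H h hg
  have h1 := (pow_mul_exp_lim j H.hm).const_mul C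
  rw [mul_zero] at h1
  constructor
  · refine squeeze_zero_norm' ?_ h1
    filter_upwards [eventually_ge_atTop R] with r hr
    have hr0 : 0 ≤ r := by linarith
    rw [Real.norm_eq_abs, abs_mul, abs_of_nonneg (pow_nonneg hr0 j)]
    have := mul_le_mul_of_nonneg_left (hd r hr).1 (pow_nonneg hr0 j)
    linarith
  · refine squeeze_zero_norm' ?_ h1
    filter_upwards [eventually_ge_atTop R] with r hr
    have hr0 : 0 ≤ r := by linarith
    rw [Real.norm_eq_abs, abs_mul, abs_of_nonneg (pow_nonneg hr0 j)]
    have := mul_le_mul_of_nonneg_left (hd r hr).2 (pow_nonneg hr0 j)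
    linarith

lemma GS.lim_g (H : Nice g dg G L b c δ m) (h : Sol k g x y) (hg : GS c x y) (j : ℕ) :
    Tendsto (fun r => r ^ j * g (x r)) atTop (𝓝 0) := by
  have h1 := ((GS.lim_x H h hg j).1.abs).const_mul L
  rw [abs_zero, mul_zero] at h1
  refine squeeze_zero_norm (fun r => ?_) h1
  rw [Real.norm_eq_abs, abs_mul, abs_mul]
  have := mul_le_mul_of_nonneg_left (H.g_abs (x r)) (abs_nonneg (r ^ j))
  linarith

lemma GS.lim_G (H : Nice g dg G L b c δ m) (h : Sol k g x y) (hg : GS c x y) (j : ℕ) :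
    Tendsto (fun r => r ^ j * G (x r)) atTop (𝓝 0) := by
  -- `0 ≤ En`, so `-y²/2 ≤ G ≤ 0` eventually
  have h1 := (((GS.lim_x H h hg j).2.mul hg.ly).div_const 2)
  simp only [mul_zero, zero_div] at h1
  obtain ⟨R, hR0, hR⟩ := GS.small h hg H.hδ
  refine squeeze_zero_norm' ?_ h1
  filter_upwards [eventually_ge_atTop R] with r hr
  have hr0 : 0 ≤ r := by linarith
  have h2 := GS.En_nonneg H h hg hr0
  have h3 := H.G_le_zero ((hR r hr).trans H.hδb).le
  simp only [En] at h2
  rw [Real.norm_eq_abs, abs_mul, abs_of_nonneg (pow_nonneg hr0 j), abs_of_nonpos h3]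
  have := mul_le_mul_of_nonneg_left (show -G (x r) ≤ y r ^ 2 / 2 by linarith) (pow_nonneg hr0 j)
  linarith

/-- The Pohozaev function. -/
noncomputable def Poh (k : ℕ) (G x y : ℝ → ℝ) (r : ℝ) : ℝ :=
  r ^ k * (r * (y r ^ 2 / 2 + G (x r)) + (k - 1) / 2 * (x r * y r))

lemma Poh_deriv (H : Nice g dg G L b c δ m) (h : Sol k g x y) {r : ℝ} (hr : 0 < r) :
    HasDerivAt (Poh k G x y) (r ^ k * ((k + 1) * G (x r) - (k - 1) / 2 * (x r * g (x r)))) r := by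
  have hx := h.dx r hr
  have hy := h.dy r hr
  have hG := (H.derG (x r)).comp r hx
  have := (hasDerivAt_pow_div k hr).mul (((hasDerivAt_id r).mul (((hy.pow 2).div_const 2).add hG)).add
    ((hx.mul hy).const_mul (((k:ℝ) - 1) / 2)))
  refine this.congr_deriv ?_
  simp
  field_simp
  ring

lemma Poh_cont (H : Nice g dg G L b c δ m) (h : Sol k g x y) : ContinuousOn (Poh k G x y) (Ici 0) := by
  have h1 := h.cx
  have h2 := h.cy
  have h3 := H.Gcont.comp_continuousOn h1
  simp only [Function.comp_def] at h3
  exact (continuous_pow k).continuousOn.mul ((continuousOn_id.mul (((h2.pow 2).div_const 2).add h3)).add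
    (continuousOn_const.mul (h1.mul h2)))

lemma Poh_zero (h : Sol k g x y) : Poh k G x y 0 = 0 := by simp [Poh, h.y0]

lemma Poh_lim (H : Nice g dg G L b c δ m) (h : Sol k g x y) (hg : GS c x y) :
    Tendsto (Poh k G x y) atTop (𝓝 0) := by
  have h1 := ((GS.lim_x H h hg (k + 1)).2.mul hg.ly).div_const 2
  have h2 := GS.lim_G H h hg (k + 1)
  have h3 := ((GS.lim_x H h hg k).1.mul hg.ly).const_mul (((k:ℝ) - 1) / 2)
  have h4 := (h1.add h2).add h3
  simp only [mul_zero, zero_div, add_zero] at h4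
  refine h4.congr fun r => ?_
  simp only [Poh]; ring

lemma Poh_pos (H : Nice g dg G L b c δ m) (h : Sol k g x y) (hg : GS c x y) {r : ℝ} (hr : 0 < r) :
    0 < Poh k G x y r := by
  rcases lt_or_ge 0 ((k + 1) * G (x r) - (k - 1) / 2 * (x r * g (x r))) with hQ | hQ
  · have := smono_of (f := Poh k G x y) hr ((Poh_cont H h).mono fun _ ht => ht.1)
      (fun t ht => Poh_deriv H h ht.1) (fun t ht => mul_pos (pow_pos ht.1 k)
        (H.crossQ k (x r) (x t) (hg.pos r hr.le) (GS.anti h hg ht.1.le ht.2)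
          (GS.mem H h hg ht.1.le).2 hQ.le))
    rwa [Poh_zero h] at this
  · have hdec : ∀ s t, r ≤ s → s < t → Poh k G x y t < Poh k G x y s := by
      intro s t hs hst
      refine santi_of (f := Poh k G x y) hst
        ((Poh_cont H h).mono fun _ ht => (hr.le.trans hs).trans ht.1)
        (fun u hu => Poh_deriv H h (hr.trans_le (hs.trans hu.1.le))) (fun u hu => ?_)
      have hu0 : 0 < u := hr.trans_le (hs.trans hu.1.le)
      refine mul_neg_of_pos_of_neg (pow_pos hu0 k) ?_
      by_contra hcon
      push Not at hcon
      have := H.crossQ k (x u) (x r) (hg.pos u hu0.le) (GS.anti h hg hr.le (hs.trans_lt hu.1))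
        (GS.mem H h hg hr.le).2 hcon
      linarith
    have h1 : 0 ≤ Poh k G x y (r + 1) := by
      refine le_of_tendsto (Poh_lim H h hg) ?_
      filter_upwards [eventually_gt_atTop (r + 1)] with s hs
      exact (hdec _ _ (by linarith) hs).le
    exact h1.trans_lt (hdec r (r + 1) le_rfl (by linarith))

/-- `J = r^k x² θ'` where `θ = - r x'/x`. -/
noncomputable def Jf (k : ℕ) (g x y : ℝ → ℝ) (r : ℝ) : ℝ :=
  r ^ k * (r * y r ^ 2 + r * (x r * g (x r)) + (k - 1) * (x r * y r))

lemma Jf_deriv (H : Nice g dg G L b c δ m) (h : Sol k g x y) (hg : GS c x y) {r : ℝ} (hr : 0 < r) :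
    HasDerivAt (Jf k g x y)
      (r ^ k * (2 * (x r * g (x r)) + r * y r * (x r * dg (x r) - g (x r)))) r := by
  have hx := h.dx r hr
  have hy := h.dy r hr
  have hG := (H.derg (x r) (GS.mem H h hg hr.le)).comp r hx
  have := (hasDerivAt_pow_div k hr).mul ((((hasDerivAt_id r).mul (hy.pow 2)).add
    ((hasDerivAt_id r).mul (hx.mul hG))).add ((hx.mul hy).const_mul ((k:ℝ) - 1)))
  refine this.congr_deriv ?_
  simp
  field_simp
  ring

lemma Jf_cont (H : Nice g dg G L b c δ m) (h : Sol k g x y) : ContinuousOn (Jf k g x y) (Ici 0) := by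
  have h1 := h.cx
  have h2 := h.cy
  have h3 := H.gcont.comp_continuousOn h1
  simp only [Function.comp_def] at h3
  exact (continuous_pow k).continuousOn.mul (((continuousOn_id.mul (h2.pow 2)).add
    (continuousOn_id.mul (h1.mul h3))).add (continuousOn_const.mul (h1.mul h2)))

lemma Jf_pos (H : Nice g dg G L b c δ m) (h : Sol k g x y) (hg : GS c x y) {r : ℝ} (hr : 0 < r) :
    0 < Jf k g x y r := by
  have hmem := GS.mem H h hg hr.le
  rcases H.dich (x r) hmem with h1 | h1
  · have h2 := Poh_pos H h hg hr
    have h3 : Jf k g x y r = 2 * Poh k G x y r + r ^ k * (r * (x r * g (x r) - 2 * G (x r))) := by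
      simp only [Jf, Poh]; ring
    have h4 : 0 < r ^ k * (r * (x r * g (x r) - 2 * G (x r))) :=
      mul_pos (pow_pos hr k) (mul_pos hr (by linarith))
    linarith
  · have := smono_of (f := Jf k g x y) hr ((Jf_cont H h).mono fun _ ht => ht.1)
      (fun t ht => Jf_deriv H h hg ht.1) (fun t ht => mul_pos (pow_pos ht.1 k) (by
        have hm := GS.mem H h hg ht.1.le
        have h2 := h1 (x t) ⟨(GS.anti h hg ht.1.le ht.2).le, hm.2⟩
        have h3 := hg.neg t ht.1
        have h4 := mul_pos hm.1 h2.2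
        have h5 := mul_pos ht.1 (mul_pos_of_neg_of_neg h3 h2.1)
        nlinarith))
    simpa [Jf, h.y0] using this

lemma theta_lt (H : Nice g dg G L b c δ m) (h : Sol k g x y) (hg : GS c x y) {r s : ℝ} (hr : 0 < r)
    (hrs : r < s) : -(r * y r / x r) < -(s * y s / x s) := by
  refine smono_of (f := fun t => -(t * y t / x t)) (f' := fun t => Jf k g x y t / (t ^ k * x t ^ 2))
    hrs ?_ ?_ ?_
  · refine ((continuousOn_id.mul (h.cy' hr.le)).div (h.cx' hr.le) fun t ht => ?_).neg
    exact (hg.pos t (hr.le.trans ht.1)).ne'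
  · intro t ht
    have ht0 := hr.trans ht.1
    have hx := hg.pos t ht0.le
    have := ((((hasDerivAt_id t).mul (h.dy t ht0)).div (h.dx t ht0) hx.ne')).neg
    refine this.congr_deriv ?_
    have : 0 < t ^ k := pow_pos ht0 k
    simp only [Jf, id, Pi.mul_apply]
    field_simp
    ring
  · intro t ht
    have ht0 := hr.trans ht.1
    have hx := hg.pos t ht0.le
    have := Jf_pos H h hg ht0
    have : 0 < t ^ k := pow_pos ht0 k
    positivity

end

open Filter Set Topology

/-! ### The linearized equation at a ground state -/

lemma deriv_pos_sides {φ : ℝ → ℝ} {d r : ℝ} (h : HasDerivAt φ d r) (h0 : φ r = 0) (hd : 0 < d) :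
    (∀ᶠ t in 𝓝[<] r, φ t < 0) ∧ ∀ᶠ t in 𝓝[>] r, 0 < φ t := by
  have h1 := hasDerivAt_iff_tendsto_slope.1 h
  have h2 : ∀ᶠ t in 𝓝[≠] r, 0 < slope φ r t := h1.eventually (lt_mem_nhds hd)
  constructor
  · have h3 : ∀ᶠ t in 𝓝[<] r, 0 < slope φ r t :=
      h2.filter_mono (nhdsWithin_mono _ fun t ht => ne_of_lt ht)
    filter_upwards [h3, self_mem_nhdsWithin] with t ht htr
    rw [slope_def_field, h0, sub_zero] at ht
    have h4 : t - r < 0 := sub_neg.2 htr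
    by_contra hc
    push Not at hc
    have := div_nonpos_of_nonneg_of_nonpos hc h4.le
    linarith
  · have h3 : ∀ᶠ t in 𝓝[>] r, 0 < slope φ r t :=
      h2.filter_mono (nhdsWithin_mono _ fun t ht => ne_of_gt ht)
    filter_upwards [h3, self_mem_nhdsWithin] with t ht htr
    rw [slope_def_field, h0, sub_zero] at ht
    have h4 : 0 < t - r := sub_pos.2 htr
    by_contra hc
    push Not at hc
    have := div_nonpos_of_nonpos_of_nonneg hc h4.le
    linarith

section
variable {g dg G : ℝ → ℝ} {L b c δ m : ℝ} {k : ℕ} {x y φ ψ : ℝ → ℝ}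

lemma lin_exists (H : Nice g dg G L b c δ m) (h : Sol k g x y) (hg : GS c x y) :
    ∃ φ ψ, Rad k (fun t => dg (x t) * φ t) φ ψ ∧ φ 0 = 1 := by
  have hx : Continuous (fun t : ℝ => x (|t|)) :=
    h.cx.comp_continuous continuous_abs fun t => abs_nonneg t
  have hdx : Continuous (fun t : ℝ => dg (x (|t|))) :=
    H.dgc.comp_continuous hx fun t => GS.mem H h hg (abs_nonneg t)
  obtain ⟨φ, ψ, h1, h2⟩ := rad_exists k (fun t z => dg (x (|t|)) * z) (L := L) (C := 0)
    (by
      have : Continuous fun p : ℝ × ℝ => dg (x (|p.1|)) * p.2 :=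
        (hdx.comp continuous_fst).mul continuous_snd
      exact this) H.hL le_rfl
    (fun t z w => by
      rw [← mul_sub, abs_mul]
      exact mul_le_mul_of_nonneg_right (H.dg_abs (GS.mem H h hg (abs_nonneg t))) (abs_nonneg _))
    (fun t => by simp) 1
  refine ⟨φ, ψ, ?_, h2⟩
  exact { cx := h1.cx, cy := h1.cy, y0 := h1.y0, dx := h1.dx, dy := fun r hr => by
            have := h1.dy r hr
            simpa only [abs_of_pos hr] using this }

lemma lin_nonpos (H : Nice g dg G L b c δ m) (h : Sol k g x y) (hg : GS c x y)
    (hφ : Rad k (fun t => dg (x t) * φ t) φ ψ) (hφ0 : φ 0 = 1) : ∃ r, 0 ≤ r ∧ φ r ≤ 0 := by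
  by_contra hcon
  push Not at hcon
  set W : ℝ → ℝ := fun r => r ^ k * ((-(k / r) * y r - g (x r)) * φ r - y r * ψ r) with hW
  have hWd : ∀ r, 0 < r → HasDerivAt W (r ^ k * (k / r ^ 2 * (y r * φ r))) r := by
    intro r hr
    have hx := h.dx r hr
    have hy := h.dy r hr
    have hp := hφ.dx r hr
    have hq := hφ.dy r hr
    have hgx := (H.derg (x r) (GS.mem H h hg hr.le)).comp r hx
    have hk : HasDerivAt (fun r : ℝ => (k:ℝ) / r) (-(k / r ^ 2)) r := by
      have := (hasDerivAt_inv hr.ne').const_mul (k:ℝ)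
      refine (this.congr_deriv ?_)
      field_simp
    have := (hasDerivAt_pow_div k hr).mul ((((hk.neg.mul hy).sub hgx).mul hp).sub (hy.mul hq))
    refine this.congr_deriv ?_
    simp
    field_simp
    ring
  -- W is negative somewhere close to zero
  obtain ⟨ε, hε, hWε⟩ : ∃ ε, 0 < ε ∧ W ε < 0 := by
    have hc0 : ContinuousWithinAt (fun r => g (x r)) (Ici 0) 0 :=
      H.gcont.continuousAt.comp_continuousWithinAt (h.cx 0 (by simp))
    have h1 := Rad.lim0 h hc0
    have hsub : 𝓝[>] (0:ℝ) ≤ 𝓝[≥] 0 := nhdsWithin_mono _ Ioi_subset_Ici_self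
    have h2 : Tendsto (fun r => g (x r)) (𝓝[>] 0) (𝓝 (g (x 0))) := hc0.mono_left hsub
    have h3 : Tendsto φ (𝓝[>] 0) (𝓝 1) := by
      have := (hφ.cx 0 (by simp)).mono_left hsub
      rwa [hφ0] at this
    have h4 : Tendsto ψ (𝓝[>] 0) (𝓝 0) := by
      have := (hφ.cy 0 (by simp)).mono_left hsub
      rwa [hφ.y0] at this
    have h5 : Tendsto y (𝓝[>] 0) (𝓝 0) := by
      have := (h.cy 0 (by simp)).mono_left hsub
      rwa [h.y0] at this
    have h6 := ((((h1.const_mul (-(k:ℝ))).sub h2).mul h3).sub (h5.mul h4))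
    have hgp : 0 < g (x 0) := H.g_pos _ ⟨GS.b_lt H h hg, hg.lt_c⟩
    have h7 : (-(k:ℝ) * (-g (x 0) / (k + 1)) - g (x 0)) * 1 - 0 * 0 < 0 := by
      have : (-(k:ℝ) * (-g (x 0) / (k + 1)) - g (x 0)) * 1 - 0 * 0 = - (g (x 0) / (k + 1)) := by
        have : (k:ℝ) + 1 ≠ 0 := by positivity
        field_simp; ring
      rw [this]
      have : 0 < g (x 0) / (k + 1) := by positivity
      linarith
    obtain ⟨ε, h8, h9⟩ := ((h6.eventually (gt_mem_nhds h7)).and self_mem_nhdsWithin).exists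
    refine ⟨ε, h9, mul_neg_of_pos_of_neg (pow_pos h9 k) ?_⟩
    have : -(k:ℝ) * (y ε / ε) = -(k / ε) * y ε := by ring
    rwa [this] at h8
  have hWc : ContinuousOn W (Ioi 0) := fun t ht => (hWd t ht).continuousAt.continuousWithinAt
  have hWle : ∀ r, ε ≤ r → W r ≤ W ε := by
    intro r hr
    refine anti_of (f := W) hr (hWc.mono fun t ht => hε.trans_le ht.1)
      (fun t ht => hWd t (hε.trans ht.1)) (fun t ht => ?_)
    have ht0 := hε.trans ht.1
    have h1 := hg.neg t ht0
    have h2 := hcon t ht0.le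
    have h3 : y t * φ t ≤ 0 := by nlinarith
    have h4 : 0 ≤ k / t ^ 2 := by positivity
    have h5 : 0 ≤ t ^ k := by positivity
    exact mul_nonpos_of_nonneg_of_nonpos h5 (mul_nonpos_of_nonneg_of_nonpos h4 h3)
  -- y/φ is decreasing
  set κ := -(y ε / φ ε) with hκ
  have hκ0 : 0 < κ := by
    have := div_neg_of_neg_of_pos (hg.neg ε hε) (hcon ε hε.le)
    linarith
  have hquot : ∀ r, ε ≤ r → κ * φ r ≤ - y r := by
    intro r hr
    have hr0 := hε.trans_le hr
    have hd : ∀ t, 0 < t → HasDerivAt (fun t => y t / φ t)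
        (((-(k / t) * y t - g (x t)) * φ t - y t * ψ t) / φ t ^ 2) t := fun t ht =>
      (h.dy t ht).div (hφ.dx t ht) (hcon t ht.le).ne'
    have := anti_of (f := fun t => y t / φ t) hr
      (fun t ht => (hd t (hε.trans_le ht.1)).continuousAt.continuousWithinAt)
      (fun t ht => hd t (hε.trans ht.1)) (fun t ht => by
        have ht0 := hε.trans ht.1
        have h1 := hWle t ht.1.le
        have h2 : W t < 0 := h1.trans_lt hWε
        have h3 : ((-(k / t) * y t - g (x t)) * φ t - y t * ψ t) < 0 := by
          by_contra hc
          push Not at hc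
          have := mul_nonneg (pow_nonneg ht0.le k) hc
          linarith
        exact div_nonpos_of_nonpos_of_nonneg h3.le (sq_nonneg _))
    have h1 := hcon r hr0.le
    have h2 : y r / φ r ≤ -κ := by simpa [hκ] using this
    rw [div_le_iff₀ h1] at h2
    linarith
  have hφlim : Tendsto φ atTop (𝓝 0) := by
    have h1 : Tendsto (fun r => κ⁻¹ * (-y r)) atTop (𝓝 0) := by
      have := (hg.ly.neg).const_mul κ⁻¹
      simpa using this
    refine squeeze_zero' ?_ ?_ h1
    · filter_upwards [eventually_ge_atTop 0] with r hr using (hcon r hr).le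
    · filter_upwards [eventually_ge_atTop ε] with r hr
      rw [inv_mul_eq_div, le_div_iff₀ hκ0]
      linarith [hquot r hr]
  have hlim : Tendsto (fun r => r ^ k * ((-(k / r) * y r - g (x r)) * φ r)) atTop (𝓝 0) := by
    have h1 : Tendsto (fun r : ℝ => (k:ℝ) / r) atTop (𝓝 0) := tendsto_const_nhds.div_atTop tendsto_id
    have h2 := ((h1.mul (GS.lim_x H h hg k).2).mul hφlim).neg.sub ((GS.lim_g H h hg k).mul hφlim)
    simp only [mul_zero, neg_zero, sub_zero] at h2
    refine h2.congr fun r => ?_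
    ring
  have hyl := (GS.lim_x H h hg k).2
  have hev : ∀ᶠ r in atTop, ψ r ≤ -1 := by
    have hd : 0 < -W ε / 2 := by linarith
    filter_upwards [hlim.eventually (lt_mem_nhds (show -(-W ε / 2) < 0 by linarith)),
      hyl.eventually (lt_mem_nhds (show -(-W ε / 2) < 0 by linarith)),
      eventually_ge_atTop ε] with r h1 h2 h3
    by_contra hc
    push Not at hc
    have hr0 := hε.trans_le h3
    have h4 := hWle r h3
    have h5 : W r = r ^ k * ((-(k / r) * y r - g (x r)) * φ r) - r ^ k * y r * ψ r := by
      simp only [hW]; ring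
    have h6 : r ^ k * y r < 0 := mul_neg_of_pos_of_neg (pow_pos hr0 k) (hg.neg r hr0)
    nlinarith
  obtain ⟨R, hR⟩ := (hev.and (eventually_gt_atTop 0)).exists_forall_of_atTop
  have hR0 : 0 < R := (hR R le_rfl).2
  have hφR := hcon R hR0.le
  have := anti_of (f := fun t => φ t + t) (f' := fun t => ψ t + 1) (a := R) (b := R + φ R)
    (by linarith) ((hφ.cx' hR0.le).add continuousOn_id)
    (fun t ht => (hφ.dx t (hR0.trans ht.1)).add (hasDerivAt_id t)) (fun t ht => by
      have := (hR t ht.1.le).1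
      linarith)
  have h1 := hcon (R + φ R) (by linarith)
  linarith

/-- The Wronskian-type function. -/
noncomputable def Wf (k : ℕ) (g x y φ ψ : ℝ → ℝ) (l r : ℝ) : ℝ :=
  r ^ k * (((1 + l - k) * y r - r * g (x r)) * φ r - (r * y r + l * x r) * ψ r)

lemma Wf_deriv (H : Nice g dg G L b c δ m) (h : Sol k g x y) (hg : GS c x y)
    (hφ : Rad k (fun t => dg (x t) * φ t) φ ψ) (l : ℝ) {r : ℝ} (hr : 0 < r) :
    HasDerivAt (Wf k g x y φ ψ l)
      (r ^ k * (φ r * (l * (x r * dg (x r) - g (x r)) - 2 * g (x r)))) r := by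
  have hx := h.dx r hr
  have hy := h.dy r hr
  have hp := hφ.dx r hr
  have hq := hφ.dy r hr
  have hgx := (H.derg (x r) (GS.mem H h hg hr.le)).comp r hx
  have hid := hasDerivAt_id r
  have := (hasDerivAt_pow_div k hr).mul
    ((((hy.const_mul (1 + l - k)).sub (hid.mul hgx)).mul hp).sub
      (((hid.mul hy).add (hx.const_mul l)).mul hq))
  refine this.congr_deriv ?_
  simp
  field_simp
  ring

lemma Wf_cont (H : Nice g dg G L b c δ m) (h : Sol k g x y)
    (hφ : Rad k (fun t => dg (x t) * φ t) φ ψ) (l : ℝ) :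
    ContinuousOn (Wf k g x y φ ψ l) (Ici 0) := by
  have h3 := H.gcont.comp_continuousOn h.cx
  simp only [Function.comp_def] at h3
  exact (continuous_pow k).continuousOn.mul ((((continuousOn_const.mul h.cy).sub
    (continuousOn_id.mul h3)).mul hφ.cx).sub
      (((continuousOn_id.mul h.cy).add (continuousOn_const.mul h.cx)).mul hφ.cy))

lemma lin_main (H : Nice g dg G L b c δ m) (h : Sol k g x y) (hg : GS c x y)
    (hφ : Rad k (fun t => dg (x t) * φ t) φ ψ) (hφ0 : φ 0 = 1) :
    ∃ R, 0 < R ∧ (∀ r, R ≤ r → x r < δ) ∧ φ R < 0 ∧ ψ R < 0 := by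
  obtain ⟨r₂, hr₂, hr₂'⟩ := lin_nonpos H h hg hφ hφ0
  obtain ⟨r₀, hr₀, hz, hpos⟩ := first_zero (y := fun t => -φ t) hr₂ (hφ.cx' le_rfl).neg
    (by simp [hφ0]) (by linarith)
  have hz : φ r₀ = 0 := by simpa using hz
  have hpos : ∀ t ∈ Ico 0 r₀, 0 < φ t := fun t ht => by simpa using hpos t ht
  have hr0 : 0 < r₀ := hr₀.1
  -- ψ r₀ < 0
  have hψ : ψ r₀ < 0 := by
    rcases lt_trichotomy (ψ r₀) 0 with h1 | h1 | h1
    · exact h1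
    · have := hφ.backward H.hL hr0 (fun r hr => by
        rw [abs_mul]
        exact mul_le_mul_of_nonneg_right (H.dg_abs (GS.mem H h hg hr.1)) (abs_nonneg _)) hz h1
      rw [hφ0] at this
      exact absurd this one_ne_zero
    · obtain ⟨t, ht, ht'⟩ := ((deriv_pos_sides (hφ.dx r₀ hr0) hz h1).1.and
        (Ioo_mem_nhdsLT hr0)).exists
      have := hpos t ⟨ht'.1.le, ht'.2⟩
      linarith
  have hnegr : ∀ᶠ t in 𝓝[>] r₀, φ t < 0 := by
    have := (deriv_pos_sides (hφ.dx r₀ hr0).neg (by simp [hz]) (by linarith)).2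
    filter_upwards [this] with t ht
    simpa using ht
  set l := -(r₀ * y r₀ / x r₀) with hl
  have hx0 := hg.pos r₀ hr0.le
  have hl0 : 0 < l := by
    have := div_neg_of_neg_of_pos (mul_neg_of_pos_of_neg hr0 (hg.neg r₀ hr0)) hx0
    linarith
  have hv0 : r₀ * y r₀ + l * x r₀ = 0 := by
    rw [hl]; field_simp; ring
  have hv : ∀ t, r₀ < t → t * y t + l * x t < 0 := by
    intro t ht
    have h1 := theta_lt H h hg hr0 ht
    have hxt := hg.pos t (hr0.trans ht).le
    rw [← hl] at h1
    have h2 : t * y t / x t < -l := by linarith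
    rw [div_lt_iff₀ hxt] at h2
    linarith
  have hW0 : Wf k g x y φ ψ l 0 = 0 := by simp [Wf, h.y0, hφ.y0]
  have hWr0 : Wf k g x y φ ψ l r₀ = 0 := by simp [Wf, hv0, hz]
  have hWc := Wf_cont H h hφ l
  -- sign of h
  have hh0 : 0 < l * (x r₀ * dg (x r₀) - g (x r₀)) - 2 * g (x r₀) := by
    by_contra hc
    push Not at hc
    have := santi_of (f := Wf k g x y φ ψ l) hr0 (hWc.mono fun t ht => ht.1)
      (fun t ht => Wf_deriv H h hg hφ l ht.1) (fun t ht => by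
        have h1 := H.crossh l (x r₀) (x t) hl0 hx0 (GS.anti h hg ht.1.le ht.2)
          (GS.mem H h hg ht.1.le).2 hc
        exact mul_neg_of_pos_of_neg (pow_pos ht.1 k)
          (mul_neg_of_pos_of_neg (hpos t ⟨ht.1.le, ht.2⟩) h1))
    rw [hW0, hWr0] at this
    exact lt_irrefl _ this
  have hh : ∀ t, r₀ < t → 0 < l * (x t * dg (x t) - g (x t)) - 2 * g (x t) := by
    intro t ht
    by_contra hc
    push Not at hc
    have := H.crossh l (x t) (x r₀) hl0 (hg.pos t (hr0.trans ht).le) (GS.anti h hg hr0.le ht)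
      (GS.mem H h hg hr0.le).2 hc
    linarith
  -- W decreases as long as φ < 0
  have hWdec : ∀ s t, r₀ ≤ s → s < t → (∀ u ∈ Ioo s t, φ u < 0) →
      Wf k g x y φ ψ l t < Wf k g x y φ ψ l s := by
    intro s t hs hst hneg
    refine santi_of (f := Wf k g x y φ ψ l) hst (hWc.mono fun u hu => hr0.le.trans (hs.trans hu.1))
      (fun u hu => Wf_deriv H h hg hφ l (hr0.trans_le (hs.trans hu.1.le))) (fun u hu => ?_)
    have hu := hneg u hu
    rename_i hu'
    exact mul_neg_of_pos_of_neg (pow_pos (hr0.trans_le (hs.trans hu'.1.le)) k)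
      (mul_neg_of_neg_of_pos hu (hh u (hs.trans_lt hu'.1)))
  have hneg : ∀ t, r₀ < t → φ t < 0 := by
    intro t ht
    by_contra hc
    push Not at hc
    obtain ⟨e, he, hsub⟩ := (mem_nhdsGT_iff_exists_Ioo_subset).1 hnegr
    have he' : r₀ < min e t := lt_min he ht
    obtain ⟨s, hs1, hs2⟩ := exists_between he'
    have hs3 : s < e := hs2.trans_le (min_le_left _ _)
    have hs4 : s < t := hs2.trans_le (min_le_right _ _)
    obtain ⟨r₁, hr₁, hz₁, hn₁⟩ := first_zero (y := φ) hs4.le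
      (hφ.cx' (hr0.trans hs1).le) (hsub ⟨hs1, hs3⟩) hc
    have hall : ∀ u ∈ Ioo r₀ r₁, φ u < 0 := by
      intro u hu
      rcases lt_or_ge u s with h' | h'
      · exact hsub ⟨hu.1, h'.trans hs3⟩
      · exact hn₁ u ⟨h', hu.2⟩
    have hr01 : r₀ < r₁ := hs1.trans hr₁.1
    have hr1 : 0 < r₁ := hr0.trans hr01
    have h1 := hWdec r₀ r₁ le_rfl hr01 hall
    rw [hWr0] at h1
    have h2 : 0 ≤ ψ r₁ := by
      by_contra hc'
      push Not at hc'
      obtain ⟨u, hu, hu'⟩ := ((deriv_pos_sides (hφ.dx r₁ hr1).neg (by simp [hz₁])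
        (by linarith)).1.and (Ioo_mem_nhdsLT hr01)).exists
      have := hall u hu'
      simp at hu
      linarith
    have h3 : Wf k g x y φ ψ l r₁ = r₁ ^ k * (-(r₁ * y r₁ + l * x r₁) * ψ r₁) := by
      simp only [Wf, hz₁]; ring
    have h4 := hv r₁ hr01
    have h5 : 0 ≤ r₁ ^ k * (-(r₁ * y r₁ + l * x r₁) * ψ r₁) :=
      mul_nonneg (pow_nonneg hr1.le k) (mul_nonneg (by linarith) h2)
    linarith
  -- conclusion
  by_contra hcon
  push Not at hcon
  obtain ⟨R₁, hR₁, hsm⟩ := GS.small h hg H.hδ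
  set R := max R₁ (r₀ + 1) with hR
  have hRR : R₁ ≤ R := le_max_left _ _
  have hRr : r₀ < R := lt_of_lt_of_le (by linarith) (le_max_right R₁ (r₀ + 1))
  have hR0 : 0 < R := hr0.trans hRr
  have hψ0 : ∀ r, R ≤ r → 0 ≤ ψ r := fun r hr =>
    hcon r (hR0.trans_le hr) (fun s hs => hsm s (hRR.trans (hr.trans hs)))
      (hneg r (hRr.trans_le hr))
  have hφb : ∀ r, R ≤ r → |φ r| ≤ |φ R| := by
    intro r hr
    have := mono_of (f := φ) hr (hφ.cx' hR0.le) (fun t ht => hφ.dx t (hR0.trans ht.1))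
      (fun t ht => hψ0 t ht.1.le)
    rw [abs_of_neg (hneg r (hRr.trans_le hr)), abs_of_neg (hneg R hRr)]
    linarith
  have hψb : ∀ r, R ≤ r → |r ^ k * ψ r| ≤ R ^ k * ψ R := by
    intro r hr
    have hr0 := hR0.trans_le hr
    have := anti_of (f := fun r => r ^ k * ψ r) hr (hφ.cflux hR0.le)
      (fun t ht => hφ.flux (hR0.trans ht.1)) (fun t ht => by
        have ht0 := hR0.trans ht.1
        have h1 := H.dg_neg (x t) ⟨hg.pos t ht0.le, (hsm t (hRR.trans ht.1.le)).le⟩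
        have h2 := hneg t (hRr.trans ht.1)
        have := mul_pos (pow_pos ht0 k) (mul_pos_of_neg_of_neg h1 h2)
        linarith)
    rw [abs_of_nonneg (mul_nonneg (pow_nonneg hr0.le k) (hψ0 r hr))]
    exact this
  have hlim : Tendsto (Wf k g x y φ ψ l) atTop (𝓝 0) := by
    have h1 : Tendsto (fun r => |(1 + l - k) * (r ^ k * y r) - r ^ (k + 1) * g (x r)| * |φ R|
        + |r ^ 1 * y r + l * x r| * (R ^ k * ψ R)) atTop (𝓝 0) := by
      have a1 := (((GS.lim_x H h hg k).2.const_mul (1 + l - k)).sub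
        (GS.lim_g H h hg (k + 1))).abs.mul_const |φ R|
      have a2 := ((GS.lim_x H h hg 1).2.add (hg.lx.const_mul l)).abs.mul_const (R ^ k * ψ R)
      have := a1.add a2
      simpa only [mul_zero, sub_zero, add_zero, abs_zero, zero_mul] using this
    refine squeeze_zero_norm' ?_ h1
    filter_upwards [eventually_ge_atTop R] with r hr
    have e1 : Wf k g x y φ ψ l r = ((1 + l - k) * (r ^ k * y r) - r ^ (k + 1) * g (x r)) * φ r -
        (r ^ 1 * y r + l * x r) * (r ^ k * ψ r) := by
      simp only [Wf]; ring
    rw [Real.norm_eq_abs, e1]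
    refine (abs_sub _ _).trans ?_
    rw [abs_mul, abs_mul (r ^ 1 * y r + l * x r)]
    exact add_le_add (mul_le_mul_of_nonneg_left (hφb r hr) (abs_nonneg _))
      (mul_le_mul_of_nonneg_left (hψb r hr) (abs_nonneg _))
  have h1 : 0 ≤ Wf k g x y φ ψ l R := by
    refine le_of_tendsto hlim ?_
    filter_upwards [eventually_gt_atTop R] with r hr
    exact (hWdec R r hRr.le hr fun u hu => hneg u (hRr.trans hu.1)).le
  have h2 := hWdec r₀ R le_rfl hRr fun u hu => hneg u hu.1
  linarith

end

open Filter Set Topology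

/-! ### Perturbation of ground states -/

section
variable {g dg G : ℝ → ℝ} {L b c δ m : ℝ} {k : ℕ} {x y φ ψ : ℝ → ℝ} {U V : ℝ → ℝ → ℝ} {α : ℝ}

lemma remainder (H : Nice g dg G L b c δ m) (h : Sol k g x y) (hg : GS c x y) {R : ℝ} (hR : 0 ≤ R)
    {η : ℝ} (hη : 0 < η) : ∃ ρ, 0 < ρ ∧ ∀ r ∈ Icc 0 R, ∀ z, |z - x r| < ρ →
      |g z - g (x r) - dg (x r) * (z - x r)| ≤ η * |z - x r| := by
  have h0 := GS.mem H h hg le_rfl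
  have h1 := GS.mem H h hg hR
  set K := Icc (x R / 2) ((x 0 + c) / 2) with hK
  have hsub : K ⊆ Ioo 0 c := fun t ht => by
    have := ht.1; have := ht.2
    exact ⟨by linarith [h1.1], by linarith [h0.2]⟩
  have huc := isCompact_Icc.uniformContinuousOn_of_continuous (H.dgc.mono hsub)
  obtain ⟨ρ, hρ, hd⟩ := Metric.uniformContinuousOn_iff.1 huc η hη
  refine ⟨min ρ (min (x R / 2) ((c - x 0) / 2)),
    lt_min hρ (lt_min (by linarith [h1.1]) (by linarith [h0.2])), fun r hr z hz => ?_⟩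
  have hz1 := hz.trans_le (min_le_left _ _)
  have hz2 := hz.trans_le ((min_le_right _ _).trans (min_le_left _ _))
  have hz3 := hz.trans_le ((min_le_right _ _).trans (min_le_right _ _))
  rw [abs_lt] at hz2 hz3
  have hxr0 : x r ≤ x 0 := by
    rcases hr.1.eq_or_lt with e | e
    · rw [← e]
    · exact (GS.anti h hg le_rfl e).le
  have hxR : x R ≤ x r := by
    rcases hr.2.eq_or_lt with e | e
    · rw [e]
    · exact (GS.anti h hg hr.1 e).le
  have hxK : x r ∈ K := ⟨by linarith [h1.1], by linarith [h0.2]⟩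
  have hzK : z ∈ K := ⟨by linarith, by linarith⟩
  have hseg : uIcc (x r) z ⊆ K := uIcc_subset_Icc hxK hzK
  have := (convex_uIcc (x r) z).norm_image_sub_le_of_norm_hasDerivWithin_le
    (f := fun t => g t - dg (x r) * t) (f' := fun t => dg t - dg (x r)) (C := η)
    (fun t ht => by
      have h2 := (H.derg t (hsub (hseg ht))).sub ((hasDerivAt_id t).const_mul (dg (x r)))
      refine (h2.congr_deriv (by simp)).hasDerivWithinAt)
    (fun t ht => by
      have h2 : dist t (x r) < ρ := by
        rw [Real.dist_eq]
        refine lt_of_le_of_lt ?_ hz1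
        have := abs_sub_left_of_mem_uIcc ht
        rwa [abs_sub_comm] at this ⊢
      have h3 := hd t (hseg ht) (x r) hxK h2
      rw [Real.dist_eq] at h3
      exact h3.le) left_mem_uIcc right_mem_uIcc
  simp only [Real.norm_eq_abs] at this
  have e : g z - g (x r) - dg (x r) * (z - x r) = g z - dg (x r) * z - (g (x r) - dg (x r) * x r) := by
    ring
  rw [e]; exact this

lemma perturb (H : Nice g dg G L b c δ m) (hU : ∀ α, Sol k g (U α) (V α))
    (hU0 : ∀ α, U α 0 = α) (hg : GS c (U α) (V α))
    (hφ : Rad k (fun t => dg (U α t) * φ t) φ ψ) (hφ0 : φ 0 = 1) {R : ℝ} (hR : 0 ≤ R)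
    {ε : ℝ} (hε : 0 < ε) : ∀ᶠ β in 𝓝 α, |U β R - U α R - (β - α) * φ R| ≤ ε * |β - α| ∧
      |V β R - V α R - (β - α) * ψ R| ≤ ε * |β - α| := by
  set E := Real.exp ((L + 2) * R) with hE
  have hE1 : 1 ≤ E := Real.one_le_exp (mul_nonneg (by linarith [H.hL]) hR)
  have hE0 : 0 < E := by linarith
  obtain ⟨ρ, hρ, hrem⟩ := remainder H (hU α) hg hR (η := ε / (E * E)) (by positivity)
  have h0 : Tendsto (fun β => E * |β - α|) (𝓝 α) (𝓝 0) := by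
    have : Continuous (fun β => E * |β - α|) := by fun_prop
    simpa using this.tendsto α
  filter_upwards [h0.eventually (gt_mem_nhds hρ)] with β hβ
  have hz := ((hU β).sub (hU α)).sub (hφ.smul (β - α))
  have hst := hz.stab (L := L) (η := ε / E * |β - α|) (R := R) H.hL (fun r hr => by
    have h1 := (U_cont H hU hU0 (β := β) (α := α) hr).1
    have h2 := hrem r hr (U β r) (h1.trans_lt hβ)
    have h3 : g (U β r) - g (U α r) - (β - α) * (dg (U α r) * φ r) =
        dg (U α r) * (U β r - U α r - (β - α) * φ r) +
          (g (U β r) - g (U α r) - dg (U α r) * (U β r - U α r)) := by ring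
    rw [h3]
    refine (abs_add_le _ _).trans (add_le_add ?_ (h2.trans ?_))
    · rw [abs_mul]
      exact mul_le_mul_of_nonneg_right (H.dg_abs (GS.mem H (hU α) hg hr.1)) (abs_nonneg _)
    · calc ε / (E * E) * |U β r - U α r| ≤ ε / (E * E) * (E * |β - α|) := by gcongr
        _ = ε / E * |β - α| := by field_simp) ⟨hR, le_rfl⟩
  rw [hU0, hU0, hφ0] at hst
  have h4 : E * ((β - α - (β - α) * 1) ^ 2 + (ε / E * |β - α|) ^ 2) ≤ (ε * |β - α|) ^ 2 := by
    have e1 : E * ((β - α - (β - α) * 1) ^ 2 + (ε / E * |β - α|) ^ 2) = (ε * |β - α|) ^ 2 / E := by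
      field_simp; ring
    rw [e1]
    exact div_le_self (sq_nonneg _) hE1
  have h5 := hst.trans h4
  have hnn : 0 ≤ ε * |β - α| := by positivity
  constructor
  · refine abs_le_of_sq_le_sq ?_ hnn
    nlinarith [sq_nonneg (V β R - V α R - (β - α) * ψ R)]
  · refine abs_le_of_sq_le_sq ?_ hnn
    nlinarith [sq_nonneg (U β R - U α R - (β - α) * φ R)]

lemma Rad.push {γ w z : ℝ → ℝ} (h : Rad k γ w z) {R T : ℝ} (hR : 0 < R) (hRT : R ≤ T)
    (hz : z R < 0) (hγ : ∀ t ∈ Ioo R T, 0 ≤ γ t) : w T ≤ w R := by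
  refine anti_of (f := w) hRT (h.cx' hR.le) (fun t ht => h.dx t (hR.trans ht.1)) (fun t ht => ?_)
  have ht0 := hR.trans ht.1
  have := anti_of (f := fun r => r ^ k * z r) ht.1.le (h.cflux hR.le)
    (fun s hs => h.flux (hR.trans hs.1)) (fun s hs => by
      have := mul_nonneg (pow_nonneg (hR.trans hs.1).le k) (hγ s ⟨hs.1, hs.2.trans ht.2⟩)
      linarith)
  have h1 : R ^ k * z R < 0 := mul_neg_of_pos_of_neg (pow_pos hR k) hz
  by_contra hc
  push Not at hc
  have := mul_pos (pow_pos ht0 k) hc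
  linarith

lemma right_N (H : Nice g dg G L b c δ m) (hU : ∀ α, Sol k g (U α) (V α))
    (hU0 : ∀ α, U α 0 = α) (hg : GS c (U α) (V α)) : ∀ᶠ β in 𝓝[>] α, β ∈ SN U := by
  have hα : 0 < α := by have := hg.pos 0 le_rfl; rwa [hU0] at this
  obtain ⟨φ, ψ, hφ, hφ0⟩ := lin_exists H (hU α) hg
  obtain ⟨R, hR, hsm, h1, h2⟩ := lin_main H (hU α) hg hφ hφ0
  set ε := min (-φ R) (-ψ R) / 2 with hε
  have hm : 0 < min (-φ R) (-ψ R) := lt_min (by linarith) (by linarith)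
  have hε0 : 0 < ε := by linarith
  have hε1 : 2 * ε ≤ -φ R := by have := min_le_left (-φ R) (-ψ R); linarith
  have hε2 : 2 * ε ≤ -ψ R := by have := min_le_right (-φ R) (-ψ R); linarith
  filter_upwards [(perturb H hU hU0 hg hφ hφ0 hR.le hε0).filter_mono nhdsWithin_le_nhds,
    self_mem_nhdsWithin] with β hβ hβα
  have hd : 0 < β - α := sub_pos.2 hβα
  rw [abs_of_pos hd] at hβ
  have hw1 : U β R - U α R < 0 := by
    have := (abs_le.1 hβ.1).2
    nlinarith
  have hw2 : V β R - V α R < 0 := by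
    have := (abs_le.1 hβ.2).2
    nlinarith
  by_contra hN
  have hpos : ∀ r, 0 ≤ r → 0 < U β r := fun r hr => pos_of_not_N H hU hU0 (hα.trans hβα) hN hr
  have hw := (hU β).sub (hU α)
  have hstep : ∀ T, R ≤ T → (∀ t ∈ Ioo R T, U β t - U α t < 0) → U β T - U α T ≤ U β R - U α R := by
    intro T hT hneg
    refine hw.push hR hT hw2 (fun t ht => ?_)
    have := H.g_anti (hpos t (hR.trans ht.1).le).le (by linarith [hneg t ht] : U β t < U α t)
      (hsm t ht.1.le).le
    linarith
  have hneg : ∀ t, R ≤ t → U β t - U α t < 0 := by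
    intro t ht
    by_contra hc
    push Not at hc
    obtain ⟨s, hs, hs0, hs'⟩ := first_zero (y := fun t => U β t - U α t) ht (hw.cx' hR.le) hw1 hc
    have := hstep s hs.1.le fun u hu => hs' u ⟨hu.1.le, hu.2⟩
    linarith
  have hlim := hg.lx.eventually (gt_mem_nhds (show (0:ℝ) < -(U β R - U α R) by linarith))
  obtain ⟨r, hr, hr'⟩ := (hlim.and (eventually_ge_atTop R)).exists
  have h3 := hstep r hr' fun t ht => hneg t ht.1.le
  have h4 := hpos r (hR.le.trans hr')
  linarith

lemma left_not_N (H : Nice g dg G L b c δ m) (hU : ∀ α, Sol k g (U α) (V α))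
    (hU0 : ∀ α, U α 0 = α) (hg : GS c (U α) (V α)) : ∀ᶠ β in 𝓝[<] α, β ∉ SN U := by
  have hα : 0 < α := by have := hg.pos 0 le_rfl; rwa [hU0] at this
  have hαc : α < c := by have := hg.lt_c; rwa [hU0] at this
  obtain ⟨φ, ψ, hφ, hφ0⟩ := lin_exists H (hU α) hg
  obtain ⟨R, hR, hsm, h1, h2⟩ := lin_main H (hU α) hg hφ hφ0
  set ε := min (-φ R) (-ψ R) / 2 with hε
  have hm : 0 < min (-φ R) (-ψ R) := lt_min (by linarith) (by linarith)
  have hε0 : 0 < ε := by linarith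
  have hε1 : 2 * ε ≤ -φ R := by have := min_le_left (-φ R) (-ψ R); linarith
  have hε2 : 2 * ε ≤ -ψ R := by have := min_le_right (-φ R) (-ψ R); linarith
  have hUR := (U_tendsto H hU hU0 hR.le α).1.eventually (gt_mem_nhds (hsm R le_rfl))
  filter_upwards [(perturb H hU hU0 hg hφ hφ0 hR.le hε0).filter_mono nhdsWithin_le_nhds,
    (U_pos_nhds H hU hU0 hR.le (B := 0) (fun s hs => hg.pos s hs.1)).filter_mono nhdsWithin_le_nhds,
    hUR.filter_mono nhdsWithin_le_nhds,
    self_mem_nhdsWithin] with β hβ hposR hβδ hβα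
  have hd : 0 < α - β := sub_pos.2 hβα
  rw [abs_sub_comm β α, abs_of_pos hd] at hβ
  have hw1 : 0 < U β R - U α R := by
    have := (abs_le.1 hβ.1).1
    nlinarith
  have hw2 : 0 < V β R - V α R := by
    have := (abs_le.1 hβ.2).1
    nlinarith
  intro hN
  have hP := N_P_disj H hU hN
  have hβ0 : 0 < β := by have := hposR 0 ⟨le_rfl, hR.le⟩; rwa [hU0] at this
  have hβc : β < c := lt_trans hβα hαc
  obtain ⟨s, hs, hsneg⟩ := hN
  obtain ⟨r₁, hr₁, hz, hp⟩ := first_zero (y := fun t => -U β t) hs ((hU β).cx' le_rfl).neg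
    (by simp [hU0, hβ0]) (by linarith)
  have hz : U β r₁ = 0 := by simpa using hz
  have hp : ∀ t ∈ Ico 0 r₁, 0 < U β t := fun t ht => by simpa using hp t ht
  have hRr : R < r₁ := by
    by_contra hc
    push Not at hc
    have := hposR r₁ ⟨hr₁.1.le, hc⟩
    linarith
  have hV : ∀ t, 0 < t → t < r₁ → V β t < 0 := fun t ht ht1 =>
    V_neg_of_not_P H hU hU0 hβ0 hβc hP ht fun u hu => hp u ⟨hu.1, hu.2.trans_lt ht1⟩
  have hUδ : ∀ t ∈ Ico R r₁, U β t < δ := by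
    intro t ht
    have := anti_of (f := U β) ht.1 ((hU β).cx' hR.le) (fun u hu => (hU β).dx u (hR.trans hu.1))
      (fun u hu => (hV u (hR.trans hu.1) (hu.2.trans ht.2)).le)
    linarith
  have hxr1 := hg.pos r₁ hr₁.1.le
  have hw := ((hU β).sub (hU α)).smul (-1)
  obtain ⟨r₂, hr₂, hz₂, hn₂⟩ := first_zero (y := fun t => -1 * (U β t - U α t)) hRr.le
    (hw.cx' hR.le) (by linarith) (by linarith)
  have := hw.push hR hr₂.1.le (by linarith) (fun t ht => by
    have h3 := hn₂ t ⟨ht.1.le, ht.2⟩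
    have h4 := H.g_anti (hg.pos t (hR.trans ht.1).le).le (by linarith : U α t < U β t)
      (hUδ t ⟨ht.1.le, ht.2.trans_le hr₂.2⟩).le
    linarith)
  linarith

lemma GS_unique_lt (H : Nice g dg G L b c δ m) (hU : ∀ α, Sol k g (U α) (V α))
    (hU0 : ∀ α, U α 0 = α) {α₁ α₂ : ℝ} (h₁ : GS c (U α₁) (V α₁)) (h₂ : GS c (U α₂) (V α₂))
    (hlt : α₁ < α₂) : False := by
  have hα₁ : 0 < α₁ := by have := h₁.pos 0 le_rfl; rwa [hU0] at this
  have hα₂ : α₂ < c := by have := h₂.lt_c; rwa [hU0] at this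
  set T := {α | α ∈ Ioo α₁ α₂ ∧ α ∉ SN U} with hT
  obtain ⟨a, ha, ha'⟩ := ((left_not_N H hU hU0 h₂).and (Ioo_mem_nhdsLT hlt)).exists
  have hne : T.Nonempty := ⟨a, ha', ha⟩
  have hbd : BddBelow T := ⟨α₁, fun t ht => ht.1.1.le⟩
  obtain ⟨e, he, hsub⟩ := (mem_nhdsGT_iff_exists_Ioo_subset).1 (right_N H hU hU0 h₁)
  set γ := sInf T with hγ
  have hγe : e ≤ γ := by
    refine le_csInf hne fun t ht => ?_
    by_contra hc
    push Not at hc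
    exact ht.2 (hsub ⟨ht.1.1, hc⟩)
  have hγ1 : α₁ < γ := lt_of_lt_of_le he hγe
  have hγ2 : γ < α₂ := (csInf_le hbd ⟨ha', ha⟩).trans_lt ha'.2
  have hγN : γ ∉ SN U := by
    intro hN
    obtain ⟨u, hu, hsub⟩ := exists_Ico_subset_of_mem_nhds ((N_open H hU hU0).mem_nhds hN) ⟨_, hγ2⟩
    obtain ⟨t, ht, htu⟩ := exists_lt_of_csInf_lt hne hu
    exact ht.2 (hsub ⟨csInf_le hbd ht, htu⟩)
  -- points to the left are in SN
  have hleft : ∀ t ∈ Ioo α₁ γ, t ∈ SN U := by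
    intro t ht
    by_contra hc
    have := csInf_le hbd (show t ∈ T from ⟨⟨ht.1, ht.2.trans hγ2⟩, hc⟩)
    exact absurd ht.2 (not_lt.2 this)
  have hγP : γ ∉ SP G U V := by
    intro hP
    have h3 : ∀ᶠ t in 𝓝[<] γ, t ∈ SP G U V :=
      mem_nhdsWithin_of_mem_nhds ((P_open H hU hU0).mem_nhds hP)
    obtain ⟨t, ht, ht'⟩ := (h3.and (Ioo_mem_nhdsLT hγ1)).exists
    exact N_P_disj H hU (hleft t ht') ht
  have hGS := GS_of H hU hU0 (hα₁.trans hγ1) (hγ2.trans hα₂) hγN hγP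
  obtain ⟨t, ht, ht'⟩ := ((left_not_N H hU hU0 hGS).and (Ioo_mem_nhdsLT hγ1)).exists
  exact ht (hleft t ht')

lemma GS_unique (H : Nice g dg G L b c δ m) (hU : ∀ α, Sol k g (U α) (V α))
    (hU0 : ∀ α, U α 0 = α) {α₁ α₂ : ℝ} (h₁ : GS c (U α₁) (V α₁)) (h₂ : GS c (U α₂) (V α₂)) :
    α₁ = α₂ := by
  rcases lt_trichotomy α₁ α₂ with h | h | h
  · exact (GS_unique_lt H hU hU0 h₁ h₂ h).elim
  · exact h
  · exact (GS_unique_lt H hU hU0 h₂ h₁ h).elim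

end

open Filter Set Topology

/-! ### From `IsPositiveSolution` to `Rad` and back -/

section
variable {g dg G : ℝ → ℝ} {L b c δ m : ℝ} {k : ℕ} {x y v : ℝ → ℝ} {fx : ℝ → ℝ}
  {U V : ℝ → ℝ → ℝ} {α : ℝ}

lemma rad_of_isPositiveSolution (h : IsPositiveSolution (k + 1) fx v) :
    Rad k (fun r => fx (v r)) v (derivWithin v (Ici 0)) := by
  obtain ⟨h1, h2, h3, h4, h5⟩ := h
  have hu : UniqueDiffOn ℝ (Ici (0:ℝ)) := uniqueDiffOn_Ici 0
  have h1' : ContDiffOn ℝ (1 + 1) v (Ici 0) := by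
    have : (1 + 1 : WithTop ℕ∞) = 2 := one_add_one_eq_two
    rw [this]; exact h1
  have hd := (contDiffOn_succ_iff_derivWithin hu).1 h1'
  refine ⟨h1.continuousOn, hd.2.2.continuousOn, h4, fun r hr => ?_, fun r hr => ?_⟩
  · exact (hd.1 r hr.le).hasDerivWithinAt.hasDerivAt (Ici_mem_nhds hr)
  · have hy := ((hd.2.2.differentiableOn one_ne_zero) r hr.le).hasDerivWithinAt.hasDerivAt
      (Ici_mem_nhds hr)
    refine hy.congr_deriv ?_
    have h6 := h3 r hr
    rw [show (2:ℕ) = 1 + 1 from rfl, iteratedDerivWithin_succ] at h6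
    have h7 : derivWithin (iteratedDerivWithin 1 v (Ici 0)) (Ici 0) r =
        derivWithin (derivWithin v (Ici 0)) (Ici 0) r := by
      refine derivWithin_congr (fun t _ => ?_) ?_ <;> rw [iteratedDerivWithin_one]
    rw [h7] at h6
    push_cast at h6
    have e : ((k:ℝ) + 1 - 1) = k := by ring
    rw [e] at h6
    linarith

lemma le_c_of_rad (h : Rad k (fun r => fx (v r)) v y) (hlim : Tendsto v atTop (𝓝 0))
    (hc : 0 < c) (hneg : ∀ x, c < x → fx x < 0) {r : ℝ} (hr : 0 ≤ r) : v r ≤ c := by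
  by_contra hcon
  push Not at hcon
  obtain ⟨M, hM⟩ := (hlim.eventually (gt_mem_nhds hc)).exists_forall_of_atTop
  set T := max M r with hT
  have hT0 : 0 ≤ T := hr.trans (le_max_right _ _)
  obtain ⟨s, hs, hmax⟩ := isCompact_Icc.exists_isMaxOn (nonempty_Icc.2 hT0) (h.cx' (b := T) le_rfl)
  have hrs : v r ≤ v s := hmax ⟨hr, le_max_right _ _⟩
  have hmax' : ∀ t, 0 ≤ t → v t ≤ v s := by
    intro t ht
    rcases le_or_gt t T with h1 | h1
    · exact hmax ⟨ht, h1⟩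
    · have := hM t ((le_max_left _ _).trans h1.le)
      linarith
  have hsc : c < v s := hcon.trans_le hrs
  have hys : y s = 0 := by
    rcases hs.1.eq_or_lt with e | e
    · rw [← e]; exact h.y0
    · have hloc : IsLocalMax v s := by
        filter_upwards [Ici_mem_nhds e] with t ht using hmax' t ht
      exact hloc.hasDerivAt_eq_zero (h.dx s e)
  have hev : ∀ᶠ t in 𝓝[≥] s, c < v t :=
    ((h.cx s hs.1).mono (Ici_subset_Ici.2 hs.1)).eventually (lt_mem_nhds hsc)
  obtain ⟨e, he, hsub⟩ := (mem_nhdsGE_iff_exists_Ico_subset).1 hev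
  obtain ⟨t, ht1, ht2⟩ := exists_between (show s < e from he)
  have h1 : v s < v t := by
    refine smono_of (f := v) ht1 (h.cx' hs.1) (fun u hu => h.dx u (hs.1.trans_lt hu.1))
      (fun u hu => ?_)
    have hu0 := hs.1.trans_lt hu.1
    have h2 := smono_of (f := fun r => r ^ k * y r) hu.1 (h.cflux hs.1)
      (fun w hw => h.flux (hs.1.trans_lt hw.1)) (fun w hw => by
        have hw0 := hs.1.trans_lt hw.1
        have h3 := hneg (v w) (hsub ⟨hw.1.le, hw.2.trans (hu.2.trans ht2)⟩)
        have := mul_neg_of_pos_of_neg (pow_pos hw0 k) h3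
        linarith)
    rw [hys, mul_zero] at h2
    by_contra hc'
    push Not at hc'
    have := mul_nonpos_of_nonneg_of_nonpos (pow_pos hu0 k).le hc'
    linarith
  have := hmax' t (hs.1.trans ht1.le)
  linarith

lemma GS_of_isPositiveSolution (H : Nice g dg G L b c δ m) (hU : ∀ α, Sol k g (U α) (V α))
    (hU0 : ∀ α, U α 0 = α) (hfg : ∀ x ∈ Icc 0 c, fx x = g x) (hneg : ∀ x, c < x → fx x < 0)
    (h : IsPositiveSolution (k + 1) fx v) :
    GS c (U (v 0)) (V (v 0)) ∧ EqOn v (U (v 0)) (Ici 0) := by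
  have hr := rad_of_isPositiveSolution h
  obtain ⟨-, hpos, -, -, hlim⟩ := h
  have hle : ∀ r, 0 ≤ r → v r ≤ c := fun r hr' => le_c_of_rad hr hlim H.hc hneg hr'
  set y := derivWithin v (Ici 0) with hy
  have hs : Sol k g v y :=
    { cx := hr.cx, cy := hr.cy, y0 := hr.y0, dx := hr.dx, dy := fun r hr' => by
        have := hr.dy r hr'
        rwa [hfg (v r) ⟨(hpos r hr'.le).le, hle r hr'.le⟩] at this }
  have hlt : v 0 < c := by
    refine lt_of_le_of_ne (hle 0 le_rfl) fun e => ?_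
    have hconst : Sol k g (fun _ => c) (fun _ => 0) :=
      { cx := continuousOn_const, cy := continuousOn_const, y0 := rfl,
        dx := fun r _ => hasDerivAt_const r c,
        dy := fun r _ => by simpa [H.g_c] using hasDerivAt_const r (0:ℝ) }
    have h1 : ∀ r, 0 ≤ r → v r = c := fun r hr' => (sol_unique H hs hconst e hr').1
    have h2 : Tendsto v atTop (𝓝 c) := by
      refine tendsto_const_nhds.congr' ?_
      filter_upwards [eventually_ge_atTop 0] with r hr' using (h1 r hr').symm
    have := tendsto_nhds_unique hlim h2
    linarith [H.hc]
  have heq : ∀ r, 0 ≤ r → v r = U (v 0) r ∧ y r = V (v 0) r := fun r hr' =>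
    sol_unique H hs (hU (v 0)) (hU0 _).symm hr'
  refine ⟨GS_of H hU hU0 (hpos 0 le_rfl) hlt ?_ ?_, fun r hr' => (heq r hr').1⟩
  · rintro ⟨r, hr', hn⟩
    rw [← (heq r hr').1] at hn
    have := hpos r hr'
    linarith
  · rintro ⟨r, hr', hE, -⟩
    have h1 : Tendsto (fun r => G (v r)) atTop (𝓝 (G 0)) := (H.Gcont.tendsto 0).comp hlim
    rw [H.G0] at h1
    have h2 : (0:ℝ) ≤ En G (U (v 0)) (V (v 0)) r := by
      refine le_of_tendsto h1 ?_
      filter_upwards [eventually_ge_atTop r] with s hs'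
      have h3 := En_anti H (hU (v 0)) hr' hs'
      have h4 : En G (U (v 0)) (V (v 0)) s = V (v 0) s ^ 2 / 2 + G (v s) := by
        rw [(heq s (hr'.trans hs')).1]; rfl
      have := sq_nonneg (V (v 0) s)
      linarith
    linarith

lemma contDiffOn_succ_of {n : ℕ} {x y : ℝ → ℝ}
    (h : ∀ r ∈ Ici (0:ℝ), HasDerivWithinAt x (y r) (Ici 0) r) (hy : ContDiffOn ℝ n y (Ici 0)) :
    ContDiffOn ℝ (n + 1) x (Ici 0) := by
  have hu : UniqueDiffOn ℝ (Ici (0:ℝ)) := uniqueDiffOn_Ici 0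
  refine (contDiffOn_succ_iff_derivWithin hu).2 ⟨fun r hr => (h r hr).differentiableWithinAt, ?_, ?_⟩
  · intro h'; simp at h'
  · exact hy.congr fun r hr => (h r hr).derivWithin (hu r hr)

lemma hasDerivWithinAt_origin {x z : ℝ → ℝ} {d : ℝ} (hc : ContinuousOn x (Ici 0))
    (hd : ∀ r, 0 < r → HasDerivAt x (z r) r) (hl : Tendsto z (𝓝[>] 0) (𝓝 d)) :
    HasDerivWithinAt x d (Ici 0) 0 := by
  refine hasDerivWithinAt_Ici_of_tendsto_deriv (s := Ioi 0)
    (fun r hr => (hd r hr).differentiableAt.differentiableWithinAt)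
    ((hc 0 (by simp)).mono Ioi_subset_Ici_self) self_mem_nhdsWithin ?_
  refine hl.congr' ?_
  filter_upwards [self_mem_nhdsWithin] with r hr
  exact (hd r hr).deriv.symm

lemma isPositiveSolution_of_GS (H : Nice g dg G L b c δ m) (h : Sol k g x y) (hg : GS c x y)
    (hfg : ∀ x ∈ Icc 0 c, fx x = g x) : IsPositiveSolution (k + 1) fx x := by
  have hu : UniqueDiffOn ℝ (Ici (0:ℝ)) := uniqueDiffOn_Ici 0
  have hsub : 𝓝[>] (0:ℝ) ≤ 𝓝[≥] 0 := nhdsWithin_mono _ Ioi_subset_Ici_self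
  have hx : ∀ r ∈ Ici (0:ℝ), HasDerivWithinAt x (y r) (Ici 0) r := by
    intro r hr
    rcases (show (0:ℝ) ≤ r from hr).eq_or_lt with e | e
    · rw [← e]
      exact hasDerivWithinAt_origin h.cx h.dx ((h.cy 0 (by simp)).mono_left hsub)
    · exact (h.dx r e).hasDerivWithinAt
  set z : ℝ → ℝ := Function.update (fun r => -(k / r) * y r - g (x r)) 0 (-g (x 0) / (k + 1)) with hz
  have hz0 : z 0 = -g (x 0) / (k + 1) := by simp [hz]
  have hzr : ∀ r, 0 < r → z r = -(k / r) * y r - g (x r) := fun r hr => by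
    simp [hz, Function.update_of_ne hr.ne']
  have hgc : ContinuousOn (fun r => g (x r)) (Ici 0) := H.gcont.comp_continuousOn h.cx
  have hzl : Tendsto z (𝓝[>] 0) (𝓝 (z 0)) := by
    have h1 := h.lim0 (hgc 0 (by simp))
    have h2 : Tendsto (fun r => g (x r)) (𝓝[>] 0) (𝓝 (g (x 0))) := (hgc 0 (by simp)).mono_left hsub
    have h3 := (h1.const_mul (-(k:ℝ))).sub h2
    have e : -(k:ℝ) * (-g (x 0) / (k + 1)) - g (x 0) = z 0 := by
      rw [hz0]
      have : (k:ℝ) + 1 ≠ 0 := by positivity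
      field_simp; ring
    rw [e] at h3
    refine h3.congr' ?_
    filter_upwards [self_mem_nhdsWithin] with r hr
    rw [hzr r hr]; ring
  have hy : ∀ r ∈ Ici (0:ℝ), HasDerivWithinAt y (z r) (Ici 0) r := by
    intro r hr
    rcases (show (0:ℝ) ≤ r from hr).eq_or_lt with e | e
    · rw [← e]
      refine hasDerivWithinAt_origin h.cy (fun r hr => ?_) hzl
      rw [hzr r hr]; exact h.dy r hr
    · rw [hzr r e]; exact (h.dy r e).hasDerivWithinAt
  have hzc : ContinuousOn z (Ici 0) := by
    intro r hr
    rcases (show (0:ℝ) ≤ r from hr).eq_or_lt with e | e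
    · rw [← e, ← continuousWithinAt_Ioi_iff_Ici]
      exact hzl
    · have h1 : ContinuousAt (fun r => -(k / r) * y r - g (x r)) r := by
        have hyc := (h.dy r e).continuousAt
        have hxc := (h.dx r e).continuousAt
        have hgx : ContinuousAt (fun r => g (x r)) r := H.gcont.continuousAt.comp hxc
        exact ((continuousAt_const.div continuousAt_id e.ne').neg.mul hyc).sub hgx
      have h2 : z =ᶠ[𝓝 r] (fun r => -(k / r) * y r - g (x r)) := by
        filter_upwards [Ioi_mem_nhds e] with t ht using hzr t ht
      exact (h1.congr h2.symm).continuousWithinAt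
  have hcy : ContDiffOn ℝ ((0:ℕ) + 1) y (Ici 0) :=
    contDiffOn_succ_of hy (by simpa using hzc)
  have hcx : ContDiffOn ℝ ((1:ℕ) + 1) x (Ici 0) :=
    contDiffOn_succ_of hx (by simpa using hcy)
  refine ⟨?_, hg.pos, fun r hr => ?_, ?_, hg.lx⟩
  · have : ((1:ℕ) + 1 : WithTop ℕ∞) = 2 := by norm_cast
    rwa [this] at hcx
  · have e1 : iteratedDerivWithin 2 x (Ici 0) r = z r := by
      rw [show (2:ℕ) = 1 + 1 from rfl, iteratedDerivWithin_succ]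
      have : derivWithin (iteratedDerivWithin 1 x (Ici 0)) (Ici 0) r = derivWithin y (Ici 0) r := by
        refine derivWithin_congr (fun t ht => ?_) ?_
        · rw [iteratedDerivWithin_one]; exact (hx t ht).derivWithin (hu t ht)
        · rw [iteratedDerivWithin_one]; exact (hx r hr.le).derivWithin (hu r hr.le)
      rw [this]
      exact (hy r hr.le).derivWithin (hu r hr.le)
    have hm := GS.mem H h hg hr.le
    rw [e1, hzr r hr, (hx r hr.le).derivWithin (hu r hr.le), hfg (x r) ⟨hm.1.le, hm.2.le⟩]
    push_cast
    ring
  · rw [(hx 0 (by simp)).derivWithin (hu 0 (by simp)), h.y0]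

theorem main_abstract (H : Nice g dg G L b c δ m) (k : ℕ) (hfg : ∀ x ∈ Icc 0 c, fx x = g x)
    (hneg : ∀ x, c < x → fx x < 0) :
    ∃ u : ℝ → ℝ, IsPositiveSolution (k + 1) fx u ∧
      ∀ v : ℝ → ℝ, IsPositiveSolution (k + 1) fx v → EqOn v u (Ici 0) := by
  have hex : ∀ α : ℝ, ∃ x y, Rad k (fun t => g (x t)) x y ∧ x 0 = α := fun α =>
    rad_exists k (fun _ z => g z) (L := L) (C := 0) (H.gcont.comp continuous_snd) H.hL le_rfl
      (fun _ z w => H.lip z w) (fun _ => by simp [H.g0]) α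
  choose U V hU hU0 using hex
  obtain ⟨α, hα, hg⟩ := GS_exists H hU hU0
  refine ⟨U α, isPositiveSolution_of_GS H (hU α) hg hfg, fun v hv => ?_⟩
  obtain ⟨h1, h2⟩ := GS_of_isPositiveSolution H hU hU0 hfg hneg hv
  rwa [GS_unique H hU hU0 h1 hg] at h2

end

open Filter Set Topology

/-! ### The double power nonlinearity -/

lemma rpow_ratio {a d s t : ℝ} (ha : 0 < a) (had : a < d) (hs : 0 < s) (hst : s < t) :
    ∃ ρ σ : ℝ, 1 < ρ ∧ ρ < σ ∧ t ^ a = s ^ a * ρ ∧ t ^ d = s ^ d * σ := by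
  have hr : 1 < t / s := (one_lt_div hs).2 hst
  have hr0 : 0 ≤ t / s := by linarith
  have e : t = s * (t / s) := by field_simp
  refine ⟨(t / s) ^ a, (t / s) ^ d, Real.one_lt_rpow hr ha,
    (Real.rpow_lt_rpow_left_iff hr).2 had, ?_, ?_⟩
  · rw [← Real.mul_rpow hs.le hr0, ← e]
  · rw [← Real.mul_rpow hs.le hr0, ← e]

/-- A function `C - A u^a + B u^d` with `C > 0` which is nonpositive at `s < e` is negative
in between. -/
lemma cross {a d A B C s t e : ℝ} (ha : 0 < a) (had : a < d) (hC : 0 < C) (hs : 0 < s)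
    (hst : s < t) (hte : t < e) (h1 : C - A * s ^ a + B * s ^ d ≤ 0)
    (h2 : C - A * e ^ a + B * e ^ d ≤ 0) : C - A * t ^ a + B * t ^ d < 0 := by
  rcases le_or_gt B 0 with hB | hB
  · obtain ⟨ρ, σ, hρ, hσ, e1, e2⟩ := rpow_ratio ha had hs hst
    rw [e1, e2]
    have h3 : 0 < s ^ d := Real.rpow_pos_of_pos hs d
    have h4 : B * (s ^ d * σ) ≤ B * (s ^ d * ρ) := by
      have : s ^ d * ρ ≤ s ^ d * σ := by gcongr
      nlinarith
    have h5 : ρ * (C - A * s ^ a + B * s ^ d) ≤ 0 :=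
      mul_nonpos_of_nonneg_of_nonpos (by linarith) h1
    nlinarith
  · have ht := hs.trans hst
    have he := ht.trans hte
    have hk : 1 < d / a := (one_lt_div ha).2 had
    have hpow : ∀ u : ℝ, 0 < u → u ^ d = (u ^ a) ^ (d / a) := fun u hu => by
      rw [← Real.rpow_mul hu.le]; congr 1; field_simp
    have l1 : s ^ a < t ^ a := Real.rpow_lt_rpow hs.le hst ha
    have l2 : t ^ a < e ^ a := Real.rpow_lt_rpow ht.le hte ha
    have hse : 0 < e ^ a - s ^ a := by linarith
    rw [hpow s hs] at h1
    rw [hpow e he] at h2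
    rw [hpow t ht]
    set X := s ^ a with hX
    set Y := t ^ a with hY
    set Z := e ^ a with hZ
    have hX0 : 0 < X := Real.rpow_pos_of_pos hs a
    have hne : Z - X ≠ 0 := hse.ne'
    have hsum : (Z - Y) / (Z - X) + (Y - X) / (Z - X) = 1 := by
      rw [← add_div, div_eq_one_iff_eq hne]; ring
    have hXm : X ∈ Ici (0:ℝ) := hX0.le
    have hZm : Z ∈ Ici (0:ℝ) := by show 0 ≤ Z; linarith
    have hq1 : 0 < (Z - Y) / (Z - X) := div_pos (by linarith) hse
    have hq2 : 0 < (Y - X) / (Z - X) := div_pos (by linarith) hse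
    have hXZ : X ≠ Z := (by linarith : X < Z).ne
    have hcv := (strictConvexOn_rpow hk).2 hXm hZm hXZ hq1 hq2 hsum
    simp only [smul_eq_mul] at hcv
    have e1 : (Z - Y) / (Z - X) * X + (Y - X) / (Z - X) * Z = Y := by
      field_simp; ring
    rw [e1] at hcv
    set θ := (Z - Y) / (Z - X) with hθ
    set τ := (Y - X) / (Z - X) with hτ
    have hθ0 : 0 < θ := div_pos (by linarith) hse
    have hτ0 : 0 < τ := div_pos (by linarith) hse
    have hθτ : θ + τ = 1 := hsum
    have h3 := mul_lt_mul_of_pos_left hcv hB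
    have h4 := mul_nonpos_of_nonneg_of_nonpos hθ0.le h1
    have h5 := mul_nonpos_of_nonneg_of_nonpos hτ0.le h2
    have h6 : A * Y = θ * (A * X) + τ * (A * Z) := by linear_combination (-A) * e1
    have h7 : C = θ * C + τ * C := by rw [← add_mul, hθτ, one_mul]
    nlinarith

lemma turn {a d s t : ℝ} (ha : 0 < a) (had : a < d) (hs : 0 < s) (hst : s < t)
    (h : a * s ^ a ≤ d * s ^ d) : a * t ^ a < d * t ^ d := by
  obtain ⟨ρ, σ, hρ, hσ, e1, e2⟩ := rpow_ratio ha had hs hst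
  rw [e1, e2]
  have h3 : 0 < s ^ d := Real.rpow_pos_of_pos hs d
  have h4 : d * s ^ d * ρ < d * s ^ d * σ := mul_lt_mul_of_pos_left hσ (by nlinarith)
  have h5 : a * s ^ a * ρ ≤ d * s ^ d * ρ := mul_le_mul_of_nonneg_right h (by linarith)
  linarith

section
variable {ω p q : ℝ}

/-- The quotient `f(u)/u`. -/
noncomputable def Sq (ω p q u : ℝ) : ℝ := -ω + u ^ (p - 1) - u ^ (q - 1)

lemma rpow_split {u : ℝ} (hu : 0 < u) (s : ℝ) : u ^ s = u ^ (s - 1) * u := by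
  rw [← Real.rpow_add_one hu.ne']; congr 1; ring

lemma f_eq {u : ℝ} (hu : 0 < u) : f ω p q u = u * Sq ω p q u := by
  unfold f Sq
  rw [rpow_split hu p, rpow_split hu q]; ring

lemma F_eq {u : ℝ} (hu : 0 < u) : F ω p q u =
    u ^ 2 * (-ω / 2 + u ^ (p - 1) / (p + 1) - u ^ (q - 1) / (q + 1)) := by
  unfold F
  have e : ∀ s : ℝ, u ^ (s + 1) = u ^ (s - 1) * u ^ 2 := fun s => by
    rw [Real.rpow_add_one hu.ne', rpow_split hu s]; ring
  rw [e p, e q]; ring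

/-- The derivative of `f`. -/
noncomputable def df (ω p q u : ℝ) : ℝ := -ω + p * u ^ (p - 1) - q * u ^ (q - 1)

lemma f_deriv (hp : 1 < p) (hpq : p < q) (u : ℝ) : HasDerivAt (f ω p q) (df ω p q u) u := by
  have h1 := Real.hasDerivAt_rpow_const (x := u) (p := p) (Or.inr hp.le)
  have h2 := Real.hasDerivAt_rpow_const (x := u) (p := q) (Or.inr (hp.trans hpq).le)
  have := (((hasDerivAt_id u).const_mul (-ω)).add h1).sub h2
  exact this.congr_deriv (by simp [df])

lemma F_deriv (hp : 1 < p) (hpq : p < q) (u : ℝ) : HasDerivAt (F ω p q) (f ω p q u) u := by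
  have h1 := (Real.hasDerivAt_rpow_const (x := u) (p := p + 1) (Or.inr (by linarith))).div_const (p + 1)
  have h2 := (Real.hasDerivAt_rpow_const (x := u) (p := q + 1) (Or.inr (by linarith))).div_const (q + 1)
  have := (((((hasDerivAt_id u).pow 2).const_mul (-ω)).div_const 2).add h1).sub h2
  refine this.congr_deriv ?_
  have e1 : p + 1 - 1 = p := by ring
  have e2 : q + 1 - 1 = q := by ring
  have hp1 : p + 1 ≠ 0 := by linarith
  have hq1 : q + 1 ≠ 0 := by linarith
  rw [e1, e2]
  simp [f]
  field_simp

lemma F_zero (hp : 1 < p) (hpq : p < q) : F ω p q 0 = 0 := by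
  unfold F
  rw [Real.zero_rpow (by linarith), Real.zero_rpow (by linarith)]; simp

lemma f_zero (hp : 1 < p) (hpq : p < q) : f ω p q 0 = 0 := by
  unfold f
  rw [Real.zero_rpow (by linarith), Real.zero_rpow (by linarith)]; simp

lemma Sq_deriv {u : ℝ} (hu : 0 < u) : HasDerivAt (Sq ω p q)
    (((p - 1) * u ^ (p - 1) - (q - 1) * u ^ (q - 1)) / u) u := by
  have h1 := Real.hasDerivAt_rpow_const (x := u) (p := p - 1) (Or.inl hu.ne')
  have h2 := Real.hasDerivAt_rpow_const (x := u) (p := q - 1) (Or.inl hu.ne')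
  have := (h1.const_add (-ω)).sub h2
  refine this.congr_deriv ?_
  rw [rpow_split hu (p - 1), rpow_split hu (q - 1)]
  field_simp

lemma Sq_cont (hp : 1 < p) (hpq : p < q) : Continuous (Sq ω p q) := by
  have h1 := Real.continuous_rpow_const (q := p - 1) (by linarith)
  have h2 := Real.continuous_rpow_const (q := q - 1) (by linarith)
  exact (continuous_const.add h1).sub h2

lemma F_cont (hp : 1 < p) (hpq : p < q) : Continuous (F ω p q) :=
  continuous_iff_continuousAt.2 fun u => (F_deriv hp hpq u).continuousAt

/-- All the facts on the zeros of `f`. -/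
lemma zeros (hω : 0 < ω) (hp : 1 < p) (hpq : p < q) (hF : ∃ u : ℝ, 0 < u ∧ 0 < F ω p q u) :
    ∃ b c, 0 < b ∧ b < c ∧ c ≤ 1 ∧ Sq ω p q b = 0 ∧ Sq ω p q c = 0 ∧
      (∀ u ∈ Ioo 0 b, Sq ω p q u < 0) ∧ (∀ u ∈ Ioo b c, 0 < Sq ω p q u) ∧
      (∀ u, c < u → Sq ω p q u < 0) ∧ 0 < F ω p q c ∧
      (p - 1) * c ^ (p - 1) < (q - 1) * c ^ (q - 1) := by
  obtain ⟨u₀, hu₀, hFu⟩ := hF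
  have ha : 0 < p - 1 := by linarith
  have had : p - 1 < q - 1 := by linarith
  have hneg1 : ∀ u, 1 ≤ u → Sq ω p q u < 0 := by
    intro u hu
    have := Real.rpow_le_rpow_of_exponent_le hu had.le
    unfold Sq; linarith
  obtain ⟨z, hz, hSz⟩ : ∃ z, 0 < z ∧ 0 < Sq ω p q z := by
    by_contra hcon
    push Not at hcon
    have := anti_of (f := F ω p q) hu₀.le (F_cont hp hpq).continuousOn
      (fun t _ => F_deriv hp hpq t) (fun t ht => by
        rw [f_eq ht.1]
        exact mul_nonpos_of_nonneg_of_nonpos ht.1.le (hcon t ht.1))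
    rw [F_zero hp hpq] at this
    linarith
  have hz1 : z < 1 := by
    by_contra hcon
    push Not at hcon
    have := hneg1 z hcon
    linarith
  have hSc := Sq_cont (ω := ω) hp hpq
  have hS0 : Sq ω p q 0 = -ω := by
    unfold Sq
    rw [Real.zero_rpow (by linarith), Real.zero_rpow (by linarith)]; simp
  obtain ⟨b, hb, hSb, hbn⟩ := first_zero hz.le hSc.continuousOn (by rw [hS0]; linarith) hSz.le
  obtain ⟨c, hc, hSc0⟩ : ∃ c ∈ Icc z 1, Sq ω p q c = 0 := by
    have := intermediate_value_Icc' hz1.le (f := Sq ω p q) hSc.continuousOn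
    exact this ⟨(hneg1 1 le_rfl).le, hSz.le⟩
  have hbz : b < z := lt_of_le_of_ne hb.2 fun e => by rw [e] at hSb; linarith
  have hzc : z < c := lt_of_le_of_ne hc.1 fun e => by rw [← e] at hSc0; linarith
  have hc0 : 0 < c := hz.trans hzc
  have hPS : ∀ u, ω - 1 * u ^ (p - 1) + 1 * u ^ (q - 1) = -Sq ω p q u := fun u => by
    unfold Sq; ring
  have hmid : ∀ s t e, 0 < s → s < t → t < e → 0 ≤ Sq ω p q s → 0 ≤ Sq ω p q e →
      0 < Sq ω p q t := by
    intro s t e hs hst hte h1 h2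
    have := cross (A := 1) (B := 1) ha had hω hs hst hte (by rw [hPS]; linarith)
      (by rw [hPS]; linarith)
    rw [hPS] at this
    linarith
  have hpos : ∀ u ∈ Ioo b c, 0 < Sq ω p q u := fun u hu =>
    hmid b u c hb.1 hu.1 hu.2 hSb.ge hSc0.ge
  have hout : ∀ u, c < u → Sq ω p q u < 0 := by
    intro u hu
    by_contra hcon
    push Not at hcon
    have := hmid b c u hb.1 (hbz.trans hzc) hu hSb.ge hcon
    linarith
  refine ⟨b, c, hb.1, hbz.trans hzc, hc.2, hSb, hSc0, fun u hu => hbn u ⟨hu.1.le, hu.2⟩, hpos,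
    hout, ?_, ?_⟩
  · rcases le_or_gt c u₀ with h | h
    · have := anti_of (f := F ω p q) h (F_cont hp hpq).continuousOn
        (fun t _ => F_deriv hp hpq t) (fun t ht => by
          rw [f_eq (hc0.trans ht.1)]
          exact mul_nonpos_of_nonneg_of_nonpos (hc0.trans ht.1).le (hout t ht.1).le)
      linarith
    · rcases le_or_gt u₀ b with h' | h'
      · have := anti_of (f := F ω p q) hu₀.le (F_cont hp hpq).continuousOn
          (fun t _ => F_deriv hp hpq t) (fun t ht => by
            rw [f_eq ht.1]
            exact mul_nonpos_of_nonneg_of_nonpos ht.1.le (hbn t ⟨ht.1.le, ht.2.trans_le h'⟩).le)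
        rw [F_zero hp hpq] at this
        linarith
      · have := mono_of (f := F ω p q) h.le (F_cont hp hpq).continuousOn
          (fun t _ => F_deriv hp hpq t) (fun t ht => by
            rw [f_eq (hu₀.trans ht.1)]
            exact mul_nonneg (hu₀.trans ht.1).le (hpos t ⟨h'.trans ht.1, ht.2⟩).le)
        linarith
  · by_contra hcon
    push Not at hcon
    have := mono_of (f := Sq ω p q) hzc.le hSc.continuousOn
      (fun t ht => Sq_deriv (hz.trans ht.1)) (fun t ht => by
        have ht0 := hz.trans ht.1
        refine div_nonneg ?_ ht0.le
        by_contra h'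
        push Not at h'
        have := turn ha had ht0 ht.2 (by linarith)
        linarith)
    linarith

lemma nice_exists (hω : 0 < ω) (hp : 1 < p) (hpq : p < q)
    (hF : ∃ u : ℝ, 0 < u ∧ 0 < F ω p q u) :
    ∃ (g dg G : ℝ → ℝ) (L b c δ m : ℝ), Nice g dg G L b c δ m ∧
      (∀ x ∈ Icc 0 c, f ω p q x = g x) ∧ (∀ x, c < x → f ω p q x < 0) := by
  obtain ⟨b, c, hb, hbc, hc1, hSb, hSc, hSneg, hSpos, hSout, hFc, hturn⟩ := zeros hω hp hpq hF
  have hc0 : 0 < c := hb.trans hbc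
  have ha : 0 < p - 1 := by linarith
  have had : p - 1 < q - 1 := by linarith
  set g : ℝ → ℝ := fun x => f ω p q (projIcc 0 c hc0.le x) with hg
  have hgf : ∀ x ∈ Icc 0 c, g x = f ω p q x := fun x hx => by
    simp only [hg]; rw [projIcc_of_mem hc0.le hx]
  have hg0 : ∀ x, x ≤ 0 → g x = 0 := fun x hx => by
    simp only [hg]; rw [projIcc_of_le_left hc0.le hx]; exact f_zero hp hpq
  have hfd : ∀ u, HasDerivAt (f ω p q) (df ω p q u) u := f_deriv hp hpq
  have hdfb : ∀ u ∈ Icc 0 c, |df ω p q u| ≤ ω + p + q := by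
    intro u hu
    have h1 := Real.rpow_le_one hu.1 (hu.2.trans hc1) (by linarith : (0:ℝ) ≤ p - 1)
    have h2 := Real.rpow_le_one hu.1 (hu.2.trans hc1) (by linarith : (0:ℝ) ≤ q - 1)
    have h3 := Real.rpow_nonneg hu.1 (p - 1)
    have h4 := Real.rpow_nonneg hu.1 (q - 1)
    unfold df
    rw [abs_le]
    constructor <;> nlinarith
  have hlip : ∀ x y, |g x - g y| ≤ (ω + p + q) * |x - y| := by
    intro x y
    have h1 := (convex_Icc (0:ℝ) c).norm_image_sub_le_of_norm_hasDerivWithin_le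
      (fun t _ => (hfd t).hasDerivWithinAt) (fun t ht => by
        rw [Real.norm_eq_abs]; exact hdfb t ht) (projIcc 0 c hc0.le y).2 (projIcc 0 c hc0.le x).2
    rw [Real.norm_eq_abs, Real.norm_eq_abs] at h1
    refine h1.trans (mul_le_mul_of_nonneg_left (abs_projIcc_sub_projIcc hc0.le) (by linarith))
  have hgc : Continuous g := by
    have hfc : Continuous (f ω p q) := continuous_iff_continuousAt.2 fun u => (hfd u).continuousAt
    exact hfc.comp (continuous_subtype_val.comp continuous_projIcc)
  set G : ℝ → ℝ := fun x => ∫ t in (0:ℝ)..x, g t with hG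
  have hGd : ∀ x, HasDerivAt G (g x) x := fun x => (hgc.integral_hasStrictDerivAt 0 x).hasDerivAt
  have hG0 : ∀ x, x ≤ 0 → G x = 0 := by
    intro x hx
    have : EqOn g (fun _ => 0) (uIcc 0 x) := fun t ht => by
      rw [uIcc_of_ge hx] at ht
      exact hg0 t ht.2
    simp only [hG]
    rw [intervalIntegral.integral_congr this]
    simp
  have hGc : Continuous G := continuous_iff_continuousAt.2 fun u => (hGd u).continuousAt
  have hGF : ∀ x ∈ Icc 0 c, G x = F ω p q x := by
    intro x hx
    have hcd : ∀ t ∈ Ioo 0 x, HasDerivAt (fun t => G t - F ω p q t) 0 t := fun t ht => by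
      have := (hGd t).sub (F_deriv (ω := ω) hp hpq t)
      refine this.congr_deriv ?_
      rw [hgf t ⟨ht.1.le, ht.2.le.trans hx.2⟩, sub_self]
    have hcc : ContinuousOn (fun t => G t - F ω p q t) (Icc 0 x) :=
      (hGc.sub (F_cont hp hpq)).continuousOn
    have h1 := mono_of hx.1 hcc hcd (fun _ _ => le_rfl)
    have h2 := anti_of hx.1 hcc hcd (fun _ _ => le_rfl)
    rw [hG0 0 le_rfl, F_zero hp hpq] at h1 h2
    linarith
  -- choice of δ
  obtain ⟨δ, hδ0, hδb, hδ⟩ : ∃ δ, 0 < δ ∧ δ < b ∧ δ ^ (p - 1) < ω / (2 * p) := by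
    have h1 : Tendsto (fun x : ℝ => x ^ (p - 1)) (𝓝[>] 0) (𝓝 0) := by
      have := (Real.continuous_rpow_const (q := p - 1) ha.le).tendsto 0
      rw [Real.zero_rpow ha.ne'] at this
      exact this.mono_left nhdsWithin_le_nhds
    have hpos : (0:ℝ) < ω / (2 * p) := by positivity
    obtain ⟨δ, h2, h3⟩ := ((h1.eventually (gt_mem_nhds hpos)).and (Ioo_mem_nhdsGT hb)).exists
    exact ⟨δ, h3.1, h3.2, h2⟩
  have hsmall : ∀ x ∈ Ioc 0 δ, p * x ^ (p - 1) < ω / 2 := by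
    intro x hx
    have h1 : x ^ (p - 1) ≤ δ ^ (p - 1) := Real.rpow_le_rpow hx.1.le hx.2 ha.le
    have h2 : x ^ (p - 1) < ω / (2 * p) := h1.trans_lt hδ
    rw [lt_div_iff₀ (by linarith)] at h2
    linarith
  have hgS : ∀ x ∈ Ioc 0 c, g x = x * Sq ω p q x := fun x hx => by
    rw [hgf x ⟨hx.1.le, hx.2⟩, f_eq hx.1]
  have hxdg : ∀ x ∈ Ioc 0 c, x * df ω p q x - g x =
      x * ((p - 1) * x ^ (p - 1) - (q - 1) * x ^ (q - 1)) := fun x hx => by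
    rw [hgS x hx]; unfold df Sq; ring
  refine ⟨g, df ω p q, G, ω + p + q, b, c, δ, √(ω / 2), ?_, fun x hx => (hgf x hx).symm,
    fun x hx => by
      rw [f_eq (hc0.trans hx)]
      exact mul_neg_of_pos_of_neg (hc0.trans hx) (hSout x hx)⟩
  exact
  { hL := by linarith
    hb := hb
    hbc := hbc
    lip := hlip
    derG := hGd
    g_nonpos := hg0
    G_nonpos := hG0
    g_b := by rw [hgS b ⟨hb, hbc.le⟩, hSb, mul_zero]
    g_c := by rw [hgS c ⟨hc0, le_rfl⟩, hSc, mul_zero]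
    g_neg := fun x hx => by
      rw [hgS x ⟨hx.1, (hx.2.trans hbc).le⟩]
      exact mul_neg_of_pos_of_neg hx.1 (hSneg x hx)
    g_pos := fun x hx => by
      rw [hgS x ⟨hb.trans hx.1, hx.2.le⟩]
      exact mul_pos (hb.trans hx.1) (hSpos x hx)
    G_c := by rw [hGF c ⟨hc0.le, le_rfl⟩]; exact hFc
    derg := fun x hx => by
      refine (hfd x).congr_of_eventuallyEq ?_
      filter_upwards [Ioo_mem_nhds hx.1 hx.2] with t ht
      exact hgf t ⟨ht.1.le, ht.2.le⟩
    dgc := by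
      have h1 := Real.continuous_rpow_const (q := p - 1) (by linarith)
      have h2 := Real.continuous_rpow_const (q := q - 1) (by linarith)
      have : Continuous (df ω p q) :=
        (continuous_const.add (continuous_const.mul h1)).sub (continuous_const.mul h2)
      exact this.continuousOn
    hδ := hδ0
    hδb := hδb
    hm := Real.sqrt_pos.2 (by linarith)
    dg_neg := fun x hx => by
      have h1 := hsmall x hx
      have h2 := Real.rpow_nonneg hx.1.le (q - 1)
      unfold df
      nlinarith
    G_small := fun x hx => by
      rw [hGF x ⟨hx.1.le, hx.2.trans (hδb.trans hbc).le⟩, F_eq hx.1,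
        Real.sq_sqrt (by linarith)]
      have h1 := hsmall x hx
      have h2 := Real.rpow_nonneg hx.1.le (q - 1)
      have h3 := Real.rpow_nonneg hx.1.le (p - 1)
      have h4 : x ^ (p - 1) / (p + 1) ≤ ω / 4 := by
        rw [div_le_iff₀ (by linarith)]
        nlinarith
      have h5 : 0 ≤ x ^ (q - 1) / (q + 1) := div_nonneg h2 (by linarith)
      nlinarith [sq_nonneg x]
    crossh := fun l s t hl hs hst htc h => by
      have key : ∀ x ∈ Ioc 0 c, l * (x * df ω p q x - g x) - 2 * g x =
          x * (2 * ω - (2 - l * (p - 1)) * x ^ (p - 1) + (2 - l * (q - 1)) * x ^ (q - 1)) := by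
        intro x hx
        rw [hxdg x hx, hgS x hx]; unfold Sq; ring
      have ht := hs.trans hst
      rw [key t ⟨ht, htc.le⟩]
      rw [key s ⟨hs, (hst.trans htc).le⟩] at h
      refine mul_neg_of_pos_of_neg ht (cross ha had (by linarith) hs hst htc ?_ ?_)
      · by_contra hcon
        push Not at hcon
        have := mul_pos hs hcon
        linarith
      · have : 2 * ω - (2 - l * (p - 1)) * c ^ (p - 1) + (2 - l * (q - 1)) * c ^ (q - 1) =
            -2 * Sq ω p q c + l * ((p - 1) * c ^ (p - 1) - (q - 1) * c ^ (q - 1)) := by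
          unfold Sq; ring
        rw [this, hSc]
        nlinarith
    crossQ := fun k s t hs hst htc h => by
      have hp1 : p + 1 ≠ 0 := by linarith
      have hq1 : q + 1 ≠ 0 := by linarith
      have key : ∀ x ∈ Ioc 0 c, ((k:ℝ) + 1) * G x - (k - 1) / 2 * (x * g x) =
          -(x ^ 2 * (ω - ((k + 1) / (p + 1) - (k - 1) / 2) * x ^ (p - 1) +
            ((k + 1) / (q + 1) - (k - 1) / 2) * x ^ (q - 1))) := by
        intro x hx
        rw [hGF x ⟨hx.1.le, hx.2⟩, F_eq hx.1, hgS x hx]; unfold Sq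
        field_simp
        ring
      have ht := hs.trans hst
      have hQ : ∀ x ∈ Ioc 0 c, 0 ≤ ((k:ℝ) + 1) * G x - (k - 1) / 2 * (x * g x) →
          ω - ((k + 1) / (p + 1) - (k - 1) / 2) * x ^ (p - 1) +
            ((k + 1) / (q + 1) - (k - 1) / 2) * x ^ (q - 1) ≤ 0 := by
        intro x hx hh
        rw [key x hx] at hh
        by_contra hcon
        push Not at hcon
        have := mul_pos (pow_pos hx.1 2) hcon
        linarith
      have h1 := cross ha had hω hs hst htc (hQ s ⟨hs, (hst.trans htc).le⟩ h)
        (hQ c ⟨hc0, le_rfl⟩ (by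
          rw [hGF c ⟨hc0.le, le_rfl⟩, hgS c ⟨hc0, le_rfl⟩, hSc]
          have : 0 ≤ ((k:ℝ) + 1) * F ω p q c := by positivity
          linarith))
      rw [key t ⟨ht, htc.le⟩]
      have := mul_neg_of_pos_of_neg (pow_pos ht 2) h1
      linarith
    dich := fun u hu => by
      rcases le_or_gt ((q - 1) * u ^ (q - 1)) ((p - 1) * u ^ (p - 1)) with h | h
      · left
        rw [hGF u ⟨hu.1.le, hu.2.le⟩, F_eq hu.1, hgS u ⟨hu.1, hu.2.le⟩]
        have e : u * (u * Sq ω p q u) - 2 * (u ^ 2 * (-ω / 2 + u ^ (p - 1) / (p + 1) -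
            u ^ (q - 1) / (q + 1))) =
            u ^ 2 * ((p - 1) * u ^ (p - 1) / (p + 1) - (q - 1) * u ^ (q - 1) / (q + 1)) := by
          have hp1 : p + 1 ≠ 0 := by linarith
          have hq1 : q + 1 ≠ 0 := by linarith
          unfold Sq
          field_simp
          ring
        have h2 : (q - 1) * u ^ (q - 1) / (q + 1) < (p - 1) * u ^ (p - 1) / (p + 1) := by
          have h3 : 0 < (q - 1) * u ^ (q - 1) :=
            mul_pos (by linarith) (Real.rpow_pos_of_pos hu.1 _)
          calc (q - 1) * u ^ (q - 1) / (q + 1) < (q - 1) * u ^ (q - 1) / (p + 1) :=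
                div_lt_div_of_pos_left h3 (by linarith) (by linarith)
            _ ≤ (p - 1) * u ^ (p - 1) / (p + 1) := by
                exact div_le_div_of_nonneg_right h (by linarith)
        have := mul_pos (pow_pos hu.1 2) (sub_pos.2 h2)
        linarith
      · right
        intro t ht
        have ht0 : 0 < t := hu.1.trans_le ht.1
        have hall : ∀ s, t ≤ s → (p - 1) * s ^ (p - 1) < (q - 1) * s ^ (q - 1) := by
          intro s hs
          rcases (ht.1.trans hs).eq_or_lt with e | e
          · rw [← e]; exact h
          · exact turn ha had hu.1 e h.le
        constructor
        · rw [hxdg t ⟨ht0, ht.2.le⟩]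
          exact mul_neg_of_pos_of_neg ht0 (by linarith [hall t le_rfl])
        · rw [hgS t ⟨ht0, ht.2.le⟩]
          refine mul_pos ht0 ?_
          have := santi_of (f := Sq ω p q) ht.2 (Sq_cont hp hpq).continuousOn
            (fun s hs => Sq_deriv (ht0.trans hs.1)) (fun s hs =>
              div_neg_of_neg_of_pos (by linarith [hall s hs.1.le]) (ht0.trans hs.1))
          linarith }

end

theorem existence_and_uniqueness (ω p q : ℝ) (hω : 0 < ω) (hp : 1 < p)
    (hpq : p < q) (n : ℕ) (hn : 1 ≤ n)
    (hF : ∃ u : ℝ, 0 < u ∧ 0 < F ω p q u) :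
    ∃ u : ℝ → ℝ, IsPositiveSolution n (f ω p q) u ∧
      ∀ v : ℝ → ℝ, IsPositiveSolution n (f ω p q) v →
        Set.EqOn v u (Set.Ici 0) := by
  obtain ⟨g, dg, G, L, b, c, δ, m, H, h1, h2⟩ := nice_exists hω hp hpq hF
  obtain ⟨k, rfl⟩ : ∃ k, n = k + 1 := ⟨n - 1, by omega⟩
  exact main_abstract H k h1 h2
end
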